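/- arXiv:2306.03720 — 2 statements merged into one kernel-verified Lean document; each statement's English description precedes it below -/
import Mathlib

section
/- Assume d ≥ 3, 2 < p < 2_s^⋆, and fix ε > 0. Let g_ε be (s,γ)-admissible for some s > d/(d+1) and γ > 1. Let H^s_G denote the set of u ∈ H^s(ℝ^d) such that, writing x = (x', x_d) ∈ ℝ^{d−1} × ℝ, u(Ax', x_d) = u(x', x_d) for all A ∈ O(d−1). Then the infimum inf{q_ε(u)/‖u‖_{L^p}² : 0 ≠ u ∈ H^s_G} is attained at some nonzero u ∈ H^s_G. -/
open MeasureTheory Real Filter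
open scoped ENNReal FourierTransform RealInnerProductSpace Topology

noncomputable section

/-- Euclidean space `ℝ^d`. -/
abbrev Rd (d : ℕ) : Type := EuclideanSpace ℝ (Fin d)

/-- `U` is the (distributional, hence `L²`-) Fourier transform of `u`:
it pairs against Schwartz functions the way the Fourier transform of `u` must. -/
def IsFT {d : ℕ} (U u : Rd d → ℂ) : Prop :=
  ∀ φ : SchwartzMap (Rd d) ℂ, ∫ ξ, U ξ * φ ξ = ∫ x, u x * 𝓕 (⇑φ) x

/-- An element of `H^s(ℝ^d)`: an `L²` function `toFun` together with its Fourier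
transform `ft`, satisfying the `H^s` integrability condition. -/
structure HsFn (d : ℕ) (s : ℝ) where
  toFun : Rd d → ℂ
  ft : Rd d → ℂ
  memL2 : MemLp toFun 2 volume
  ft_memL2 : MemLp ft 2 volume
  isFT : IsFT ft toFun
  memHs : Integrable (fun ξ : Rd d => ‖ft ξ‖ ^ 2 * (1 + ‖ξ‖ ^ 2) ^ s) volume

/-- The quadratic form `q_ε(u) = ∫ |û(ξ)|² g(|ξ|) dξ` (for a fixed symbol `g`). -/
def qeps {d : ℕ} {s : ℝ} (g : ℝ → ℝ) (u : HsFn d s) : ℝ :=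
  ∫ ξ : Rd d, ‖u.ft ξ‖ ^ 2 * g ‖ξ‖

/-- The `L^p` norm (as a real number). -/
def LpN {d : ℕ} (p : ℝ) (f : Rd d → ℂ) : ℝ :=
  (eLpNorm f (ENNReal.ofReal p) volume).toReal

/-- The set of values of the Rayleigh quotient `q_ε(u)/‖u‖_p²` over nonzero
`u ∈ H^s` satisfying the symmetry constraint `P`. -/
def RayleighSet (d : ℕ) (s p : ℝ) (g : ℝ → ℝ) (P : (Rd d → ℂ) → Prop) : Set ℝ :=
  {t | ∃ u : HsFn d s, P u.toFun ∧ ¬ u.toFun =ᵐ[volume] (fun _ => (0 : ℂ)) ∧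
      MemLp u.toFun (ENNReal.ofReal p) volume ∧
      t = qeps g u / LpN p u.toFun ^ 2}

/-- The Rayleigh quotient infimum. -/
def Rayleigh (d : ℕ) (s p : ℝ) (g : ℝ → ℝ) (P : (Rd d → ℂ) → Prop) : ℝ :=
  sInf (RayleighSet d s p g P)

/-- The Rayleigh quotient infimum is attained. -/
def Attained (d : ℕ) (s p : ℝ) (g : ℝ → ℝ) (P : (Rd d → ℂ) → Prop) : Prop :=
  ∃ u : HsFn d s, P u.toFun ∧ ¬ u.toFun =ᵐ[volume] (fun _ => (0 : ℂ)) ∧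
      MemLp u.toFun (ENNReal.ofReal p) volume ∧
      qeps g u / LpN p u.toFun ^ 2 = Rayleigh d s p g P

/-- A radial function. -/
def Radial {d : ℕ} (f : Rd d → ℂ) : Prop := ∀ x y : Rd d, ‖x‖ = ‖y‖ → f x = f y

/-- The squared norm of the first block of coordinates (the first `d - k` ones),
under the identification `ℝ^d = ℝ^{d-k} × ℝ^k`. -/
def blockSq (d k : ℕ) (x : Rd d) : ℝ := ∑ i : Fin d, if (i : ℕ) < d - k then x i ^ 2 else 0

/-- A `G_k = O(d-k) × O(k)`-symmetric function: it depends only on the norms of the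
two blocks of coordinates. -/
def GkSymmetric (d k : ℕ) (f : Rd d → ℂ) : Prop :=
  ∀ x y : Rd d, blockSq d k x = blockSq d k y → ‖x‖ = ‖y‖ → f x = f y

/-- An `(s,γ)`-admissible family of symbols, with admissibility constants `c, C`. -/
def IsAdmissible (s γ c C : ℝ) (g : ℝ → ℝ → ℝ) : Prop :=
  (∀ ε ∈ Set.Ioo (0:ℝ) 1, Measurable (g ε)) ∧
  (∀ ε ∈ Set.Ioo (0:ℝ) 1, ∀ r : ℝ, 0 < g ε r) ∧
  (∀ ε ∈ Set.Ioo (0:ℝ) 1, ∀ r : ℝ, 1/2 ≤ |r - 1| →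
      c * (1 + |r| ^ (2*s)) ≤ g ε r ∧ g ε r ≤ C * (1 + |r| ^ (2*s))) ∧
  (∀ ε ∈ Set.Ioo (0:ℝ) 1, ∀ r : ℝ, |r - 1| ≤ 1/2 →
      c * (ε + |r - 1| ^ γ) ≤ g ε r ∧ g ε r ≤ C * (ε + |r - 1| ^ γ))

/-- The `G_k`-symmetric Stein–Tomas exponent `2_⋆^k`. -/
def twoStarK (d k : ℕ) : ℝ :=
  2 * ((d : ℝ) + (min k (d - k) : ℕ)) / ((d : ℝ) - 2 + (min k (d - k) : ℕ))

/-- The interpolation parameter `α_k`. -/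
def alphaK (d k : ℕ) (p : ℝ) : ℝ := (1/2 - 1/p) / (1/2 - 1/twoStarK d k)

/-- The spherical shell `A_{ε,δ}` around the unit sphere (with `I_{ε,δ}` scale `ε^{1/γ}`). -/
def Aset (d : ℕ) (γ ε δ : ℝ) : Set (Rd d) :=
  {ξ | δ * ε ^ (1/γ) ≤ |‖ξ‖ - 1| ∧ |‖ξ‖ - 1| ≤ δ⁻¹ * ε ^ (1/γ)}

/-- A `G = O(d-1) × {1}`-symmetric function (writing `x = (x', x_d) ∈ ℝ^{d-1} × ℝ`):
it depends only on `(|x'|, x_d)`. -/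
def GSymmetric (d : ℕ) (f : Rd d → ℂ) : Prop :=
  ∀ x y : Rd d, blockSq d 1 x = blockSq d 1 y →
    (∀ i : Fin d, (i : ℕ) = d - 1 → x i = y i) → f x = f y

/-!
Normalise a minimising sequence to have energy one. By the Sobolev inequality and the subcritical
range of `p`, its `L^p` mass cannot escape to high frequencies, so a fixed low-pass filter `v_n` of
the sequence keeps a definite amount of sup norm. The symmetry under `O(d - 1)` with `d ≥ 3` makes
the values of `v_n` at a point `(x', x_d)` repeat on a sphere of radius `|x'|`. For large `|x'|`
these values are pairings of `v_n` with many almost orthogonal functions, so by the `L²` bound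
`v_n` can be large only near the `x_d`-axis. Translating in `x_d`, which preserves both energy and
symmetry, makes the weak limit nonzero.

A nonzero weak limit is a minimiser: its energy `m` splits off as for any weak limit in a Hilbert
space, the `p`-th power of the `L^p` norm splits by the Brezis–Lieb lemma along an almost
everywhere convergent subsequence, and `m^(p/2) + (1 - m)^(p/2) ≤ 1` for `p ≥ 2` forces the limit
to be optimal.
-/

section Lebesgue

variable {α E : Type*} [MeasurableSpace α] {μ : Measure α} [NormedAddCommGroup E]

lemma eLpNorm_le_rpow_mul_eLpNorm_rpow {p q : ℝ} (hq : 0 < q) (hqp : q ≤ p) {f : α → E}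
    {B : ℝ≥0∞} (hBtop : B ≠ ⊤) (hB : ∀ᵐ x ∂μ, ‖f x‖ₑ ≤ B) :
    eLpNorm f (ENNReal.ofReal p) μ
      ≤ B ^ (1 - q / p) * eLpNorm f (ENNReal.ofReal q) μ ^ (q / p) := by
  have hp : 0 < p := hq.trans_le hqp
  have hpow : ∫⁻ x, ‖f x‖ₑ ^ p ∂μ ≤ B ^ (p - q) * ∫⁻ x, ‖f x‖ₑ ^ q ∂μ := by
    rw [← lintegral_const_mul' _ _ (ENNReal.rpow_ne_top_of_nonneg (by linarith) hBtop)]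
    refine lintegral_mono_ae ?_
    filter_upwards [hB] with x hx
    calc ‖f x‖ₑ ^ p = ‖f x‖ₑ ^ (p - q) * ‖f x‖ₑ ^ q := by
          rw [← ENNReal.rpow_add_of_nonneg _ _ (by linarith) hq.le, sub_add_cancel]
      _ ≤ B ^ (p - q) * ‖f x‖ₑ ^ q := by gcongr
  rw [eLpNorm_eq_lintegral_rpow_enorm_toReal (by simpa using hp) (by simp),
    eLpNorm_eq_lintegral_rpow_enorm_toReal (by simpa using hq) (by simp),
    ENNReal.toReal_ofReal hp.le, ENNReal.toReal_ofReal hq.le]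
  calc (∫⁻ x, ‖f x‖ₑ ^ p ∂μ) ^ (1 / p)
      ≤ (B ^ (p - q) * ∫⁻ x, ‖f x‖ₑ ^ q ∂μ) ^ (1 / p) := by gcongr
    _ = B ^ (1 - q / p) * ((∫⁻ x, ‖f x‖ₑ ^ q ∂μ) ^ (1 / q)) ^ (q / p) := by
      rw [ENNReal.mul_rpow_of_nonneg _ _ (by positivity), ← ENNReal.rpow_mul, ← ENNReal.rpow_mul]
      congr 2 <;> field_simp

lemma eLpNorm_one_le_of_eq_zero_off {f : α → E} (hf : AEStronglyMeasurable f μ) {S : Set α}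
    (hS : MeasurableSet S) (hfS : ∀ x ∉ S, f x = 0) :
    eLpNorm f 1 μ ≤ eLpNorm f 2 μ * μ S ^ (1 / 2 : ℝ) := by
  have hrestrict (q : ℝ≥0∞) : eLpNorm f q μ = eLpNorm f q (μ.restrict S) := by
    rw [← eLpNorm_indicator_eq_eLpNorm_restrict hS,
      Set.indicator_eq_self.2 (Function.support_subset_iff'.2 hfS)]
  rw [hrestrict 1, hrestrict 2]
  refine (eLpNorm_le_eLpNorm_mul_rpow_measure_univ (p := 1) (q := 2) (by norm_num)
    hf.restrict).trans_eq ?_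
  rw [Measure.restrict_apply_univ, ENNReal.toReal_one, ENNReal.toReal_ofNat]
  norm_num

lemma integrable_of_eq_zero_off {f : α → E} (hf : MemLp f 2 μ) {S : Set α}
    (hS : MeasurableSet S) (hSfin : μ S ≠ ⊤) (hfS : ∀ x ∉ S, f x = 0) : Integrable f μ :=
  memLp_one_iff_integrable.1 ⟨hf.1, (eLpNorm_one_le_of_eq_zero_off hf.1 hS hfS).trans_lt
    (ENNReal.mul_lt_top hf.2 (ENNReal.rpow_lt_top_of_nonneg (by norm_num) hSfin))⟩

lemma eLpNorm_le_add_tsum_eLpNorm_sub {p : ℝ≥0∞} (hp : 1 ≤ p) {w : ℕ → α → E}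
    (hw : ∀ n, AEStronglyMeasurable (w n) μ) (n : ℕ) :
    eLpNorm (w n) p μ ≤ eLpNorm (w 0) p μ + ∑' j, eLpNorm (w (j + 1) - w j) p μ := by
  have htelescope : w n = w 0 + ∑ j ∈ Finset.range n, (w (j + 1) - w j) := by
    rw [Finset.sum_range_sub, add_sub_cancel]
  have hdiff (j : ℕ) : AEStronglyMeasurable (w (j + 1) - w j) μ := (hw _).sub (hw _)
  calc eLpNorm (w n) p μ
      ≤ eLpNorm (w 0) p μ + eLpNorm (∑ j ∈ Finset.range n, (w (j + 1) - w j)) p μ := by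
        conv_lhs => rw [htelescope]
        exact eLpNorm_add_le (hw 0) (Finset.aestronglyMeasurable_sum _ fun j _ => hdiff j) hp
    _ ≤ eLpNorm (w 0) p μ + ∑' j, eLpNorm (w (j + 1) - w j) p μ := by
        gcongr
        exact (eLpNorm_sum_le (fun j _ => hdiff j) hp).trans (ENNReal.sum_le_tsum _)

lemma eLpNorm_le_of_tendsto_eLpNorm_sub {p q : ℝ≥0∞} (hq : q ≠ 0) {w : ℕ → α → E} {f : α → E}
    (hw : ∀ n, AEStronglyMeasurable (w n) μ) (hf : AEStronglyMeasurable f μ)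
    (hlim : Tendsto (fun n => eLpNorm (w n - f) q μ) atTop (𝓝 0)) {B : ℝ≥0∞}
    (hB : ∀ n, eLpNorm (w n) p μ ≤ B) : eLpNorm f p μ ≤ B := by
  obtain ⟨ns, -, hns⟩ := (tendstoInMeasure_of_tendsto_eLpNorm hq hw hf hlim).exists_seq_tendsto_ae
  calc eLpNorm f p μ ≤ liminf (fun n => eLpNorm (w (ns n)) p μ) atTop :=
        Lp.eLpNorm_lim_le_liminf_eLpNorm (fun n => hw (ns n)) f hns
    _ ≤ liminf (fun _ => B) atTop := liminf_le_liminf (Eventually.of_forall fun n => hB (ns n))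
    _ = B := liminf_const B

lemma integrable_norm_rpow {p : ℝ} (hp : 0 < p) {f : α → E} (hf : MemLp f (ENNReal.ofReal p) μ) :
    Integrable (fun x => ‖f x‖ ^ p) μ := by
  simpa [hp.le] using hf.integrable_norm_rpow (by simpa using hp) (by simp)

lemma toReal_eLpNorm_rpow {p : ℝ} (hp : 0 < p) {f : α → E} (hf : MemLp f (ENNReal.ofReal p) μ) :
    (eLpNorm f (ENNReal.ofReal p) μ).toReal ^ p = ∫ x, ‖f x‖ ^ p ∂μ := by
  rw [hf.eLpNorm_eq_integral_rpow_norm (by simpa using hp) (by simp),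
    ENNReal.toReal_ofReal (by positivity), ENNReal.toReal_ofReal hp.le,
    Real.rpow_inv_rpow (by positivity) hp.ne']

lemma toReal_eLpNorm_two_sq {f : α → E} (hf : MemLp f 2 μ) :
    (eLpNorm f 2 μ).toReal ^ 2 = ∫ x, ‖f x‖ ^ 2 ∂μ := by
  simpa using toReal_eLpNorm_rpow two_pos (by simpa using hf : MemLp f (ENNReal.ofReal 2) μ)

lemma exists_isFiniteMeasure_le_absolutelyContinuous (μ : Measure α) [SigmaFinite μ] :
    ∃ ν : Measure α, IsFiniteMeasure ν ∧ ν ≤ μ ∧ μ ≪ ν := by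
  obtain ⟨k, hk_pos, hk_meas, hk_int⟩ :=
    exists_pos_lintegral_lt_of_sigmaFinite μ (ε := 1) one_ne_zero
  have hmeas : Measurable fun x => min (k x : ℝ≥0∞) 1 :=
    hk_meas.coe_nnreal_ennreal.min measurable_const
  refine ⟨μ.withDensity fun x => min (k x) 1, ?_, ?_, ?_⟩
  · exact isFiniteMeasure_withDensity
      ((lintegral_mono fun x => min_le_left _ _).trans_lt (hk_int.trans ENNReal.one_lt_top)).ne
  · calc μ.withDensity (fun x => min (k x) 1) ≤ μ.withDensity 1 :=
          withDensity_mono (Eventually.of_forall fun x => min_le_right _ _)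
      _ = μ := withDensity_one
  · refine withDensity_absolutelyContinuous' hmeas.aemeasurable (Eventually.of_forall fun x => ?_)
    exact (lt_min (by exact_mod_cast hk_pos x) one_pos).ne'

lemma measure_le_enorm_le_mul_eLpNorm_sub_add {p : ℝ≥0∞} (hp₀ : p ≠ 0) (hp : p ≠ ⊤)
    {f h : α → E} (hf : AEStronglyMeasurable f μ) (hh : AEStronglyMeasurable h μ)
    {ε : ℝ≥0∞} (hε : ε ≠ 0) :
    μ {x | ε ≤ ‖f x‖ₑ} ≤ (ε / 2)⁻¹ ^ p.toReal * eLpNorm (f - h) p μ ^ p.toReal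
      + μ {x | ε / 2 ≤ ‖h x‖ₑ} := by
  have hsubset : {x | ε ≤ ‖f x‖ₑ} ⊆ {x | ε / 2 ≤ ‖(f - h) x‖ₑ} ∪ {x | ε / 2 ≤ ‖h x‖ₑ} := by
    intro x hx
    by_contra hnot
    simp only [Set.mem_union, Set.mem_ofPred_eq, not_or, not_le, Pi.sub_apply] at hnot hx
    have hlt : ‖f x‖ₑ < ε / 2 + ε / 2 := calc
      ‖f x‖ₑ = ‖(f x - h x) + h x‖ₑ := by rw [sub_add_cancel]
      _ ≤ ‖f x - h x‖ₑ + ‖h x‖ₑ := enorm_add_le _ _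
      _ < ε / 2 + ε / 2 := ENNReal.add_lt_add hnot.1 hnot.2
    exact (hx.trans_lt (by simpa using hlt)).false
  refine (measure_mono hsubset).trans ((measure_union_le _ _).trans ?_)
  gcongr
  exact meas_ge_le_mul_pow_eLpNorm_enorm μ hp₀ hp (hf.sub hh)
    (ENNReal.half_pos hε).ne' (by simp)

lemma tendstoInMeasure_zero_of_approx [IsFiniteMeasure μ] {p : ℝ≥0∞} (hp₀ : p ≠ 0) (hp : p ≠ ⊤)
    {f : ℕ → α → E} (hf : ∀ n, AEStronglyMeasurable (f n) μ)
    (happrox : ∀ δ : ℝ≥0∞, 0 < δ → ∃ h : ℕ → α → E, (∀ n, AEStronglyMeasurable (h n) μ) ∧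
      (∀ᵐ x ∂μ, Tendsto (fun n => h n x) atTop (𝓝 0)) ∧ ∀ n, eLpNorm (f n - h n) p μ ≤ δ) :
    TendstoInMeasure μ f atTop 0 := by
  intro ε hε
  simp only [Pi.zero_apply, edist_zero_right]
  rw [ENNReal.tendsto_nhds_zero]
  intro η hη
  have hscale : Tendsto (fun δ : ℝ≥0∞ => (ε / 2)⁻¹ ^ p.toReal * δ ^ p.toReal) (𝓝 0) (𝓝 0) := by
    have hcont : Tendsto (fun δ : ℝ≥0∞ => δ ^ p.toReal) (𝓝 0) (𝓝 0) :=
      (ENNReal.continuous_rpow_const.tendsto' 0 0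
        (ENNReal.zero_rpow_of_pos (ENNReal.toReal_pos hp₀ hp)))
    simpa using ENNReal.Tendsto.const_mul hcont (Or.inr (ENNReal.rpow_ne_top_of_nonneg
      ENNReal.toReal_nonneg (ENNReal.inv_ne_top.2 (ENNReal.half_pos hε.ne').ne')))
  obtain ⟨δ, hδη, hδ⟩ := (((hscale.mono_left nhdsWithin_le_nhds).eventually_lt_const
    (ENNReal.half_pos hη.ne')).and (self_mem_nhdsWithin (s := Set.Ioi 0))).exists
  obtain ⟨h, hh, hh_lim, hfh⟩ := happrox δ hδ
  have hh_meas := tendstoInMeasure_of_tendsto_ae hh hh_lim (ε / 2) (ENNReal.half_pos hε.ne')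
  simp only [edist_zero_right] at hh_meas
  filter_upwards [hh_meas.eventually_lt_const (ENNReal.half_pos hη.ne')] with n hn
  calc μ {x | ε ≤ ‖f n x‖ₑ}
      ≤ (ε / 2)⁻¹ ^ p.toReal * eLpNorm (f n - h n) p μ ^ p.toReal + μ {x | ε / 2 ≤ ‖h n x‖ₑ} :=
        measure_le_enorm_le_mul_eLpNorm_sub_add hp₀ hp (hf n) (hh n) hε.ne'
    _ ≤ (ε / 2)⁻¹ ^ p.toReal * δ ^ p.toReal + η / 2 := by gcongr; exact hfh n
    _ ≤ η / 2 + η / 2 := by gcongr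
    _ = η := ENNReal.add_halves η

lemma exists_subseq_tendsto_ae_of_approx [SigmaFinite μ] {p : ℝ≥0∞} (hp₀ : p ≠ 0) (hp : p ≠ ⊤)
    {f : ℕ → α → E} (hf : ∀ n, AEStronglyMeasurable (f n) μ)
    (happrox : ∀ δ : ℝ≥0∞, 0 < δ → ∃ h : ℕ → α → E, (∀ n, AEStronglyMeasurable (h n) μ) ∧
      (∀ᵐ x ∂μ, Tendsto (fun n => h n x) atTop (𝓝 0)) ∧ ∀ n, eLpNorm (f n - h n) p μ ≤ δ) :
    ∃ φ : ℕ → ℕ, StrictMono φ ∧ ∀ᵐ x ∂μ, Tendsto (fun n => f (φ n) x) atTop (𝓝 0) := by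
  obtain ⟨ν, hν, hνμ, hμν⟩ := exists_isFiniteMeasure_le_absolutelyContinuous μ
  have hac : ν ≪ μ := Measure.absolutelyContinuous_of_le hνμ
  have hmeas : TendstoInMeasure ν f atTop 0 := by
    refine tendstoInMeasure_zero_of_approx hp₀ hp (fun n => (hf n).mono_ac hac) fun δ hδ => ?_
    obtain ⟨h, hh, hh_lim, hfh⟩ := happrox δ hδ
    exact ⟨h, fun n => (hh n).mono_ac hac, hac.ae_le hh_lim,
      fun n => (eLpNorm_mono_measure _ hνμ).trans (hfh n)⟩
  obtain ⟨φ, hφ, hφ_lim⟩ := hmeas.exists_seq_tendsto_ae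
  exact ⟨φ, hφ, hμν.ae_le hφ_lim⟩

lemma integral_le_of_tendsto_ae {f : ℕ → α → ℝ} {F : α → ℝ} (hf : ∀ n, Integrable (f n) μ)
    (hf₀ : ∀ n x, 0 ≤ f n x) (hF : Integrable F μ)
    (hlim : ∀ᵐ x ∂μ, Tendsto (fun n => f n x) atTop (𝓝 (F x))) {I : ℕ → ℝ} {L : ℝ}
    (hI : ∀ n, ∫ x, f n x ∂μ ≤ I n) (hL : Tendsto I atTop (𝓝 L)) : ∫ x, F x ∂μ ≤ L := by
  have hF₀ : 0 ≤ᵐ[μ] F := by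
    filter_upwards [hlim] with x hx using ge_of_tendsto' hx fun n => hf₀ n x
  have hL₀ : 0 ≤ L := ge_of_tendsto' hL fun n => (integral_nonneg (hf₀ n)).trans (hI n)
  rw [← ENNReal.ofReal_le_ofReal_iff hL₀, ofReal_integral_eq_lintegral_ofReal hF hF₀]
  calc ∫⁻ x, ENNReal.ofReal (F x) ∂μ
      = ∫⁻ x, liminf (fun n => ENNReal.ofReal (f n x)) atTop ∂μ := by
        refine lintegral_congr_ae ?_
        filter_upwards [hlim] with x hx using (ENNReal.tendsto_ofReal hx).liminf_eq.symm
    _ ≤ liminf (fun n => ∫⁻ x, ENNReal.ofReal (f n x) ∂μ) atTop :=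
        lintegral_liminf_le' fun n => (hf n).1.aemeasurable.ennreal_ofReal
    _ ≤ liminf (fun n => ENNReal.ofReal (I n)) atTop := by
        refine liminf_le_liminf (Eventually.of_forall fun n => ?_)
        rw [← ofReal_integral_eq_lintegral_ofReal (hf n) (Eventually.of_forall (hf₀ n))]
        exact ENNReal.ofReal_le_ofReal (hI n)
    _ = ENNReal.ofReal L := (ENNReal.tendsto_ofReal hL).liminf_eq

end Lebesgue

section BrezisLieb

lemma rpow_le_convex_combination_of_le_add {p t a b k : ℝ} (hp : 1 ≤ p) (ht : 0 < t) (ht1 : t < 1)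
    (ha : 0 ≤ a) (hb : 0 ≤ b) (hk : 0 ≤ k) (h : k ≤ a + b) :
    k ^ p ≤ (1 - t) ^ (1 - p) * a ^ p + t ^ (1 - p) * b ^ p := by
  have ht' : 0 < 1 - t := by linarith
  have hconvex := (convexOn_rpow hp).2 (x := a / (1 - t)) (y := b / t)
    (Set.mem_Ici.2 (by positivity)) (Set.mem_Ici.2 (by positivity)) ht'.le ht.le (by ring)
  simp only [smul_eq_mul] at hconvex
  calc k ^ p ≤ (a + b) ^ p := by gcongr
    _ = ((1 - t) * (a / (1 - t)) + t * (b / t)) ^ p := by field_simp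
    _ ≤ (1 - t) * (a / (1 - t)) ^ p + t * (b / t) ^ p := hconvex
    _ = (1 - t) ^ (1 - p) * a ^ p + t ^ (1 - p) * b ^ p := by
      rw [Real.div_rpow ha ht'.le, Real.div_rpow hb ht.le, Real.rpow_sub ht', Real.rpow_sub ht,
        Real.rpow_one, Real.rpow_one]
      ring

variable {α E : Type*} [MeasurableSpace α] {μ : Measure α} [NormedAddCommGroup E]
  {p : ℝ} {u : ℕ → α → E} {w : α → E} {X Y : ℝ} {I : ℕ → ℝ}

-- Fatou's lemma for the nonnegative functions
-- `(1 - t)^(1-p) ‖u n - w‖^p + t^(1-p) ‖w‖^p - ‖u n‖^p`, which tend to `(t^(1-p) - 1) ‖w‖^p`.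
lemma limit_integral_norm_rpow_le_of_mem_Ioo (hp : 1 ≤ p)
    (hu : ∀ n, MemLp (u n) (ENNReal.ofReal p) μ) (hw : MemLp w (ENNReal.ofReal p) μ)
    (hae : ∀ᵐ x ∂μ, Tendsto (fun n => u n x) atTop (𝓝 (w x)))
    (hX : Tendsto (fun n => ∫ x, ‖u n x‖ ^ p ∂μ) atTop (𝓝 X))
    (hI : ∀ n, ∫ x, ‖(u n - w) x‖ ^ p ∂μ ≤ I n) (hY : Tendsto I atTop (𝓝 Y))
    {t : ℝ} (ht : t ∈ Set.Ioo (0 : ℝ) 1) :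
    X ≤ (1 - t) ^ (1 - p) * Y + ∫ x, ‖w x‖ ^ p ∂μ := by
  obtain ⟨ht0, ht1⟩ := ht
  have hp0 : 0 < p := by linarith
  set a := (1 - t) ^ (1 - p)
  set b := t ^ (1 - p)
  set Z := ∫ x, ‖w x‖ ^ p ∂μ
  have : 0 ≤ a := Real.rpow_nonneg (by linarith) _
  set f : ℕ → α → ℝ := fun n x => a * ‖(u n - w) x‖ ^ p + b * ‖w x‖ ^ p - ‖u n x‖ ^ p
  have hint₁ n : Integrable (fun x => a * ‖(u n - w) x‖ ^ p) μ :=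
    (integrable_norm_rpow hp0 ((hu n).sub hw)).const_mul a
  have hint₂ : Integrable (fun x => b * ‖w x‖ ^ p) μ := (integrable_norm_rpow hp0 hw).const_mul b
  have hint₁₂ n : Integrable (fun x => a * ‖(u n - w) x‖ ^ p + b * ‖w x‖ ^ p) μ :=
    (hint₁ n).add hint₂
  have hint₃ n : Integrable (fun x => ‖u n x‖ ^ p) μ := integrable_norm_rpow hp0 (hu n)
  have hf_nonneg n x : 0 ≤ f n x := sub_nonneg.2 <|
    rpow_le_convex_combination_of_le_add hp ht0 ht1 (norm_nonneg _) (norm_nonneg _) (norm_nonneg _)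
      (by simpa using norm_add_le ((u n - w) x) (w x))
  have hf_lim : ∀ᵐ x ∂μ, Tendsto (fun n => f n x) atTop (𝓝 ((b - 1) * ‖w x‖ ^ p)) := by
    filter_upwards [hae] with x hx
    have hdiff : Tendsto (fun n => ‖(u n - w) x‖ ^ p) atTop (𝓝 0) := by
      simpa [Real.zero_rpow hp0.ne'] using
        (hx.sub_const (w x)).norm.rpow_const (p := p) (Or.inr hp0.le)
    convert ((hdiff.const_mul a).add_const (b * ‖w x‖ ^ p)).sub
      (hx.norm.rpow_const (Or.inr hp0.le)) using 2
    ring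
  have hf_int n : ∫ x, f n x ∂μ ≤ a * I n + b * Z - ∫ x, ‖u n x‖ ^ p ∂μ := by
    rw [integral_sub (hint₁₂ n) (hint₃ n), integral_add (hint₁ n) hint₂, integral_const_mul,
      integral_const_mul]
    gcongr
    exact hI n
  have hFatou := integral_le_of_tendsto_ae (fun n => (hint₁₂ n).sub (hint₃ n)) hf_nonneg
    ((integrable_norm_rpow hp0 hw).const_mul (b - 1)) hf_lim hf_int
    (((hY.const_mul a).add_const (b * Z)).sub hX)
  rw [integral_const_mul] at hFatou
  linarith

lemma limit_integral_norm_rpow_le (hp : 1 ≤ p)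
    (hu : ∀ n, MemLp (u n) (ENNReal.ofReal p) μ) (hw : MemLp w (ENNReal.ofReal p) μ)
    (hae : ∀ᵐ x ∂μ, Tendsto (fun n => u n x) atTop (𝓝 (w x)))
    (hX : Tendsto (fun n => ∫ x, ‖u n x‖ ^ p ∂μ) atTop (𝓝 X))
    (hI : ∀ n, ∫ x, ‖(u n - w) x‖ ^ p ∂μ ≤ I n) (hY : Tendsto I atTop (𝓝 Y)) :
    X ≤ Y + ∫ x, ‖w x‖ ^ p ∂μ := by
  have hcont : ContinuousAt (fun t : ℝ => (1 - t) ^ (1 - p) * Y + ∫ x, ‖w x‖ ^ p ∂μ) 0 :=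
    ((ContinuousAt.rpow_const (by fun_prop) (Or.inl (by norm_num))).mul_const _).add_const _
  have hlim := hcont.tendsto.mono_left (nhdsWithin_le_nhds (s := Set.Ioi 0))
  simp only [sub_zero, Real.one_rpow, one_mul] at hlim
  refine ge_of_tendsto hlim ?_
  filter_upwards [Ioo_mem_nhdsGT one_pos] with t ht
  exact limit_integral_norm_rpow_le_of_mem_Ioo hp hu hw hae hX hI hY ht

-- With total mass `A^p`, no mass can split off: `√m^p + √(1-m)^p ≤ m + (1-m) = 1` as `p ≥ 2`.
lemma mul_sqrt_le_of_rpow_le_add {A m L : ℝ} (hp : 2 ≤ p) (hA : 0 ≤ A) (hm : m ∈ Set.Icc (0 : ℝ) 1)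
    (hL : 0 ≤ L) (h : A ^ p ≤ (A * √(1 - m)) ^ p + L ^ p) : A * √m ≤ L := by
  obtain ⟨hm0, hm1⟩ := hm
  have sqrt_rpow_le {x : ℝ} (hx : 0 ≤ x) (hx1 : x ≤ 1) : √x ^ p ≤ x := calc
    √x ^ p = x ^ (1 / 2 * p) := by rw [Real.sqrt_eq_rpow, ← Real.rpow_mul hx]
    _ ≤ x ^ (1 : ℝ) := Real.rpow_le_rpow_of_exponent_ge' hx hx1 (by norm_num) (by linarith)
    _ = x := Real.rpow_one x
  have hAp : 0 ≤ A ^ p := Real.rpow_nonneg hA p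
  rw [← Real.rpow_le_rpow_iff (by positivity) hL (by linarith : 0 < p)]
  rw [Real.mul_rpow hA (Real.sqrt_nonneg _)] at h ⊢
  have h₁ := mul_le_mul_of_nonneg_left (sqrt_rpow_le hm0 hm1) hAp
  have h₂ := mul_le_mul_of_nonneg_left
    (sqrt_rpow_le (sub_nonneg.2 hm1) (sub_le_self 1 hm0)) hAp
  linarith

end BrezisLieb

section WeakConvergence

variable {α : Type*} [MeasurableSpace α] {μ : Measure α}

lemma norm_integral_mul_le_of_memLp_two {f h : α → ℂ} (hf : MemLp f 2 μ) (hh : MemLp h 2 μ) :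
    ‖∫ x, f x * h x ∂μ‖ ≤ (eLpNorm f 2 μ).toReal * (eLpNorm h 2 μ).toReal := by
  have hHolder : eLpNorm (fun x => f x * h x) 1 μ ≤ eLpNorm f 2 μ * eLpNorm h 2 μ := by
    simpa only [smul_eq_mul] using!
      eLpNorm_smul_le_mul_eLpNorm (p := 2) (q := 2) (r := 1) hh.1 hf.1
  have hint : Integrable (fun x => f x * h x) μ := hf.integrable_mul hh
  calc ‖∫ x, f x * h x ∂μ‖ ≤ ∫ x, ‖f x * h x‖ ∂μ := norm_integral_le_integral_norm _
    _ = (eLpNorm (fun x => f x * h x) 1 μ).toReal := by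
        rw [eLpNorm_one_eq_lintegral_enorm, integral_norm_eq_lintegral_enorm hint.1]
    _ ≤ (eLpNorm f 2 μ).toReal * (eLpNorm h 2 μ).toReal := by
        rw [← ENNReal.toReal_mul]
        exact ENNReal.toReal_mono (ENNReal.mul_ne_top hf.2.ne hh.2.ne) hHolder

/-- Weak convergence of `f n` to `F` in `L²(μ)`. The pairing is the bilinear `∫ f h`, which gives
the same notion as the inner product since `L²` is closed under conjugation. -/
def TendstoWeaklyL2 (f : ℕ → α → ℂ) (F : α → ℂ) (μ : Measure α) : Prop :=
  ∀ h : α → ℂ, MemLp h 2 μ →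
    Tendsto (fun n => ∫ x, f n x * h x ∂μ) atTop (𝓝 (∫ x, F x * h x ∂μ))

namespace TendstoWeaklyL2

variable {f : ℕ → α → ℂ} {F : α → ℂ}

lemma comp_tendsto (hfF : TendstoWeaklyL2 f F μ) {φ : ℕ → ℕ} (hφ : Tendsto φ atTop atTop) :
    TendstoWeaklyL2 (fun n => f (φ n)) F μ :=
  fun h hh => (hfF h hh).comp hφ

lemma mul_left_of_bounded (hfF : TendstoWeaklyL2 f F μ) {m : α → ℂ}
    (hm : AEStronglyMeasurable m μ) {K : ℝ} (hK : ∀ x, ‖m x‖ ≤ K) :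
    TendstoWeaklyL2 (fun n x => m x * f n x) (fun x => m x * F x) μ := by
  intro h hh
  have hmh : MemLp (fun x => m x * h x) 2 μ :=
    hh.of_le_mul (c := K) (hm.mul hh.1) (Eventually.of_forall fun x => by
      rw [norm_mul]; gcongr; exact hK x)
  have hswap (k : α → ℂ) : (fun x => m x * k x * h x) = fun x => k x * (m x * h x) := by
    ext x; ring
  simpa only [hswap] using hfF _ hmh

lemma tendsto_re_integral_mul_conj (hfF : TendstoWeaklyL2 f F μ) (hF : MemLp F 2 μ) :
    Tendsto (fun n => (∫ x, f n x * (starRingEnd ℂ) (F x) ∂μ).re) atTop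
      (𝓝 ((eLpNorm F 2 μ).toReal ^ 2)) := by
  have hnorm : (∫ x, F x * (starRingEnd ℂ) (F x) ∂μ).re = (eLpNorm F 2 μ).toReal ^ 2 := by
    have hmul (x : α) : F x * (starRingEnd ℂ) (F x) = ((‖F x‖ ^ 2 : ℝ) : ℂ) := by
      rw [Complex.mul_conj', Complex.ofReal_pow]
    simp only [toReal_eLpNorm_two_sq hF, hmul, integral_complex_ofReal, Complex.ofReal_re]
  rw [← hnorm]
  exact (Complex.continuous_re.tendsto _).comp (hfF _ hF.star)

lemma tendsto_sq_eLpNorm_sub (hfF : TendstoWeaklyL2 f F μ) (hf : ∀ n, MemLp (f n) 2 μ)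
    (hF : MemLp F 2 μ) {L : ℝ}
    (hL : Tendsto (fun n => (eLpNorm (f n) 2 μ).toReal ^ 2) atTop (𝓝 L)) :
    Tendsto (fun n => (eLpNorm (f n - F) 2 μ).toReal ^ 2) atTop
      (𝓝 (L - (eLpNorm F 2 μ).toReal ^ 2)) := by
  have hsq {h : α → ℂ} (hh : MemLp h 2 μ) : Integrable (fun x => ‖h x‖ ^ 2) μ :=
    hh.norm.integrable_sq
  have hexpand (n : ℕ) : (eLpNorm (f n - F) 2 μ).toReal ^ 2 = (eLpNorm (f n) 2 μ).toReal ^ 2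
      + (eLpNorm F 2 μ).toReal ^ 2 - 2 * (∫ x, f n x * (starRingEnd ℂ) (F x) ∂μ).re := by
    have hcross : Integrable (fun x => f n x * (starRingEnd ℂ) (F x)) μ :=
      (hf n).integrable_mul hF.star
    have hcross_re : Integrable (fun x => (f n x * (starRingEnd ℂ) (F x)).re) μ := hcross.re
    have hre : ∫ x, (f n x * (starRingEnd ℂ) (F x)).re ∂μ
        = (∫ x, f n x * (starRingEnd ℂ) (F x) ∂μ).re := integral_re hcross
    have hsum : Integrable (fun x => ‖f n x‖ ^ 2 + ‖F x‖ ^ 2) μ := (hsq (hf n)).add (hsq hF)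
    rw [toReal_eLpNorm_two_sq ((hf n).sub hF), toReal_eLpNorm_two_sq (hf n),
      toReal_eLpNorm_two_sq hF, ← hre, ← integral_const_mul, ← integral_add (hsq (hf n)) (hsq hF),
      ← integral_sub hsum (hcross_re.const_mul 2)]
    simp only [Pi.sub_apply, ← Complex.normSq_eq_norm_sq, Complex.normSq_sub]
  simp only [hexpand]
  convert (hL.add_const ((eLpNorm F 2 μ).toReal ^ 2)).sub
    ((hfF.tendsto_re_integral_mul_conj hF).const_mul 2) using 2
  ring

lemma integral_mul_tendsto_of_tendsto_eLpNorm (hfF : TendstoWeaklyL2 f F μ)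
    (hf : ∀ n, MemLp (f n) 2 μ) {M : ℝ} (hM : ∀ n, (eLpNorm (f n) 2 μ).toReal ≤ M)
    {h : ℕ → α → ℂ} {H : α → ℂ} (hh : ∀ n, MemLp (h n) 2 μ) (hH : MemLp H 2 μ)
    (hhH : Tendsto (fun n => (eLpNorm (h n - H) 2 μ).toReal) atTop (𝓝 0)) :
    Tendsto (fun n => ∫ x, f n x * h n x ∂μ) atTop (𝓝 (∫ x, F x * H x ∂μ)) := by
  have herror : Tendsto (fun n => ∫ x, f n x * (h n - H) x ∂μ) atTop (𝓝 0) := by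
    refine squeeze_zero_norm (fun n => ?_) (by simpa using hhH.const_mul M)
    refine (norm_integral_mul_le_of_memLp_two (hf n) ((hh n).sub hH)).trans ?_
    gcongr
    exact hM n
  refine (zero_add (∫ x, F x * H x ∂μ) ▸ herror.add (hfF H hH)).congr fun n => ?_
  have hint₁ : Integrable (fun x => f n x * (h n - H) x) μ :=
    (hf n).integrable_mul ((hh n).sub hH)
  have hint₂ : Integrable (fun x => f n x * H x) μ := (hf n).integrable_mul hH
  rw [← integral_add hint₁ hint₂]
  simp only [Pi.sub_apply, ← mul_add, sub_add_cancel]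

end TendstoWeaklyL2

lemma inner_toLp_conj {h : α → ℂ} (hh : MemLp (fun x => (starRingEnd ℂ) (h x)) 2 μ)
    (k : Lp ℂ 2 μ) :
    inner ℂ k (hh.toLp _) = (starRingEnd ℂ) (∫ x, k x * h x ∂μ) := by
  rw [L2.inner_def, ← integral_conj]
  refine integral_congr_ae ?_
  filter_upwards [hh.coeFn_toLp] with x hx
  rw [hx, RCLike.inner_apply, map_mul, mul_comm]

lemma exists_subseq_tendstoWeaklyL2 [IsSeparable μ] {f : ℕ → α → ℂ}
    (hf : ∀ n, MemLp (f n) 2 μ) {M : ℝ} (hM : ∀ n, (eLpNorm (f n) 2 μ).toReal ≤ M) :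
    ∃ (F : α → ℂ) (φ : ℕ → ℕ), MemLp F 2 μ ∧ StrictMono φ ∧
      TendstoWeaklyL2 (fun n => f (φ n)) F μ := by
  have : Fact ((2 : ℝ≥0∞) ≠ ⊤) := ⟨by norm_num⟩
  set toDual := InnerProductSpace.toDual ℂ (Lp ℂ 2 μ)
  set x : ℕ → WeakDual ℂ (Lp ℂ 2 μ) := fun n => StrongDual.toWeakDual (toDual ((hf n).toLp (f n)))
  have hball (n : ℕ) : x n ∈ WeakDual.toStrongDual ⁻¹' Metric.closedBall 0 M := by
    rw [Set.mem_preimage, mem_closedBall_zero_iff]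
    change ‖toDual ((hf n).toLp (f n))‖ ≤ M
    rw [LinearIsometryEquiv.norm_map, Lp.norm_toLp]
    exact hM n
  obtain ⟨L, -, φ, hφ, hlim⟩ := WeakDual.isSeqCompact_closedBall ℂ (Lp ℂ 2 μ) 0 M hball
  set F : Lp ℂ 2 μ := toDual.symm (WeakDual.toStrongDual L) with hF
  refine ⟨F, φ, Lp.memLp F, hφ, fun h hh => ?_⟩
  have hconj : MemLp (fun x => (starRingEnd ℂ) (h x)) 2 μ := hh.star
  have heval : Tendsto (fun n => x (φ n) (hconj.toLp _)) atTop (𝓝 (L (hconj.toLp _))) :=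
    ((WeakBilin.tendsto_iff_forall_eval_tendsto _ (fun a b hab => by
      ext z; exact DFunLike.congr_fun hab z)).1 hlim) _
  have hseq (n : ℕ) : x (φ n) (hconj.toLp _) = (starRingEnd ℂ) (∫ y, f (φ n) y * h y ∂μ) := by
    change toDual ((hf (φ n)).toLp (f (φ n))) (hconj.toLp _) = _
    rw [InnerProductSpace.toDual_apply_apply, inner_toLp_conj]
    congr 1
    refine integral_congr_ae ?_
    filter_upwards [(hf (φ n)).coeFn_toLp] with y hy
    rw [hy]
  have hlimit : L (hconj.toLp _) = (starRingEnd ℂ) (∫ y, F y * h y ∂μ) := by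
    rw [← inner_toLp_conj, ← InnerProductSpace.toDual_apply_apply, hF,
      LinearIsometryEquiv.apply_symm_apply]
    rfl
  simp only [hlimit, hseq] at heval
  simpa [Function.comp_def] using (Complex.continuous_conj.tendsto _).comp heval

end WeakConvergence

section FourierPairs

variable {d : ℕ} {U V u v : Rd d → ℂ}

/-- An `L²` function `u` on `ℝ^d` together with its Fourier transform `U`. Both are actual functions
rather than classes in `Lp`, so that pointwise symmetry of `u` makes sense. -/
structure L2FourierPair (U u : Rd d → ℂ) : Prop where
  memLp_ft : MemLp U 2
  memLp : MemLp u 2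
  isFT : IsFT U u

/-- Multiplication by the character `ξ ↦ e^{2πi⟪ξ,t⟫}`; on the Fourier side this is translation
by `t`. -/
def modulate (t : Rd d) (U : Rd d → ℂ) (ξ : Rd d) : ℂ := (𝐞 ⟪ξ, t⟫ : ℂ) * U ξ

@[simp]
lemma norm_modulate (t : Rd d) (U : Rd d → ℂ) (ξ : Rd d) : ‖modulate t U ξ‖ = ‖U ξ‖ := by
  rw [modulate, norm_mul, Circle.norm_coe, one_mul]

lemma continuous_fourierChar_inner (t : Rd d) : Continuous fun ξ : Rd d => (𝐞 ⟪ξ, t⟫ : ℂ) :=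
  continuous_subtype_val.comp (Real.continuous_fourierChar.comp (by fun_prop))

lemma memLp_modulate {p : ℝ≥0∞} (hU : MemLp U p) (t : Rd d) : MemLp (modulate t U) p :=
  hU.of_le ((continuous_fourierChar_inner t).aestronglyMeasurable.mul hU.1)
    (ae_of_all _ fun ξ => (norm_modulate t U ξ).le)

lemma memLp_two_fourier_schwartz (φ : SchwartzMap (Rd d) ℂ) : MemLp (𝓕 (⇑φ)) 2 := by
  rw [← SchwartzMap.fourier_coe]
  exact (𝓕 φ : SchwartzMap (Rd d) ℂ).memLp 2 volume

lemma fourierInv_apply_eq_integral_modulate (U : Rd d → ℂ) (x : Rd d) :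
    𝓕⁻ U x = ∫ ξ, modulate x U ξ := by
  simp only [Real.fourierInv_eq, Circle.smul_def, smul_eq_mul, modulate]

lemma enorm_fourierInv_le (U : Rd d → ℂ) (x : Rd d) : ‖𝓕⁻ U x‖ₑ ≤ eLpNorm U 1 := by
  rw [fourierInv_apply_eq_integral_modulate, eLpNorm_one_eq_lintegral_enorm]
  refine (enorm_integral_le_lintegral_enorm _).trans (lintegral_mono fun ξ => ?_)
  rw [← ofReal_norm, ← ofReal_norm, norm_modulate]

lemma continuous_fourierInv_of_integrable (hU : Integrable U) : Continuous (𝓕⁻ U) :=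
  VectorFourier.fourierIntegral_continuous (L := -innerₗ (Rd d)) Real.continuous_fourierChar
    (by simpa using (continuous_inner (𝕜 := ℝ) (E := Rd d)).fun_neg) hU

lemma isFT_fourierInv (hU : Integrable U) : IsFT U (𝓕⁻ U) := by
  intro φ
  have hflip : (-innerₗ (Rd d)).flip = -innerₗ (Rd d) := by
    ext x y; simp [real_inner_comm]
  have hinv : 𝓕⁻ (𝓕 (⇑φ)) = ⇑φ := by
    rw [← SchwartzMap.fourier_coe, ← SchwartzMap.fourierInv_coe,
      FourierTransform.fourierInv_fourier_eq]
  have hswap : ∫ x, 𝓕⁻ U x * 𝓕 (⇑φ) x = ∫ ξ, U ξ * 𝓕⁻ (𝓕 (⇑φ)) ξ := by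
    have hφ : Integrable (𝓕 (⇑φ)) := by
      rw [← SchwartzMap.fourier_coe]
      exact (𝓕 φ : SchwartzMap (Rd d) ℂ).integrable
    have h := VectorFourier.integral_fourierIntegral_smul_eq_flip (L := -innerₗ (Rd d))
      (μ := volume) (ν := volume) Real.continuous_fourierChar
      (by simpa using (continuous_inner (𝕜 := ℝ) (E := Rd d)).fun_neg) hU hφ
    rwa [hflip] at h
  rw [hswap, hinv]

lemma ae_eq_of_isFT_of_isFT {u' : Rd d → ℂ} (hu : LocallyIntegrable u)
    (hu' : LocallyIntegrable u') (h : IsFT U u) (h' : IsFT U u') : u =ᵐ[volume] u' := by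
  refine ae_eq_of_integral_contDiff_smul_eq hu hu' fun g hg hgsupp => ?_
  have hgsuppC : HasCompactSupport (fun x => (g x : ℂ)) :=
    hgsupp.comp_left (g := fun t : ℝ => (t : ℂ)) Complex.ofReal_zero
  let G : SchwartzMap (Rd d) ℂ := hgsuppC.toSchwartzMap (Complex.ofRealCLM.contDiff.comp hg)
  have hG : 𝓕 (⇑(𝓕⁻ G : SchwartzMap (Rd d) ℂ)) = fun x => (g x : ℂ) := by
    rw [← SchwartzMap.fourier_coe, FourierTransform.fourier_fourierInv_eq]
    rfl
  have hpair := (h (𝓕⁻ G)).symm.trans (h' (𝓕⁻ G))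
  simpa only [hG, Complex.real_smul, mul_comm] using hpair

lemma fourierInv_compSubConst_fourier (φ : SchwartzMap (Rd d) ℂ) (t : Rd d) :
    ⇑(𝓕⁻ ((𝓕 φ : SchwartzMap (Rd d) ℂ).compSubConstCLM ℂ t) : SchwartzMap (Rd d) ℂ)
      = modulate t φ := by
  ext ξ
  have hinv : φ ξ = 𝓕⁻ (𝓕 (⇑φ)) ξ := by
    rw [← SchwartzMap.fourier_coe, ← SchwartzMap.fourierInv_coe,
      FourierTransform.fourierInv_fourier_eq]
  rw [modulate, hinv, SchwartzMap.fourierInv_coe, Real.fourierInv_eq, Real.fourierInv_eq,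
    ← integral_add_right_eq_self _ t, ← integral_const_mul]
  congr with y
  rw [SchwartzMap.compSubConstCLM_apply, SchwartzMap.fourier_coe, add_sub_cancel_right,
    inner_add_left, AddChar.map_add_eq_mul, Circle.smul_def, Circle.smul_def, Circle.coe_mul,
    smul_eq_mul, smul_eq_mul, real_inner_comm t ξ]
  ring

lemma IsFT.integral_mul_modulate (h : IsFT U u) (φ : SchwartzMap (Rd d) ℂ) (t : Rd d) :
    ∫ ξ, U ξ * modulate t φ ξ = ∫ y, u y * 𝓕 (⇑φ) (y - t) := by
  have hpair := h (𝓕⁻ ((𝓕 φ : SchwartzMap (Rd d) ℂ).compSubConstCLM ℂ t))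
  rw [← SchwartzMap.fourier_coe, FourierTransform.fourier_fourierInv_eq,
    fourierInv_compSubConst_fourier] at hpair
  simpa only [SchwartzMap.compSubConstCLM_apply, SchwartzMap.fourier_coe] using hpair

lemma IsFT.translate (h : IsFT U u) (t : Rd d) :
    IsFT (modulate t U) (fun x => u (x + t)) := by
  intro φ
  calc ∫ ξ, modulate t U ξ * φ ξ = ∫ ξ, U ξ * modulate t φ ξ := by
        simp only [modulate, mul_assoc, mul_left_comm]
    _ = ∫ y, u y * 𝓕 (⇑φ) (y - t) := h.integral_mul_modulate φ t
    _ = ∫ x, u (x + t) * 𝓕 (⇑φ) x := by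
        rw [← integral_add_right_eq_self (fun y => u y * 𝓕 (⇑φ) (y - t)) t]
        simp only [add_sub_cancel_right]

namespace L2FourierPair

lemma exists_of_memLp (hU : MemLp U 2) :
    ∃ u : Rd d → ℂ, L2FourierPair U u ∧ eLpNorm u 2 = eLpNorm U 2 := by
  let F : Lp ℂ 2 (volume : Measure (Rd d)) := hU.toLp U
  let f : Lp ℂ 2 (volume : Measure (Rd d)) := 𝓕⁻ F
  have hFf : 𝓕 f = F := FourierTransform.fourier_fourierInv_eq F
  refine ⟨f, ⟨hU, Lp.memLp f, fun φ => ?_⟩, ?_⟩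
  · have hdist := congrArg (fun T => T φ) (Lp.fourier_toTemperedDistribution_eq f)
    simp only [hFf, TemperedDistribution.fourier_apply, Lp.toTemperedDistribution_apply,
      SchwartzMap.fourier_coe, smul_eq_mul] at hdist
    calc ∫ ξ, U ξ * φ ξ = ∫ ξ, φ ξ * F ξ := by
          refine integral_congr_ae (hU.coeFn_toLp.mono fun ξ hξ => ?_)
          simp only [F, hξ, mul_comm]
      _ = ∫ x, f x * 𝓕 (⇑φ) x := by
          rw [← hdist]
          simp only [mul_comm]
  · have hnorm : ‖F‖ = ‖f‖ := hFf ▸ Lp.norm_fourier_eq f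
    rw [Lp.norm_def, Lp.norm_def, ENNReal.toReal_eq_toReal_iff' (Lp.eLpNorm_ne_top _)
      (Lp.eLpNorm_ne_top _)] at hnorm
    exact hnorm.symm.trans (eLpNorm_congr_ae hU.coeFn_toLp)

lemma sub (h : L2FourierPair U u) (h' : L2FourierPair V v) : L2FourierPair (U - V) (u - v) where
  memLp_ft := h.memLp_ft.sub h'.memLp_ft
  memLp := h.memLp.sub h'.memLp
  isFT φ := by
    have hft := integral_sub (h.memLp_ft.integrable_mul (φ.memLp 2 volume))
      (h'.memLp_ft.integrable_mul (φ.memLp 2 volume))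
    have hfun := integral_sub (h.memLp.integrable_mul (memLp_two_fourier_schwartz φ))
      (h'.memLp.integrable_mul (memLp_two_fourier_schwartz φ))
    simp only [Pi.mul_apply] at hft hfun
    simp only [Pi.sub_apply, sub_mul, hft, hfun, h.isFT φ, h'.isFT φ]

lemma const_mul (h : L2FourierPair U u) (a : ℂ) :
    L2FourierPair (fun ξ => a * U ξ) (fun x => a * u x) where
  memLp_ft := h.memLp_ft.const_mul a
  memLp := h.memLp.const_mul a
  isFT φ := by
    simp only [mul_assoc]
    rw [integral_const_mul, integral_const_mul, h.isFT φ]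

lemma translate (h : L2FourierPair U u) (t : Rd d) :
    L2FourierPair (modulate t U) (fun x => u (x + t)) where
  memLp_ft := memLp_modulate h.memLp_ft t
  memLp := h.memLp.comp_measurePreserving (measurePreserving_add_right volume t)
  isFT := h.isFT.translate t

lemma congr_right {u' : Rd d → ℂ} (h : L2FourierPair U u) (huu' : u =ᵐ[volume] u') :
    L2FourierPair U u' where
  memLp_ft := h.memLp_ft
  memLp := h.memLp.ae_eq huu'
  isFT φ := (h.isFT φ).trans (integral_congr_ae (huu'.mono fun x hx => by simp only [hx]))

lemma plancherel (h : L2FourierPair U u) : eLpNorm u 2 = eLpNorm U 2 := by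
  obtain ⟨w, hw, hnorm⟩ := exists_of_memLp h.memLp_ft
  have huw : u =ᵐ[volume] w := ae_eq_of_isFT_of_isFT (h.memLp.locallyIntegrable (by norm_num))
    (hw.memLp.locallyIntegrable (by norm_num)) h.isFT hw.isFT
  exact (eLpNorm_congr_ae huw).trans hnorm

lemma ae_eq_fourierInv (h : L2FourierPair U u) (hU : Integrable U) : u =ᵐ[volume] 𝓕⁻ U :=
  ae_eq_of_isFT_of_isFT (h.memLp.locallyIntegrable (by norm_num))
    (continuous_fourierInv_of_integrable hU).locallyIntegrable h.isFT (isFT_fourierInv hU)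

lemma fourierInv_of_integrable (hU : Integrable U) (hU₂ : MemLp U 2) :
    L2FourierPair U (𝓕⁻ U) := by
  obtain ⟨u, hu, -⟩ := exists_of_memLp hU₂
  exact hu.congr_right (hu.ae_eq_fourierInv hU)

end L2FourierPair

end FourierPairs

section Bernstein

variable {d : ℕ} {U u : Rd d → ℂ} {p : ℝ}

lemma L2FourierPair.eLpNorm_le_of_eq_zero_off (h : L2FourierPair U u) (hp : 2 < p)
    {S : Set (Rd d)} (hS : MeasurableSet S) (hSfin : volume S ≠ ⊤) (hUS : ∀ ξ ∉ S, U ξ = 0) :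
    eLpNorm u (ENNReal.ofReal p) ≤ volume S ^ (1 / 2 - 1 / p) * eLpNorm U 2 := by
  have hp₀ : 0 < p := by linarith
  have hexp : 0 ≤ 1 - 2 / p := sub_nonneg.2 ((div_le_one hp₀).2 hp.le)
  have hsup : ∀ᵐ x, ‖u x‖ₑ ≤ eLpNorm U 2 * volume S ^ (1 / 2 : ℝ) := by
    filter_upwards [h.ae_eq_fourierInv (integrable_of_eq_zero_off h.memLp_ft hS hSfin hUS)]
      with x hx
    rw [hx]
    exact (enorm_fourierInv_le U x).trans (eLpNorm_one_le_of_eq_zero_off h.memLp_ft.1 hS hUS)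
  have hsup_ne_top : eLpNorm U 2 * volume S ^ (1 / 2 : ℝ) ≠ ⊤ :=
    ENNReal.mul_ne_top h.memLp_ft.2.ne (ENNReal.rpow_ne_top_of_nonneg (by norm_num) hSfin)
  have hinterp := eLpNorm_le_rpow_mul_eLpNorm_rpow zero_lt_two hp.le hsup_ne_top hsup
  rw [ENNReal.ofReal_ofNat, h.plancherel, ENNReal.mul_rpow_of_nonneg _ _ hexp,
    ← ENNReal.rpow_mul, mul_comm (eLpNorm U 2 volume ^ _), mul_assoc,
    ← ENNReal.rpow_add_of_nonneg _ _ hexp (by positivity)] at hinterp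
  refine hinterp.trans_eq ?_
  rw [sub_add_cancel, ENNReal.rpow_one]
  congr 2
  field_simp

lemma exists_bernstein_const (d : ℕ) (hp : 2 < p) :
    ∃ K : ℝ≥0∞, K ≠ ⊤ ∧ ∀ R > 0, ∀ U u : Rd d → ℂ, L2FourierPair U u →
      (∀ ξ, R ≤ ‖ξ‖ → U ξ = 0) →
      eLpNorm u (ENNReal.ofReal p) ≤
        K * ENNReal.ofReal (R ^ (d * (1 / 2 - 1 / p))) * eLpNorm U 2 := by
  have hexp : 0 ≤ 1 / 2 - 1 / p := sub_nonneg.2 (one_div_le_one_div_of_le two_pos hp.le)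
  refine ⟨volume (Metric.ball (0 : Rd d) 1) ^ (1 / 2 - 1 / p),
    ENNReal.rpow_ne_top_of_nonneg hexp measure_ball_lt_top.ne, fun R hR U u h hU => ?_⟩
  refine (h.eLpNorm_le_of_eq_zero_off hp (S := Metric.ball 0 R) measurableSet_ball
    measure_ball_lt_top.ne fun ξ hξ => hU ξ (by simpa using hξ)).trans_eq ?_
  rw [Measure.addHaar_ball_of_pos _ _ hR, ENNReal.mul_rpow_of_nonneg _ _ hexp,
    mul_comm (ENNReal.ofReal _ ^ _), ENNReal.ofReal_rpow_of_nonneg (by positivity) hexp,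
    finrank_euclideanSpace, Fintype.card_fin, ← Real.rpow_natCast, ← Real.rpow_mul hR.le]

end Bernstein

section SobolevNorm

variable {d : ℕ} {T V : Rd d → ℂ} {R s σ : ℝ}

/-- The `H^σ` norm of a function, computed from its Fourier transform `V`. -/
def sobolevNorm (σ : ℝ) (V : Rd d → ℂ) : ℝ≥0∞ :=
  eLpNorm (fun ξ => (1 + ‖ξ‖ ^ 2) ^ (σ / 2) * ‖V ξ‖) 2

lemma sobolevNorm_zero (V : Rd d → ℂ) : sobolevNorm 0 V = eLpNorm V 2 := by
  simp [sobolevNorm, eLpNorm_norm]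

lemma sobolevNorm_le_mul {b : ℝ}
    (h : ∀ ξ, (1 + ‖ξ‖ ^ 2) ^ (σ / 2) * ‖T ξ‖ ≤ b * ((1 + ‖ξ‖ ^ 2) ^ (s / 2) * ‖V ξ‖)) :
    sobolevNorm σ T ≤ ENNReal.ofReal b * sobolevNorm s V := by
  refine eLpNorm_le_mul_eLpNorm_of_ae_le_mul (ae_of_all _ fun ξ => ?_) 2
  rw [Real.norm_of_nonneg (by positivity), Real.norm_of_nonneg (by positivity)]
  exact h ξ

lemma sobolevNorm_le_of_eq_zero_on_closedBall (hR : 0 < R) (hσ : σ ≤ s)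
    (hT : ∀ ξ, ‖ξ‖ ≤ R → T ξ = 0) (hTV : ∀ ξ, ‖T ξ‖ ≤ ‖V ξ‖) :
    sobolevNorm σ T ≤ ENNReal.ofReal (R ^ (σ - s)) * sobolevNorm s V := by
  refine sobolevNorm_le_mul fun ξ => ?_
  rcases le_or_gt ‖ξ‖ R with hξ | hξ
  · rw [hT ξ hξ, norm_zero, mul_zero]
    positivity
  have hweight : (1 + ‖ξ‖ ^ 2) ^ ((σ - s) / 2) ≤ R ^ (σ - s) := by
    rw [← Real.sqrt_sq hR.le, Real.sqrt_eq_rpow, ← Real.rpow_mul (by positivity),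
      one_div_mul_eq_div]
    exact Real.rpow_le_rpow_of_nonpos (by positivity) (by nlinarith) (by linarith)
  calc (1 + ‖ξ‖ ^ 2) ^ (σ / 2) * ‖T ξ‖
      = (1 + ‖ξ‖ ^ 2) ^ ((σ - s) / 2) * ((1 + ‖ξ‖ ^ 2) ^ (s / 2) * ‖T ξ‖) := by
        rw [← mul_assoc, ← Real.rpow_add (by positivity)]
        ring_nf
    _ ≤ R ^ (σ - s) * ((1 + ‖ξ‖ ^ 2) ^ (s / 2) * ‖V ξ‖) := by
        gcongr
        exact hTV ξ

lemma eLpNorm_two_le_sobolevNorm (hs : 0 ≤ s) (V : Rd d → ℂ) : eLpNorm V 2 ≤ sobolevNorm s V := by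
  refine eLpNorm_mono fun ξ => ?_
  rw [Real.norm_of_nonneg (by positivity)]
  exact le_mul_of_one_le_left (norm_nonneg _)
    (Real.one_le_rpow (le_add_of_nonneg_right (by positivity)) (by positivity))

end SobolevNorm

section LowPass

variable {d : ℕ} {R : ℝ} {U u V : Rd d → ℂ}

/-- A smooth radial cutoff, equal to `1` on the ball of radius `R` and to `0` outside the ball of
radius `2R`. -/
def cutoff (R : ℝ) (ξ : Rd d) : ℝ := Real.smoothTransition (2 - ‖ξ‖ ^ 2 / R ^ 2)

lemma cutoff_nonneg (R : ℝ) (ξ : Rd d) : 0 ≤ cutoff R ξ := Real.smoothTransition.nonneg _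

lemma cutoff_le_one (R : ℝ) (ξ : Rd d) : cutoff R ξ ≤ 1 := Real.smoothTransition.le_one _

lemma cutoff_eq_one (hR : 0 < R) {ξ : Rd d} (hξ : ‖ξ‖ ≤ R) : cutoff R ξ = 1 := by
  have : ‖ξ‖ ^ 2 / R ^ 2 ≤ 1 := (div_le_one (by positivity)).2 (by gcongr)
  exact Real.smoothTransition.one_of_one_le (by linarith)

lemma cutoff_eq_zero (hR : 0 < R) {ξ : Rd d} (hξ : 2 * R ≤ ‖ξ‖) : cutoff R ξ = 0 := by
  have : 2 ≤ ‖ξ‖ ^ 2 / R ^ 2 := (le_div_iff₀ (by positivity)).2 (by nlinarith)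
  exact Real.smoothTransition.zero_of_nonpos (by linarith)

lemma contDiff_cutoff (R : ℝ) : ContDiff ℝ (⊤ : ℕ∞) (cutoff (d := d) R) :=
  Real.smoothTransition.contDiff.comp (contDiff_const.sub ((contDiff_norm_sq ℝ).div_const _))

lemma hasCompactSupport_cutoff (hR : 0 < R) :
    HasCompactSupport fun ξ : Rd d => (cutoff R ξ : ℂ) := by
  refine HasCompactSupport.intro (isCompact_closedBall (0 : Rd d) (2 * R)) fun ξ hξ => ?_
  have hξ' : 2 * R < ‖ξ‖ := by simpa using hξ
  rw [cutoff_eq_zero hR hξ'.le, Complex.ofReal_zero]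

/-- The cutoff as a Schwartz function. -/
def cutoffSchwartz (hR : 0 < R) : SchwartzMap (Rd d) ℂ :=
  (hasCompactSupport_cutoff hR).toSchwartzMap (Complex.ofRealCLM.contDiff.comp (contDiff_cutoff R))

lemma cutoffSchwartz_apply (hR : 0 < R) (ξ : Rd d) : cutoffSchwartz hR ξ = (cutoff R ξ : ℂ) := rfl

/-- The Fourier transform of the low-frequency part of the function with Fourier transform `U`. -/
def cutoffMul (R : ℝ) (U : Rd d → ℂ) (ξ : Rd d) : ℂ := cutoff R ξ * U ξ

/-- The low-frequency part of the function with Fourier transform `U`. -/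
def lowPass (R : ℝ) (U : Rd d → ℂ) : Rd d → ℂ := 𝓕⁻ (cutoffMul R U)

lemma norm_cutoffMul_le (R : ℝ) (U : Rd d → ℂ) (ξ : Rd d) : ‖cutoffMul R U ξ‖ ≤ ‖U ξ‖ := by
  rw [cutoffMul, norm_mul, Complex.norm_real, Real.norm_of_nonneg (cutoff_nonneg R ξ)]
  exact mul_le_of_le_one_left (norm_nonneg _) (cutoff_le_one R ξ)

lemma cutoffMul_eq_self (hR : 0 < R) (U : Rd d → ℂ) {ξ : Rd d} (hξ : ‖ξ‖ ≤ R) :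
    cutoffMul R U ξ = U ξ := by
  rw [cutoffMul, cutoff_eq_one hR hξ, Complex.ofReal_one, one_mul]

lemma cutoffMul_eq_zero (hR : 0 < R) (U : Rd d → ℂ) {ξ : Rd d} (hξ : 2 * R ≤ ‖ξ‖) :
    cutoffMul R U ξ = 0 := by
  rw [cutoffMul, cutoff_eq_zero hR hξ, Complex.ofReal_zero, zero_mul]

lemma norm_sub_cutoffMul_le (R : ℝ) (U : Rd d → ℂ) (ξ : Rd d) :
    ‖(U - cutoffMul R U) ξ‖ ≤ ‖U ξ‖ := by
  have : (U - cutoffMul R U) ξ = ((1 - cutoff R ξ : ℝ) : ℂ) * U ξ := by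
    rw [Pi.sub_apply, cutoffMul]
    push_cast
    ring
  rw [this, norm_mul, Complex.norm_real, Real.norm_of_nonneg (sub_nonneg.2 (cutoff_le_one R ξ))]
  exact mul_le_of_le_one_left (norm_nonneg _) (sub_le_self _ (cutoff_nonneg R ξ))

lemma norm_cutoffMul_sub_cutoffMul_le (R R' : ℝ) (U : Rd d → ℂ) (ξ : Rd d) :
    ‖(cutoffMul R U - cutoffMul R' U) ξ‖ ≤ ‖U ξ‖ := by
  have : (cutoffMul R U - cutoffMul R' U) ξ = ((cutoff R ξ - cutoff R' ξ : ℝ) : ℂ) * U ξ := by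
    rw [Pi.sub_apply, cutoffMul, cutoffMul]
    push_cast
    ring
  rw [this, norm_mul, Complex.norm_real]
  refine mul_le_of_le_one_left (norm_nonneg _) (abs_sub_le_iff.2 ⟨?_, ?_⟩) <;>
    linarith [cutoff_nonneg R ξ, cutoff_nonneg R' ξ, cutoff_le_one R ξ, cutoff_le_one R' ξ]

lemma memLp_cutoffMul {q : ℝ≥0∞} (hU : MemLp U q) : MemLp (cutoffMul R U) q :=
  hU.of_le ((Complex.continuous_ofReal.comp
    (contDiff_cutoff R).continuous).aestronglyMeasurable.mul hU.1)
    (ae_of_all _ (norm_cutoffMul_le R U))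

lemma integrable_cutoffMul (hR : 0 < R) (hU : MemLp U 2) : Integrable (cutoffMul R U) :=
  integrable_of_eq_zero_off (S := Metric.ball 0 (2 * R)) (memLp_cutoffMul hU) measurableSet_ball
    measure_ball_lt_top.ne fun _ hξ => cutoffMul_eq_zero hR U (by simpa using hξ)

lemma l2FourierPair_lowPass (hR : 0 < R) (hU : MemLp U 2) :
    L2FourierPair (cutoffMul R U) (lowPass R U) :=
  .fourierInv_of_integrable (integrable_cutoffMul hR hU) (memLp_cutoffMul hU)

lemma eLpNorm_two_lowPass_le (hR : 0 < R) (hU : MemLp U 2) :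
    eLpNorm (lowPass R U) 2 ≤ eLpNorm U 2 :=
  (l2FourierPair_lowPass hR hU).plancherel.trans_le (eLpNorm_mono (norm_cutoffMul_le R U))

lemma sobolevNorm_sub_cutoffMul_le {s σ : ℝ} (hR : 0 < R) (hσ : σ ≤ s) (U : Rd d → ℂ) :
    sobolevNorm σ (U - cutoffMul R U) ≤ ENNReal.ofReal (R ^ (σ - s)) * sobolevNorm s U :=
  sobolevNorm_le_of_eq_zero_on_closedBall hR hσ
    (fun ξ hξ => by rw [Pi.sub_apply, cutoffMul_eq_self hR U hξ, sub_self])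
    (norm_sub_cutoffMul_le R U)

lemma L2FourierPair.eLpNorm_two_sub_lowPass_le (h : L2FourierPair U u) {s : ℝ} (hR : 0 < R)
    (hs : 0 ≤ s) :
    eLpNorm (u - lowPass R U) 2 ≤ ENNReal.ofReal (R ^ (-s)) * sobolevNorm s U := by
  rw [(h.sub (l2FourierPair_lowPass hR h.memLp_ft)).plancherel, ← sobolevNorm_zero, ← zero_sub s]
  exact sobolevNorm_sub_cutoffMul_le hR hs U

end LowPass

section Sobolev

variable {d : ℕ} {p σ : ℝ}

lemma eLpNorm_two_dyadicPiece_le (hσ : 0 ≤ σ) (U : Rd d → ℂ) (n : ℕ) :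
    eLpNorm (cutoffMul (2 ^ (n + 1)) U - cutoffMul (2 ^ n) U) 2 ≤
      ENNReal.ofReal (((2 : ℝ) ^ n) ^ (0 - σ)) * sobolevNorm σ U := by
  rw [← sobolevNorm_zero]
  refine sobolevNorm_le_of_eq_zero_on_closedBall (by positivity) hσ (fun ξ hξ => ?_)
    (norm_cutoffMul_sub_cutoffMul_le _ _ U)
  rw [Pi.sub_apply, cutoffMul_eq_self (by positivity) U hξ, cutoffMul_eq_self (by positivity) U
    (hξ.trans (pow_le_pow_right₀ one_le_two n.le_succ)), sub_self]

lemma exists_dyadicPiece_const (d : ℕ) (hp : 2 < p) :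
    ∃ K : ℝ≥0∞, K ≠ ⊤ ∧ ∀ σ ≥ 0, ∀ U : Rd d → ℂ, MemLp U 2 → ∀ n : ℕ,
      eLpNorm (lowPass (2 ^ (n + 1)) U - lowPass (2 ^ n) U) (ENNReal.ofReal p) ≤
        K * sobolevNorm σ U * ENNReal.ofReal (2 ^ (d * (1 / 2 - 1 / p) - σ)) ^ n := by
  obtain ⟨K, hK, hbernstein⟩ := exists_bernstein_const d hp
  generalize (d : ℝ) * (1 / 2 - 1 / p) = e at hbernstein ⊢
  refine ⟨K * ENNReal.ofReal (4 ^ e), ENNReal.mul_ne_top hK ENNReal.ofReal_ne_top,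
    fun σ hσ U hU n => ?_⟩
  have hpair := (l2FourierPair_lowPass (R := 2 ^ (n + 1)) (by positivity) hU).sub
    (l2FourierPair_lowPass (R := 2 ^ n) (by positivity) hU)
  have hscale : ((2 : ℝ) ^ n * 4) ^ e * ((2 : ℝ) ^ n) ^ (0 - σ) = 4 ^ e * (2 ^ (e - σ)) ^ n := by
    rw [Real.mul_rpow (by positivity) (by norm_num), mul_right_comm,
      ← Real.rpow_add (by positivity), mul_comm, ← Real.rpow_natCast, ← Real.rpow_natCast,
      ← Real.rpow_mul zero_le_two, ← Real.rpow_mul zero_le_two]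
    ring_nf
  calc eLpNorm (lowPass (2 ^ (n + 1)) U - lowPass (2 ^ n) U) (ENNReal.ofReal p) volume
      ≤ K * ENNReal.ofReal ((2 ^ n * 4) ^ e) *
          eLpNorm (cutoffMul (2 ^ (n + 1)) U - cutoffMul (2 ^ n) U) 2 volume := by
        refine hbernstein _ (by positivity) _ _ hpair fun ξ hξ => ?_
        have : (0 : ℝ) < 2 ^ n := by positivity
        rw [Pi.sub_apply, cutoffMul_eq_zero (by positivity) U (by rw [pow_succ]; linarith),
          cutoffMul_eq_zero (by positivity) U (by linarith), sub_zero]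
    _ ≤ K * ENNReal.ofReal ((2 ^ n * 4) ^ e) *
          (ENNReal.ofReal ((2 ^ n) ^ (0 - σ)) * sobolevNorm σ U) := by
        gcongr
        exact eLpNorm_two_dyadicPiece_le hσ U n
    _ = K * ENNReal.ofReal ((2 ^ n * 4) ^ e * (2 ^ n) ^ (0 - σ)) * sobolevNorm σ U := by
        rw [ENNReal.ofReal_mul (by positivity)]
        ring
    _ = K * ENNReal.ofReal (4 ^ e) * sobolevNorm σ U * ENNReal.ofReal (2 ^ (e - σ)) ^ n := by
        rw [hscale, ENNReal.ofReal_mul (by positivity), ENNReal.ofReal_pow (by positivity)]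
        ring

lemma exists_lowPass_const (d : ℕ) (hp : 2 < p) :
    ∃ K : ℝ≥0∞, K ≠ ⊤ ∧ ∀ σ ≥ 0, ∀ U : Rd d → ℂ, MemLp U 2 →
      eLpNorm (lowPass 1 U) (ENNReal.ofReal p) ≤ K * sobolevNorm σ U := by
  obtain ⟨K, hK, hbernstein⟩ := exists_bernstein_const d hp
  generalize (d : ℝ) * (1 / 2 - 1 / p) = e at hbernstein
  refine ⟨K * ENNReal.ofReal (2 ^ e), ENNReal.mul_ne_top hK ENNReal.ofReal_ne_top,
    fun σ hσ U hU => ?_⟩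
  calc eLpNorm (lowPass 1 U) (ENNReal.ofReal p) volume
      ≤ K * ENNReal.ofReal (2 ^ e) * eLpNorm (cutoffMul 1 U) 2 volume :=
        hbernstein 2 two_pos _ _ (l2FourierPair_lowPass one_pos hU) fun ξ hξ =>
          cutoffMul_eq_zero one_pos U (by linarith)
    _ ≤ K * ENNReal.ofReal (2 ^ e) * sobolevNorm σ U := by
        gcongr
        exact (eLpNorm_mono (norm_cutoffMul_le 1 U)).trans (eLpNorm_two_le_sobolevNorm hσ U)

lemma L2FourierPair.tendsto_eLpNorm_two_lowPass_sub {U u : Rd d → ℂ} (h : L2FourierPair U u)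
    (hσ : 0 < σ) (hfin : sobolevNorm σ U ≠ ⊤) :
    Tendsto (fun n : ℕ => eLpNorm (lowPass (2 ^ n) U - u) 2) atTop (𝓝 0) := by
  have hle (n : ℕ) :
      eLpNorm (lowPass (2 ^ n) U - u) 2 ≤ ENNReal.ofReal (2 ^ (-σ)) ^ n * sobolevNorm σ U := by
    rw [eLpNorm_sub_comm]
    refine (h.eLpNorm_two_sub_lowPass_le (by positivity) hσ.le).trans_eq ?_
    rw [← ENNReal.ofReal_pow (by positivity), ← Real.rpow_natCast, ← Real.rpow_natCast,
      ← Real.rpow_mul zero_le_two, ← Real.rpow_mul zero_le_two, mul_comm (-σ)]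
  have hratio : ENNReal.ofReal (2 ^ (-σ)) < 1 :=
    ENNReal.ofReal_lt_one.2 (Real.rpow_lt_one_of_one_lt_of_neg one_lt_two (neg_lt_zero.2 hσ))
  have hlim := ENNReal.Tendsto.mul_const (ENNReal.tendsto_pow_atTop_nhds_zero_of_lt_one hratio)
    (Or.inr hfin)
  rw [zero_mul] at hlim
  exact tendsto_of_tendsto_of_tendsto_of_le_of_le tendsto_const_nhds hlim (fun _ => bot_le) hle

lemma exists_sobolev_const (hp : 2 < p) (hσ : d * (1 / 2 - 1 / p) < σ) :
    ∃ K : ℝ≥0∞, K ≠ ⊤ ∧ ∀ U u : Rd d → ℂ, L2FourierPair U u → sobolevNorm σ U ≠ ⊤ →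
      eLpNorm u (ENNReal.ofReal p) ≤ K * sobolevNorm σ U := by
  have hσ₀ : 0 < σ := lt_of_le_of_lt
    (mul_nonneg d.cast_nonneg (sub_nonneg.2 (one_div_le_one_div_of_le two_pos hp.le))) hσ
  have hp₁ : 1 ≤ ENNReal.ofReal p := ENNReal.one_le_ofReal.2 (by linarith)
  obtain ⟨K₀, hK₀, hbase⟩ := exists_lowPass_const d hp
  obtain ⟨K₁, hK₁, hstep⟩ := exists_dyadicPiece_const d hp
  set r := ENNReal.ofReal (2 ^ (d * (1 / 2 - 1 / p) - σ))
  have hr : r < 1 :=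
    ENNReal.ofReal_lt_one.2 (Real.rpow_lt_one_of_one_lt_of_neg one_lt_two (by linarith))
  have hgeom : (1 - r)⁻¹ ≠ ⊤ := ENNReal.inv_ne_top.2 (tsub_pos_of_lt hr).ne'
  refine ⟨K₀ + K₁ * (1 - r)⁻¹, ENNReal.add_ne_top.2 ⟨hK₀, ENNReal.mul_ne_top hK₁ hgeom⟩,
    fun U u h hfin => ?_⟩
  have hmeas (n : ℕ) : AEStronglyMeasurable (lowPass (2 ^ n) U) :=
    (l2FourierPair_lowPass (by positivity) h.memLp_ft).memLp.1
  refine eLpNorm_le_of_tendsto_eLpNorm_sub two_ne_zero hmeas h.memLp.1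
    (h.tendsto_eLpNorm_two_lowPass_sub hσ₀ hfin) fun n => ?_
  calc eLpNorm (lowPass (2 ^ n) U) (ENNReal.ofReal p) volume
      ≤ eLpNorm (lowPass (2 ^ 0) U) (ENNReal.ofReal p) volume +
          ∑' j, eLpNorm (lowPass (2 ^ (j + 1)) U - lowPass (2 ^ j) U) (ENNReal.ofReal p) volume :=
        eLpNorm_le_add_tsum_eLpNorm_sub (w := fun n => lowPass (2 ^ n) U) hp₁ hmeas n
    _ ≤ K₀ * sobolevNorm σ U + ∑' j : ℕ, K₁ * sobolevNorm σ U * r ^ j := by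
        rw [pow_zero]
        exact add_le_add (hbase σ hσ₀.le U h.memLp_ft)
          (ENNReal.tsum_le_tsum (hstep σ hσ₀.le U h.memLp_ft))
    _ = (K₀ + K₁ * (1 - r)⁻¹) * sobolevNorm σ U := by
        rw [ENNReal.tsum_mul_left, ENNReal.tsum_geometric]
        ring

end Sobolev

section Symmetry

variable {d : ℕ} {U u v f : Rd d → ℂ} {R : ℝ}

/-- The index of the coordinate `x_d` fixed by `O(d-1)`. -/
def lastIndex (hd : 0 < d) : Fin d := ⟨d - 1, Nat.sub_one_lt_of_lt hd⟩

lemma eq_lastIndex_iff (hd : 0 < d) {i : Fin d} : i = lastIndex hd ↔ (i : ℕ) = d - 1 := Fin.ext_iff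

lemma blockSq_one_eq (hd : 0 < d) (x : Rd d) :
    blockSq d 1 x = ‖x‖ ^ 2 - x (lastIndex hd) ^ 2 := by
  rw [EuclideanSpace.norm_sq_eq, ← Finset.add_sum_erase _ _ (Finset.mem_univ (lastIndex hd)),
    Real.norm_eq_abs, sq_abs, add_sub_cancel_left, blockSq,
    ← Finset.add_sum_erase _ _ (Finset.mem_univ (lastIndex hd)),
    if_neg (show ¬ (lastIndex hd : ℕ) < d - 1 from lt_irrefl _), zero_add]
  refine Finset.sum_congr rfl fun i hi => ?_
  have hne : (i : ℕ) ≠ d - 1 := (eq_lastIndex_iff hd).not.1 (Finset.ne_of_mem_erase hi)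
  rw [if_pos (by omega), Real.norm_eq_abs, sq_abs]

lemma blockSq_nonneg (k : ℕ) (x : Rd d) : 0 ≤ blockSq d k x :=
  Finset.sum_nonneg fun _ _ => by positivity

lemma gSymmetric_iff (hd : 0 < d) :
    GSymmetric d f ↔ ∀ x y : Rd d, ‖x‖ = ‖y‖ → x (lastIndex hd) = y (lastIndex hd) → f x = f y := by
  refine forall₂_congr fun x y => ?_
  have hlast :
      (∀ i : Fin d, (i : ℕ) = d - 1 → x i = y i) ↔ x (lastIndex hd) = y (lastIndex hd) := by
    simp only [← eq_lastIndex_iff hd, forall_eq]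
  have hnorm : x (lastIndex hd) = y (lastIndex hd) →
      (blockSq d 1 x = blockSq d 1 y ↔ ‖x‖ = ‖y‖) := fun h => by
    rw [blockSq_one_eq hd, blockSq_one_eq hd, h, sub_left_inj,
      pow_left_inj₀ (norm_nonneg _) (norm_nonneg _) two_ne_zero]
  grind

namespace GSymmetric

lemma const_mul (hu : GSymmetric d u) (a : ℂ) : GSymmetric d (fun x => a * u x) :=
  fun x y hblock hlast => congrArg (a * ·) (hu x y hblock hlast)

lemma sub (hu : GSymmetric d u) (hv : GSymmetric d v) : GSymmetric d (u - v) :=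
  fun x y hblock hlast => congrArg₂ (· - ·) (hu x y hblock hlast) (hv x y hblock hlast)

lemma translate_lastIndex (hd : 0 < d) (hu : GSymmetric d u) (t : ℝ) :
    GSymmetric d (fun x => u (x + EuclideanSpace.single (lastIndex hd) t)) := by
  have hblock (x : Rd d) :
      blockSq d 1 (x + EuclideanSpace.single (lastIndex hd) t) = blockSq d 1 x := by
    refine Finset.sum_congr rfl fun i _ => if_ctx_congr Iff.rfl (fun hi => ?_) fun _ => rfl
    have hne : i ≠ lastIndex hd := (eq_lastIndex_iff hd).not.2 hi.ne
    simp [hne]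
  refine fun x y hxy hlast => hu _ _ (by rw [hblock, hblock, hxy]) fun i hi => ?_
  rw [PiLp.add_apply, PiLp.add_apply, hlast i hi]

end GSymmetric

lemma lowPass_eq_integral (hR : 0 < R) (U : Rd d → ℂ) (x : Rd d) :
    lowPass R U x = ∫ ξ, U ξ * modulate x (cutoffSchwartz hR) ξ := by
  rw [lowPass, fourierInv_apply_eq_integral_modulate]
  congr 1 with ξ
  simp only [modulate, cutoffMul, cutoffSchwartz_apply]
  ring

lemma lowPass_comp_linearIsometryEquiv (hR : 0 < R) (h : IsFT U u) (A : Rd d ≃ₗᵢ[ℝ] Rd d)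
    (hA : ∀ y, u (A y) = u y) (x : Rd d) : lowPass R U (A x) = lowPass R U x := by
  have hcutoff : ⇑(cutoffSchwartz (d := d) hR) ∘ A = cutoffSchwartz hR := by
    ext ξ
    simp only [Function.comp_apply, cutoffSchwartz_apply, cutoff, A.norm_map]
  simp only [lowPass_eq_integral hR, h.integral_mul_modulate]
  rw [← A.measurePreserving.integral_comp A.toHomeomorph.measurableEmbedding]
  congr 1 with y
  rw [hA, ← map_sub, ← Real.fourier_comp_linearIsometry, hcutoff]

lemma lowPass_modulate (hR : 0 < R) (U : Rd d → ℂ) (t x : Rd d) :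
    lowPass R (modulate t U) x = lowPass R U (x + t) := by
  simp only [lowPass_eq_integral hR]
  congr 1 with ξ
  simp only [modulate, inner_add_right, AddChar.map_add_eq_mul, Circle.coe_mul]
  ring

lemma reflection_sub_apply_lastIndex (hd : 0 < d) {x y : Rd d}
    (hxy : x (lastIndex hd) = y (lastIndex hd)) (z : Rd d) :
    (ℝ ∙ (x - y))ᗮ.reflection z (lastIndex hd) = z (lastIndex hd) := by
  set A := (ℝ ∙ (x - y))ᗮ.reflection
  set e : Rd d := EuclideanSpace.single (lastIndex hd) 1
  have hcoord (w : Rd d) : w (lastIndex hd) = ⟪e, w⟫ := by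
    simp [e, EuclideanSpace.inner_single_left]
  have hfixed : A e = e := by
    refine Submodule.reflection_mem_subspace_eq_self ?_
    rw [Submodule.mem_orthogonal_singleton_iff_inner_right, real_inner_comm, ← hcoord,
      PiLp.sub_apply, hxy, sub_self]
  rw [hcoord, hcoord, ← hfixed, A.inner_map_map, hfixed]

-- Points with equal norm and equal last coordinate are exchanged by a reflection fixing the axis.
lemma GSymmetric.lowPass (hd : 0 < d) (hR : 0 < R) (h : IsFT U u) (hu : GSymmetric d u) :
    GSymmetric d (lowPass R U) := by
  rw [gSymmetric_iff hd] at hu ⊢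
  intro x y hnorm hlast
  rw [← Submodule.reflection_sub hnorm]
  refine (lowPass_comp_linearIsometryEquiv hR h _ (fun z => ?_) x).symm
  exact hu _ _ (LinearIsometryEquiv.norm_map _ z) (reflection_sub_apply_lastIndex hd hlast z)

/-- The point of the unit circle at angle `θ` in the plane of the first two coordinates. -/
def circlePoint (hd : 2 ≤ d) (θ : ℝ) : Rd d :=
  EuclideanSpace.single ⟨0, by omega⟩ (cos θ) + EuclideanSpace.single ⟨1, by omega⟩ (sin θ)

lemma circlePoint_apply_zero (hd : 2 ≤ d) (θ : ℝ) : circlePoint hd θ ⟨0, by omega⟩ = cos θ := by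
  simp [circlePoint]

lemma circlePoint_apply_lastIndex (hd : 3 ≤ d) (θ : ℝ) :
    circlePoint (by omega : 2 ≤ d) θ (lastIndex (by omega)) = 0 := by
  have h0 : d - 1 ≠ 0 := by omega
  have h1 : d - 1 ≠ 1 := by omega
  simp [circlePoint, lastIndex, h0, h1]

lemma norm_circlePoint (hd : 2 ≤ d) (θ : ℝ) : ‖circlePoint hd θ‖ = 1 := by
  rw [← sq_eq_sq₀ (norm_nonneg _) zero_le_one, circlePoint, norm_add_sq_real]
  simp [EuclideanSpace.inner_single_left]

/-- The point at distance `r` from the last coordinate axis, height `t` and angle `θ`. -/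
def cylinderPoint (hd : 3 ≤ d) (r θ t : ℝ) : Rd d :=
  r • circlePoint (by omega) θ + EuclideanSpace.single (lastIndex (by omega)) t

lemma norm_cylinderPoint_sq (hd : 3 ≤ d) (r θ t : ℝ) :
    ‖cylinderPoint hd r θ t‖ ^ 2 = r ^ 2 + t ^ 2 := by
  rw [cylinderPoint, norm_add_sq_real, EuclideanSpace.inner_single_right, norm_smul,
    norm_circlePoint, PiLp.smul_apply, circlePoint_apply_lastIndex hd]
  simp

lemma cylinderPoint_apply_lastIndex (hd : 3 ≤ d) (r θ t : ℝ) :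
    cylinderPoint hd r θ t (lastIndex (by omega)) = t := by
  simp [cylinderPoint, circlePoint_apply_lastIndex hd]

lemma cylinderPoint_sub (hd : 3 ≤ d) (r θ θ' t : ℝ) :
    cylinderPoint hd r θ t - cylinderPoint hd r θ' t =
      r • (circlePoint (by omega) θ - circlePoint (by omega) θ') := by
  simp only [cylinderPoint, add_sub_add_right_eq_sub, smul_sub]

lemma GSymmetric.apply_cylinderPoint (hd : 3 ≤ d) (hf : GSymmetric d f) (x : Rd d) (θ : ℝ) :
    f (cylinderPoint hd √(blockSq d 1 x) θ (x (lastIndex (by omega)))) = f x := by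
  refine (gSymmetric_iff (by omega)).1 hf _ _ ?_ (cylinderPoint_apply_lastIndex hd _ _ _)
  rw [← sq_eq_sq₀ (norm_nonneg _) (norm_nonneg _), norm_cylinderPoint_sq,
    Real.sq_sqrt (blockSq_nonneg 1 x), blockSq_one_eq (by omega), sub_add_cancel]

end Symmetry

section RadialDecay

variable {d : ℕ} {ι : Type*} {φ U u : Rd d → ℂ} {R : ℝ}

/-- The kernel `K` of the Gram matrix `K (yᵢ - yⱼ)` of the modulations `modulate yᵢ φ` in `L²`. -/
def gramKernel (φ : Rd d → ℂ) : Rd d → ℂ := 𝓕 fun ξ => ((‖φ ξ‖ ^ 2 : ℝ) : ℂ)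

lemma conj_modulate_mul_modulate (φ : Rd d → ℂ) (y z ξ : Rd d) :
    starRingEnd ℂ (modulate y φ ξ) * modulate z φ ξ =
      𝐞 (-⟪ξ, y - z⟫) • ((‖φ ξ‖ ^ 2 : ℝ) : ℂ) := by
  have hchar : 𝐞 (-⟪ξ, y - z⟫) = (𝐞 ⟪ξ, y⟫)⁻¹ * 𝐞 ⟪ξ, z⟫ := by
    rw [inner_sub_right, neg_sub', sub_neg_eq_add, AddChar.map_add_eq_mul, AddChar.map_neg_eq_inv]
  rw [hchar, Circle.smul_def, Circle.coe_mul, Circle.coe_inv_eq_conj, smul_eq_mul,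
    Complex.ofReal_pow, ← Complex.conj_mul', modulate, modulate, map_mul]
  ring

lemma integral_norm_sum_modulate_sq_le [Fintype ι] (hφ : MemLp φ 2) (y : ι → Rd d) :
    ∫ ξ, ‖∑ i, modulate (y i) φ ξ‖ ^ 2 ≤ ∑ i, ∑ j, ‖gramKernel φ (y i - y j)‖ := by
  have hint (z : Rd d) : Integrable fun ξ => 𝐞 (-⟪ξ, z⟫) • ((‖φ ξ‖ ^ 2 : ℝ) : ℂ) :=
    (Real.fourierIntegral_convergent_iff z).2 (hφ.integrable_norm_pow two_ne_zero).ofReal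
  have hgram : ((∫ ξ, ‖∑ i, modulate (y i) φ ξ‖ ^ 2 : ℝ) : ℂ) =
      ∑ i, ∑ j, gramKernel φ (y i - y j) := by
    have hpointwise (ξ : Rd d) : ((‖∑ i, modulate (y i) φ ξ‖ ^ 2 : ℝ) : ℂ) =
        ∑ i, ∑ j, 𝐞 (-⟪ξ, y i - y j⟫) • ((‖φ ξ‖ ^ 2 : ℝ) : ℂ) := by
      rw [Complex.ofReal_pow, ← Complex.conj_mul', map_sum, Finset.sum_mul_sum]
      simp only [conj_modulate_mul_modulate]
    simp only [← integral_complex_ofReal, hpointwise, gramKernel, Real.fourier_eq]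
    rw [integral_finsetSum _ fun i _ => integrable_finsetSum _ fun j _ => hint _]
    exact Finset.sum_congr rfl fun i _ => integral_finsetSum _ fun j _ => hint _
  calc ∫ ξ, ‖∑ i, modulate (y i) φ ξ‖ ^ 2 = ‖∑ i, ∑ j, gramKernel φ (y i - y j)‖ := by
        rw [← hgram, Complex.norm_real, Real.norm_of_nonneg (by positivity)]
    _ ≤ ∑ i, ∑ j, ‖gramKernel φ (y i - y j)‖ :=
        norm_sum_le_of_le _ fun i _ => norm_sum_le _ _

lemma card_mul_norm_le_of_integral_mul_modulate_eq [Fintype ι] (hφ : MemLp φ 2) (hU : MemLp U 2)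
    (y : ι → Rd d) {a : ℂ} (ha : ∀ i, ∫ ξ, U ξ * modulate (y i) φ ξ = a) :
    Fintype.card ι * ‖a‖ ≤
      (eLpNorm U 2 volume).toReal * √(∑ i, ∑ j, ‖gramKernel φ (y i - y j)‖) := by
  have hsum : MemLp (fun ξ => ∑ i, modulate (y i) φ ξ) 2 :=
    memLp_finsetSum _ fun i _ => memLp_modulate hφ (y i)
  have htotal : ∫ ξ, U ξ * ∑ i, modulate (y i) φ ξ = Fintype.card ι * a := by
    simp only [Finset.mul_sum]
    have hint (i : ι) : Integrable fun ξ => U ξ * modulate (y i) φ ξ :=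
      hU.integrable_mul (memLp_modulate hφ (y i))
    rw [integral_finsetSum _ fun i _ => hint i]
    simp [ha]
  calc (Fintype.card ι : ℝ) * ‖a‖ = ‖∫ ξ, U ξ * ∑ i, modulate (y i) φ ξ‖ := by
        rw [htotal, norm_mul, Complex.norm_natCast]
    _ ≤ (eLpNorm U 2 volume).toReal *
          (eLpNorm (fun ξ => ∑ i, modulate (y i) φ ξ) 2 volume).toReal :=
        norm_integral_mul_le_of_memLp_two hU hsum
    _ ≤ _ := by
        gcongr
        refine Real.le_sqrt_of_sq_le ?_
        rw [toReal_eLpNorm_two_sq hsum]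
        exact integral_norm_sum_modulate_sq_le hφ y

lemma sum_sum_norm_gramKernel_le [Fintype ι] {y : ι → Rd d} {δ : ℝ} (hδ : 0 ≤ δ)
    (hy : ∀ i j, i ≠ j → ‖gramKernel φ (y i - y j)‖ ≤ δ) :
    ∑ i, ∑ j, ‖gramKernel φ (y i - y j)‖ ≤
      Fintype.card ι * ‖gramKernel φ 0‖ + Fintype.card ι ^ 2 * δ := by
  classical
  calc ∑ i, ∑ j, ‖gramKernel φ (y i - y j)‖
      ≤ ∑ i : ι, ∑ j : ι, ((if i = j then ‖gramKernel φ 0‖ else 0) + δ) := by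
        gcongr with i _ j _
        by_cases hij : i = j
        · simpa [hij] using hδ
        · simpa [hij] using hy i j hij
    _ = _ := by
        simp only [Finset.sum_add_distrib, Finset.sum_ite_eq, Finset.mem_univ, if_true,
          Finset.sum_const, Finset.card_univ, nsmul_eq_mul]
        ring

lemma eventually_norm_gramKernel_smul_sub_le [Finite ι] (φ : Rd d → ℂ) {w : ι → Rd d}
    (hw : Function.Injective w) {δ : ℝ} (hδ : 0 < δ) :
    ∀ᶠ r : ℝ in atTop, ∀ i j, i ≠ j → ‖gramKernel φ (r • (w i - w j))‖ ≤ δ := by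
  refine eventually_all.2 fun i => eventually_all.2 fun j => ?_
  by_cases hij : i = j
  · exact Eventually.of_forall fun _ h => absurd hij h
  have hescape : Tendsto (fun r : ℝ => r • (w i - w j)) atTop (cocompact (Rd d)) := by
    rw [← Metric.cobounded_eq_cocompact, ← tendsto_norm_atTop_iff_cobounded]
    simpa only [norm_smul, Real.norm_eq_abs] using
      tendsto_abs_atTop_atTop.atTop_mul_const (norm_pos_iff.2 (sub_ne_zero.2 (hw.ne hij)))
  have hdecay := ((tendsto_integral_exp_inner_smul_cocompact
    fun ξ : Rd d => ((‖φ ξ‖ ^ 2 : ℝ) : ℂ)).comp hescape).norm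
  rw [norm_zero] at hdecay
  exact (hdecay.eventually_le_const hδ).mono fun r hr _ => hr

-- Equal coefficients against many almost orthogonal modulations must be small (Bessel).
lemma exists_card_forall_norm_le_of_integral_mul_modulate_eq (hφ : MemLp φ 2) {η : ℝ}
    (hη : 0 < η) : ∃ N : ℕ, ∀ w : Fin N → Rd d, Function.Injective w → ∀ᶠ r : ℝ in atTop,
      ∀ (U : Rd d → ℂ) (y : Fin N → Rd d) (a : ℂ), MemLp U 2 →
        (∀ i j, y i - y j = r • (w i - w j)) → (∀ i, ∫ ξ, U ξ * modulate (y i) φ ξ = a) →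
        ‖a‖ ≤ η * (eLpNorm U 2 volume).toReal := by
  obtain ⟨N, hN⟩ := exists_nat_gt (‖gramKernel φ 0‖ / (η ^ 2 / 2))
  have hNpos : (0 : ℝ) < N := lt_of_le_of_lt (by positivity) hN
  rw [div_lt_iff₀ (by positivity)] at hN
  refine ⟨N, fun w hw => ?_⟩
  filter_upwards [eventually_norm_gramKernel_smul_sub_le φ hw (δ := η ^ 2 / 2) (by positivity)]
    with r hr U y a hU hy ha
  have hgram := sum_sum_norm_gramKernel_le (φ := φ) (y := y) (δ := η ^ 2 / 2) (by positivity)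
    fun i j hij => by rw [hy]; exact hr i j hij
  have hbessel := card_mul_norm_le_of_integral_mul_modulate_eq hφ hU y ha
  rw [Fintype.card_fin] at hgram hbessel
  have hsqrt : √(∑ i, ∑ j, ‖gramKernel φ (y i - y j)‖) ≤ N * η :=
    Real.sqrt_le_iff.2 ⟨by positivity, hgram.trans (by nlinarith)⟩
  refine le_of_mul_le_mul_left ?_ hNpos
  calc N * ‖a‖ ≤ (eLpNorm U 2 volume).toReal * (N * η) := hbessel.trans (by gcongr)
    _ = N * (η * (eLpNorm U 2 volume).toReal) := by ring

lemma injective_circlePoint_div (hd : 2 ≤ d) (N : ℕ) :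
    Function.Injective fun i : Fin N => circlePoint hd ((i : ℝ) / N) := by
  intro i j hij
  have hNpos : (0 : ℝ) < N := by exact_mod_cast i.pos
  have hmem (k : Fin N) : (k : ℝ) / N ∈ Set.Icc 0 π := by
    have hk : (k : ℝ) / N ≤ 1 := (div_le_one hNpos).2 (by exact_mod_cast k.2.le)
    exact ⟨by positivity, hk.trans (by linarith [Real.pi_gt_three])⟩
  have hcos : cos ((i : ℝ) / N) = cos ((j : ℝ) / N) := by
    rw [← circlePoint_apply_zero hd, ← circlePoint_apply_zero hd]
    exact congrArg (fun x : Rd d => x ⟨0, by omega⟩) hij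
  have hdiv := Real.injOn_cos (hmem i) (hmem j) hcos
  rw [div_left_inj' hNpos.ne'] at hdiv
  exact Fin.ext (by exact_mod_cast hdiv)

lemma exists_radius_norm_lowPass_le (hd : 3 ≤ d) (hR : 0 < R) {η : ℝ} (hη : 0 < η) :
    ∃ r₀ : ℝ, ∀ U u : Rd d → ℂ, MemLp U 2 → IsFT U u → GSymmetric d u →
      ∀ x, r₀ ≤ √(blockSq d 1 x) → ‖lowPass R U x‖ ≤ η * (eLpNorm U 2 volume).toReal := by
  obtain ⟨N, hN⟩ := exists_card_forall_norm_le_of_integral_mul_modulate_eq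
    ((cutoffSchwartz (d := d) hR).memLp 2) hη
  obtain ⟨r₀, hr₀⟩ := eventually_atTop.1 (hN _ (injective_circlePoint_div (by omega) N))
  refine ⟨r₀, fun U u hU h hu x hx => hr₀ _ hx U
    (fun i => cylinderPoint hd √(blockSq d 1 x) ((i : ℝ) / N) (x (lastIndex (by omega)))) _ hU
    (fun i j => cylinderPoint_sub hd _ _ _ _) fun i => ?_⟩
  rw [← lowPass_eq_integral hR, (hu.lowPass (by omega) hR h).apply_cylinderPoint hd]

end RadialDecay

section Concentration

lemma exists_pos_exists_le_norm_of_le_eLpNorm {α E : Type*} [MeasurableSpace α] {μ : Measure α}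
    [NormedAddCommGroup E] {p q : ℝ} (hq : 0 < q) (hqp : q < p) {a M : ℝ≥0∞} (ha : a ≠ 0)
    (hM : M ≠ ⊤) : ∃ b : ℝ, 0 < b ∧ ∀ f : α → E, eLpNorm f (ENNReal.ofReal q) μ ≤ M →
      a ≤ eLpNorm f (ENNReal.ofReal p) μ → ∃ x, b ≤ ‖f x‖ := by
  have hp : 0 < p := hq.trans hqp
  have hexp : 0 < 1 - q / p := sub_pos.2 ((div_lt_one hp).2 hqp)
  have hsmall : Tendsto (fun b : ℝ => ENNReal.ofReal b ^ (1 - q / p) * M ^ (q / p)) (𝓝[>] 0)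
      (𝓝 0) := by
    have hrpow := ((ENNReal.continuous_rpow_const (y := 1 - q / p)).comp
      ENNReal.continuous_ofReal).tendsto 0
    rw [Function.comp_apply, ENNReal.ofReal_zero, ENNReal.zero_rpow_of_pos hexp] at hrpow
    have hfin : M ^ (q / p) ≠ ⊤ := ENNReal.rpow_ne_top_of_nonneg (by positivity) hM
    simpa using (ENNReal.Tendsto.mul_const hrpow (Or.inr hfin)).mono_left nhdsWithin_le_nhds
  obtain ⟨b, hbsmall, hb⟩ :=
    ((hsmall.eventually_lt_const (pos_iff_ne_zero.2 ha)).and self_mem_nhdsWithin).exists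
  refine ⟨b, hb, fun f hfM haf => ?_⟩
  by_contra! hlt
  refine hbsmall.not_ge (haf.trans ?_)
  calc eLpNorm f (ENNReal.ofReal p) μ
      ≤ ENNReal.ofReal b ^ (1 - q / p) * eLpNorm f (ENNReal.ofReal q) μ ^ (q / p) :=
        eLpNorm_le_rpow_mul_eLpNorm_rpow hq hqp.le ENNReal.ofReal_ne_top
          (Eventually.of_forall fun x => by
            rw [← ofReal_norm]
            exact ENNReal.ofReal_le_ofReal (hlt x).le)
    _ ≤ ENNReal.ofReal b ^ (1 - q / p) * M ^ (q / p) := by gcongr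

variable {d : ℕ} {p s : ℝ} {M : ℝ≥0∞}

lemma pos_of_mul_half_sub_one_div_lt (hp : 2 < p) (hs : d * (1 / 2 - 1 / p) < s) : 0 < s := by
  have : 1 / p < 1 / 2 := one_div_lt_one_div_of_lt two_pos hp
  exact lt_of_le_of_lt (mul_nonneg (Nat.cast_nonneg d) (by linarith)) hs

lemma tendsto_ofReal_rpow_neg_mul_atTop {y : ℝ} (hy : 0 < y) (hM : M ≠ ⊤) :
    Tendsto (fun R : ℝ => ENNReal.ofReal (R ^ (-y)) * M) atTop (𝓝 0) := by
  simpa using ENNReal.Tendsto.mul_const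
    (ENNReal.tendsto_ofReal (tendsto_rpow_neg_atTop hy)) (Or.inr hM)

lemma exists_radius_eLpNorm_sub_lowPass_le (hp : 2 < p) (hs : d * (1 / 2 - 1 / p) < s)
    (hM : M ≠ ⊤) {δ : ℝ≥0∞} (hδ : δ ≠ 0) :
    ∃ R > 0, ∀ U u : Rd d → ℂ, L2FourierPair U u → sobolevNorm s U ≤ M →
      eLpNorm (u - lowPass R U) (ENNReal.ofReal p) ≤ δ := by
  obtain ⟨σ, hσ, hσs⟩ := exists_between hs
  obtain ⟨K, hK, hsobolev⟩ := exists_sobolev_const hp hσ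
  have htail := tendsto_ofReal_rpow_neg_mul_atTop (sub_pos.2 hσs) (ENNReal.mul_ne_top hK hM)
  obtain ⟨R, hRδ, hR⟩ :=
    ((htail.eventually_le_const (pos_iff_ne_zero.2 hδ)).and (eventually_gt_atTop 0)).exists
  refine ⟨R, hR, fun U u h hUM => ?_⟩
  have hbound : sobolevNorm σ (U - cutoffMul R U) ≤ ENNReal.ofReal (R ^ (-(s - σ))) * M := by
    rw [neg_sub]
    exact (sobolevNorm_sub_cutoffMul_le hR hσs.le U).trans (by gcongr)
  calc eLpNorm (u - lowPass R U) (ENNReal.ofReal p) volume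
      ≤ K * sobolevNorm σ (U - cutoffMul R U) :=
        hsobolev _ _ (h.sub (l2FourierPair_lowPass hR h.memLp_ft))
          (ne_top_of_le_ne_top (by finiteness) hbound)
    _ ≤ K * (ENNReal.ofReal (R ^ (-(s - σ))) * M) := by gcongr
    _ = ENNReal.ofReal (R ^ (-(s - σ))) * (K * M) := by ring
    _ ≤ δ := hRδ

lemma exists_le_norm_lowPass_of_le_eLpNorm (hp : 2 < p) (hs : d * (1 / 2 - 1 / p) < s)
    (hM : M ≠ ⊤) {a : ℝ≥0∞} (ha : a ≠ 0) (ha' : a ≠ ⊤) :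
    ∃ R > 0, ∃ b > 0, ∀ U u : Rd d → ℂ, L2FourierPair U u → sobolevNorm s U ≤ M →
      a ≤ eLpNorm u (ENNReal.ofReal p) → ∃ x, b ≤ ‖lowPass R U x‖ := by
  have hs0 := (pos_of_mul_half_sub_one_div_lt hp hs).le
  obtain ⟨R, hR, htail⟩ :=
    exists_radius_eLpNorm_sub_lowPass_le hp hs hM (ENNReal.half_pos ha).ne'
  obtain ⟨b, hb, hlarge⟩ := exists_pos_exists_le_norm_of_le_eLpNorm (α := Rd d) (E := ℂ)
    (μ := volume) two_pos hp (ENNReal.half_pos ha).ne' hM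
  refine ⟨R, hR, b, hb, fun U u h hUM hau => hlarge (lowPass R U) ?_ ?_⟩
  · rw [ENNReal.ofReal_ofNat]
    exact (eLpNorm_two_lowPass_le hR h.memLp_ft).trans
      ((eLpNorm_two_le_sobolevNorm hs0 U).trans hUM)
  · have hlow := l2FourierPair_lowPass hR h.memLp_ft
    have hsplit : a / 2 + a / 2 ≤ a / 2 + eLpNorm (lowPass R U) (ENNReal.ofReal p) := calc
      a / 2 + a / 2 ≤ eLpNorm (u - lowPass R U + lowPass R U) (ENNReal.ofReal p) volume := by
        rwa [ENNReal.add_halves, sub_add_cancel]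
      _ ≤ eLpNorm (u - lowPass R U) (ENNReal.ofReal p) volume +
            eLpNorm (lowPass R U) (ENNReal.ofReal p) volume :=
        eLpNorm_add_le (h.memLp.sub hlow.memLp).1 hlow.memLp.1
          (ENNReal.one_le_ofReal.2 (by linarith))
      _ ≤ _ := by
        gcongr
        exact htail U u h hUM
    exact (ENNReal.add_le_add_iff_left (by finiteness)).1 hsplit

-- Radial decay forces the point of nonvanishing near the axis, along which we may translate.
lemma exists_concentration (hd : 3 ≤ d) (hp : 2 < p) (hs : d * (1 / 2 - 1 / p) < s)
    (hM : M ≠ ⊤) {a : ℝ≥0∞} (ha : a ≠ 0) (ha' : a ≠ ⊤) :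
    ∃ R > 0, ∃ b > 0, ∃ r₀ : ℝ, ∀ U u : Rd d → ℂ, L2FourierPair U u → GSymmetric d u →
      sobolevNorm s U ≤ M → a ≤ eLpNorm u (ENNReal.ofReal p) →
      ∃ t : ℝ, ∃ y : Rd d, ‖y‖ ≤ r₀ ∧
        b ≤ ‖lowPass R (modulate (EuclideanSpace.single (lastIndex (by omega)) t) U) y‖ := by
  obtain ⟨R, hR, b, hb, hlarge⟩ := exists_le_norm_lowPass_of_le_eLpNorm hp hs hM ha ha'
  obtain ⟨r₀, hdecay⟩ :=
    exists_radius_norm_lowPass_le hd hR (η := b / (M.toReal + 1)) (by positivity)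
  refine ⟨R, hR, b, hb, r₀, fun U u h hu hUM hau => ?_⟩
  obtain ⟨x, hx⟩ := hlarge U u h hUM hau
  have hUM' : (eLpNorm U 2 volume).toReal ≤ M.toReal := ENNReal.toReal_mono hM
    ((eLpNorm_two_le_sobolevNorm (pos_of_mul_half_sub_one_div_lt hp hs).le U).trans hUM)
  have hnear : √(blockSq d 1 x) < r₀ := by
    by_contra! hfar
    have hsmall : b / (M.toReal + 1) * (eLpNorm U 2 volume).toReal < b := by
      rw [div_mul_eq_mul_div, div_lt_iff₀ (by positivity)]
      exact mul_lt_mul_of_pos_left (by linarith) hb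
    exact hsmall.not_ge (hx.trans (hdecay U u h.memLp_ft h.isFT hu x hfar))
  have hnorm : ‖cylinderPoint hd √(blockSq d 1 x) 0 0‖ = √(blockSq d 1 x) := by
    rw [← sq_eq_sq₀ (norm_nonneg _) (Real.sqrt_nonneg _), norm_cylinderPoint_sq]
    ring
  refine ⟨x (lastIndex (by omega)), cylinderPoint hd √(blockSq d 1 x) 0 0, hnorm.trans_le hnear.le,
    ?_⟩
  have haxis : cylinderPoint hd √(blockSq d 1 x) 0 0 +
      EuclideanSpace.single (lastIndex (by omega)) (x (lastIndex (by omega))) =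
      cylinderPoint hd √(blockSq d 1 x) 0 (x (lastIndex (by omega))) := by
    simp [cylinderPoint]
  rwa [lowPass_modulate hR, haxis, (hu.lowPass (by omega) hR h.isFT).apply_cylinderPoint hd]

end Concentration

section WeakLimits

variable {d : ℕ} {R s : ℝ} {M : ℝ≥0∞} {V v : ℕ → Rd d → ℂ} {W w φ : Rd d → ℂ}

lemma tendsto_eLpNorm_modulate_sub (hφ : MemLp φ 2) {y : ℕ → Rd d} {z : Rd d}
    (hy : Tendsto y atTop (𝓝 z)) :
    Tendsto (fun n => (eLpNorm (modulate (y n) φ - modulate z φ) 2).toReal) atTop (𝓝 0) := by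
  have hmem (n : ℕ) : MemLp (modulate (y n) φ - modulate z φ) 2 :=
    (memLp_modulate hφ _).sub (memLp_modulate hφ _)
  have hlim : Tendsto (fun n => ∫ ξ, ‖(modulate (y n) φ - modulate z φ) ξ‖ ^ 2) atTop
      (𝓝 (∫ _ : Rd d, (0 : ℝ))) := by
    refine tendsto_integral_of_dominated_convergence (fun ξ => 4 * ‖φ ξ‖ ^ 2)
      (fun n => (hmem n).1.norm.pow 2) ((hφ.integrable_norm_pow two_ne_zero).const_mul 4)
      (fun n => Eventually.of_forall fun ξ => ?_) (Eventually.of_forall fun ξ => ?_)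
    · have htriangle : ‖(modulate (y n) φ - modulate z φ) ξ‖ ≤ 2 * ‖φ ξ‖ := by
        refine (norm_sub_le _ _).trans_eq ?_
        rw [norm_modulate, norm_modulate, two_mul]
      rw [norm_pow, norm_norm]
      calc _ ≤ (2 * ‖φ ξ‖) ^ 2 := by gcongr
        _ = 4 * ‖φ ξ‖ ^ 2 := by ring
    · have hcont : Continuous fun t : Rd d => ‖modulate t φ ξ - modulate z φ ξ‖ ^ 2 := by
        unfold modulate
        fun_prop
      simpa [Function.comp_def] using (hcont.tendsto z).comp hy
  have hsqrt := hlim.sqrt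
  rw [integral_zero, Real.sqrt_zero] at hsqrt
  refine hsqrt.congr fun n => ?_
  rw [← toReal_eLpNorm_two_sq (hmem n), Real.sqrt_sq ENNReal.toReal_nonneg]

lemma TendstoWeaklyL2.not_ae_eq_zero_of_le_norm_lowPass (hVW : TendstoWeaklyL2 V W volume)
    (hR : 0 < R) {b r₀ K : ℝ} (hb : 0 < b) (hV : ∀ n, MemLp (V n) 2)
    (hK : ∀ n, (eLpNorm (V n) 2 volume).toReal ≤ K) {y : ℕ → Rd d} (hy : ∀ n, ‖y n‖ ≤ r₀)
    (hby : ∀ n, b ≤ ‖lowPass R (V n) (y n)‖) : ¬ W =ᵐ[volume] fun _ => (0 : ℂ) := by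
  intro hW
  obtain ⟨z, -, ψ, hψ, hz⟩ := (isCompact_closedBall (0 : Rd d) r₀).tendsto_subseq
    (x := y) fun n => by simpa using hy n
  have hcut := (cutoffSchwartz (d := d) hR).memLp 2 volume
  have hlim := (hVW.comp_tendsto hψ.tendsto_atTop).integral_mul_tendsto_of_tendsto_eLpNorm
    (fun n => hV (ψ n)) (fun n => hK (ψ n)) (fun n => memLp_modulate hcut (y (ψ n)))
    (memLp_modulate hcut z) (tendsto_eLpNorm_modulate_sub hcut hz)
  have hzero : ∫ ξ, W ξ * modulate z (cutoffSchwartz hR) ξ = 0 :=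
    integral_eq_zero_of_ae (hW.mono fun ξ hξ => by simp [hξ])
  rw [hzero] at hlim
  have hnorm := hlim.norm
  rw [norm_zero] at hnorm
  refine hb.not_ge (ge_of_tendsto' hnorm fun n => ?_)
  rw [← lowPass_eq_integral hR]
  exact hby (ψ n)

lemma TendstoWeaklyL2.tendsto_lowPass_sub (hVW : TendstoWeaklyL2 V W volume) (hR : 0 < R)
    (hV : ∀ n, MemLp (V n) 2) (hW : MemLp W 2) (x : Rd d) :
    Tendsto (fun n => lowPass R (V n - W) x) atTop (𝓝 0) := by
  have hmod := memLp_modulate ((cutoffSchwartz (d := d) hR).memLp 2 volume) x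
  have hlim := (hVW _ hmod).sub_const (∫ ξ, W ξ * modulate x (cutoffSchwartz hR) ξ)
  rw [sub_self] at hlim
  refine hlim.congr fun n => ?_
  have hVint : Integrable fun ξ => V n ξ * modulate x (cutoffSchwartz hR) ξ :=
    (hV n).integrable_mul hmod
  have hWint : Integrable fun ξ => W ξ * modulate x (cutoffSchwartz hR) ξ :=
    hW.integrable_mul hmod
  simp only [lowPass_eq_integral hR, Pi.sub_apply, sub_mul, integral_sub hVint hWint]

-- Rellich: low frequencies converge pointwise, high frequencies are uniformly small in `L²`.
lemma TendstoWeaklyL2.exists_subseq_tendsto_ae (hVW : TendstoWeaklyL2 V W volume) (hs : 0 < s)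
    (hM : M ≠ ⊤) (hv : ∀ n, L2FourierPair (V n) (v n)) (hw : L2FourierPair W w)
    (hVM : ∀ n, sobolevNorm s (V n - W) ≤ M) :
    ∃ ψ : ℕ → ℕ, StrictMono ψ ∧ ∀ᵐ x, Tendsto (fun n => v (ψ n) x) atTop (𝓝 (w x)) := by
  have hsub (n : ℕ) : L2FourierPair (V n - W) (v n - w) := (hv n).sub hw
  obtain ⟨ψ, hψ, hae⟩ := exists_subseq_tendsto_ae_of_approx (μ := (volume : Measure (Rd d)))
    two_ne_zero ENNReal.ofNat_ne_top (fun n => (hsub n).memLp.1) fun δ hδ => by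
      obtain ⟨R, hRδ, hR⟩ := (((tendsto_ofReal_rpow_neg_mul_atTop hs hM).eventually_le_const
        hδ).and (eventually_gt_atTop 0)).exists
      exact ⟨fun n => lowPass R (V n - W),
        fun n => (l2FourierPair_lowPass hR (hsub n).memLp_ft).memLp.1,
        Eventually.of_forall fun x =>
          hVW.tendsto_lowPass_sub hR (fun n => (hv n).memLp_ft) hw.memLp_ft x,
        fun n => ((hsub n).eLpNorm_two_sub_lowPass_le hR hs.le).trans
          ((mul_le_mul_right (hVM n) _).trans hRδ)⟩
  refine ⟨ψ, hψ, hae.mono fun x hx => ?_⟩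
  simpa using hx.add_const (w x)

end WeakLimits

section SobolevSymbol

/-- `g` is comparable to `(1 + r²)^s`, the symbol of the squared `H^s` norm, with explicit
constants. -/
structure IsSobolevSymbol (s c C : ℝ) (g : ℝ → ℝ) : Prop where
  measurable : Measurable g
  const_pos : 0 < c
  lower : ∀ r, 0 ≤ r → c * (1 + r ^ 2) ^ s ≤ g r
  upper : ∀ r, 0 ≤ r → g r ≤ C * (1 + r ^ 2) ^ s

variable {s c C r : ℝ} {g : ℝ → ℝ}

namespace IsSobolevSymbol

lemma pos (hg : IsSobolevSymbol s c C g) (hr : 0 ≤ r) : 0 < g r :=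
  (mul_pos hg.const_pos (by positivity)).trans_le (hg.lower r hr)

lemma sqrt_mul_rpow_le_sqrt (hg : IsSobolevSymbol s c C g) (hr : 0 ≤ r) :
    √c * (1 + r ^ 2) ^ (s / 2) ≤ √(g r) := by
  refine Real.le_sqrt_of_sq_le ?_
  rw [mul_pow, Real.sq_sqrt hg.const_pos.le, ← Real.rpow_mul_natCast (by positivity),
    Nat.cast_ofNat, div_mul_cancel₀ s two_ne_zero]
  exact hg.lower r hr

lemma sqrt_const_le_sqrt (hg : IsSobolevSymbol s c C g) (hs : 0 ≤ s) (hr : 0 ≤ r) :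
    √c ≤ √(g r) :=
  (le_mul_of_one_le_right (Real.sqrt_nonneg _)
    (Real.one_le_rpow (by nlinarith) (by linarith))).trans (hg.sqrt_mul_rpow_le_sqrt hr)

end IsSobolevSymbol

lemma rpow_one_add_sq_le_two_rpow_mul (hs : 0 ≤ s) (hr : 0 ≤ r) :
    (1 + r ^ 2) ^ s ≤ 2 ^ s * (1 + r ^ (2 * s)) := by
  rw [Real.rpow_mul hr, Real.rpow_two]
  calc (1 + r ^ 2) ^ s ≤ (2 * max 1 (r ^ 2)) ^ s := by
        gcongr
        linarith [le_max_left 1 (r ^ 2), le_max_right 1 (r ^ 2)]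
    _ = 2 ^ s * max 1 (r ^ 2) ^ s := Real.mul_rpow zero_le_two (by positivity)
    _ ≤ 2 ^ s * (1 + (r ^ 2) ^ s) := by
        gcongr
        have hr_rpow : 0 ≤ (r ^ 2) ^ s := by positivity
        rcases max_choice 1 (r ^ 2) with hmax | hmax <;> rw [hmax]
        · rw [Real.one_rpow]; linarith
        · linarith

lemma rpow_two_mul_le_rpow_one_add_sq (hs : 0 ≤ s) (hr : 0 ≤ r) :
    r ^ (2 * s) ≤ (1 + r ^ 2) ^ s := by
  rw [Real.rpow_mul hr, Real.rpow_two]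
  gcongr
  linarith

variable {γ ε : ℝ} {G : ℝ → ℝ → ℝ}

namespace IsAdmissible

lemma lower_bound (hG : IsAdmissible s γ c C G) (hs : 0 ≤ s) (hc : 0 < c)
    (hε : ε ∈ Set.Ioo (0 : ℝ) 1) (hr : 0 ≤ r) :
    min (c * ε / 4 ^ s) (c / 2 ^ s) * (1 + r ^ 2) ^ s ≤ G ε r := by
  obtain ⟨-, -, hfar, hnear⟩ := hG
  have hε₀ : 0 < ε := hε.1
  rcases le_total |r - 1| (1 / 2) with hr₁ | hr₁
  · have hr₄ : 1 + r ^ 2 ≤ 4 := by nlinarith [abs_le.1 hr₁]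
    calc _ ≤ c * ε / 4 ^ s * 4 ^ s := by gcongr; exact min_le_left _ _
      _ = c * (ε + 0) := by field_simp; ring
      _ ≤ c * (ε + |r - 1| ^ γ) := by gcongr; positivity
      _ ≤ G ε r := (hnear ε hε r hr₁).1
  · calc _ ≤ c / 2 ^ s * (2 ^ s * (1 + r ^ (2 * s))) := by
          gcongr
          · exact min_le_right _ _
          · exact rpow_one_add_sq_le_two_rpow_mul hs hr
      _ = c * (1 + |r| ^ (2 * s)) := by rw [abs_of_nonneg hr]; field_simp
      _ ≤ G ε r := (hfar ε hε r hr₁).1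

lemma upper_bound (hG : IsAdmissible s γ c C G) (hs : 0 ≤ s) (hγ : 0 ≤ γ) (hC : 0 ≤ C)
    (hε : ε ∈ Set.Ioo (0 : ℝ) 1) (hr : 0 ≤ r) : G ε r ≤ 2 * C * (1 + r ^ 2) ^ s := by
  obtain ⟨-, -, hfar, hnear⟩ := hG
  have hweight : 1 ≤ (1 + r ^ 2) ^ s := Real.one_le_rpow (by nlinarith) hs
  rw [mul_comm 2 C, mul_assoc]
  rcases le_total |r - 1| (1 / 2) with hr₁ | hr₁
  · refine (hnear ε hε r hr₁).2.trans ?_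
    have hpow : |r - 1| ^ γ ≤ 1 := Real.rpow_le_one (abs_nonneg _) (by linarith) hγ
    gcongr
    linarith [hε.2]
  · refine (hfar ε hε r hr₁).2.trans ?_
    rw [abs_of_nonneg hr]
    gcongr
    linarith [rpow_two_mul_le_rpow_one_add_sq hs hr]

lemma isSobolevSymbol (hG : IsAdmissible s γ c C G) (hs : 0 ≤ s) (hγ : 0 ≤ γ) (hc : 0 < c)
    (hC : 0 ≤ C) (hε : ε ∈ Set.Ioo (0 : ℝ) 1) :
    IsSobolevSymbol s (min (c * ε / 4 ^ s) (c / 2 ^ s)) (2 * C) (G ε) where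
  measurable := hG.1 ε hε
  const_pos := by
    have hε₀ : 0 < ε := hε.1
    positivity
  lower _ hr := hG.lower_bound hs hc hε hr
  upper _ hr := hG.upper_bound hs hγ hC hε hr

end IsAdmissible

end SobolevSymbol

section Energy

variable {d : ℕ} {s c C : ℝ} {g : ℝ → ℝ} {U V u v : Rd d → ℂ}

/-- The Fourier multiplier with symbol `√g(|ξ|)`, acting on Fourier transforms: the quadratic form
`q_ε(u)` is the squared `L²` norm of `symbolMul g û`. -/
def symbolMul (g : ℝ → ℝ) (U : Rd d → ℂ) (ξ : Rd d) : ℂ := (√(g ‖ξ‖) : ℂ) * U ξ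

/-- The square root `q_ε(u)^{1/2}` of the quadratic form at a function with Fourier
transform `U`. -/
def energyNorm (g : ℝ → ℝ) (U : Rd d → ℂ) : ℝ := (eLpNorm (symbolMul g U) 2 volume).toReal

/-- A function in the form domain of `q_ε` together with its Fourier transform. -/
structure FiniteEnergyPair (g : ℝ → ℝ) (U u : Rd d → ℂ) : Prop extends L2FourierPair U u where
  memLp_symbolMul : MemLp (symbolMul g U) 2

lemma norm_symbolMul (g : ℝ → ℝ) (U : Rd d → ℂ) (ξ : Rd d) :
    ‖symbolMul g U ξ‖ = √(g ‖ξ‖) * ‖U ξ‖ := by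
  rw [symbolMul, norm_mul, Complex.norm_real, Real.norm_of_nonneg (Real.sqrt_nonneg _)]

lemma symbolMul_sub (g : ℝ → ℝ) (U V : Rd d → ℂ) :
    symbolMul g (U - V) = symbolMul g U - symbolMul g V :=
  funext fun _ => mul_sub _ _ _

lemma symbolMul_const_mul (g : ℝ → ℝ) (U : Rd d → ℂ) (a : ℂ) :
    symbolMul g (fun ξ => a * U ξ) = fun ξ => a * symbolMul g U ξ :=
  funext fun _ => mul_left_comm _ _ _

lemma symbolMul_modulate (g : ℝ → ℝ) (U : Rd d → ℂ) (t : Rd d) :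
    symbolMul g (modulate t U) = modulate t (symbolMul g U) :=
  funext fun _ => mul_left_comm _ _ _

lemma energyNorm_nonneg (g : ℝ → ℝ) (U : Rd d → ℂ) : 0 ≤ energyNorm g U := ENNReal.toReal_nonneg

lemma energyNorm_const_mul (g : ℝ → ℝ) (U : Rd d → ℂ) (a : ℂ) :
    energyNorm g (fun ξ => a * U ξ) = ‖a‖ * energyNorm g U := by
  have hnorm := eLpNorm_const_smul a (symbolMul g U) 2 volume
  rw [energyNorm, symbolMul_const_mul, energyNorm, ← toReal_enorm, ← ENNReal.toReal_mul, ← hnorm]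
  rfl

lemma energyNorm_modulate (g : ℝ → ℝ) (U : Rd d → ℂ) (t : Rd d) :
    energyNorm g (modulate t U) = energyNorm g U := by
  rw [energyNorm, symbolMul_modulate, energyNorm]
  exact congrArg ENNReal.toReal
    (eLpNorm_congr_norm_ae (ae_of_all _ fun ξ => norm_modulate t (symbolMul g U) ξ))

lemma LpN_nonneg (p : ℝ) (u : Rd d → ℂ) : 0 ≤ LpN p u := ENNReal.toReal_nonneg

lemma LpN_const_mul (p : ℝ) (u : Rd d → ℂ) (a : ℂ) :
    LpN p (fun x => a * u x) = ‖a‖ * LpN p u := by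
  have hnorm := eLpNorm_const_smul a u (ENNReal.ofReal p) volume
  rw [LpN, LpN, ← toReal_enorm, ← ENNReal.toReal_mul, ← hnorm]
  rfl

lemma LpN_translate (p : ℝ) (hu : AEStronglyMeasurable u volume) (t : Rd d) :
    LpN p (fun x => u (x + t)) = LpN p u :=
  congrArg ENNReal.toReal
    (eLpNorm_comp_measurePreserving hu (measurePreserving_add_right volume t))

namespace IsSobolevSymbol

lemma norm_symbolMul_sq (hg : IsSobolevSymbol s c C g) (U : Rd d → ℂ) (ξ : Rd d) :
    ‖symbolMul g U ξ‖ ^ 2 = ‖U ξ‖ ^ 2 * g ‖ξ‖ := by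
  rw [norm_symbolMul, mul_pow, Real.sq_sqrt (hg.pos (norm_nonneg ξ)).le, mul_comm]

lemma measurable_sqrt_norm (hg : IsSobolevSymbol s c C g) :
    Measurable fun ξ : Rd d => (√(g ‖ξ‖) : ℂ) := by
  have := hg.measurable
  fun_prop

lemma sobolevNorm_le_eLpNorm_symbolMul (hg : IsSobolevSymbol s c C g) (U : Rd d → ℂ) :
    sobolevNorm s U ≤ ENNReal.ofReal (√c)⁻¹ * eLpNorm (symbolMul g U) 2 := by
  refine eLpNorm_le_mul_eLpNorm_of_ae_le_mul (ae_of_all _ fun ξ => ?_) 2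
  have hc : 0 < √c := Real.sqrt_pos.2 hg.const_pos
  rw [norm_symbolMul, Real.norm_of_nonneg (by positivity), ← mul_assoc]
  gcongr
  rw [inv_mul_eq_div, le_div_iff₀ hc, mul_comm]
  exact hg.sqrt_mul_rpow_le_sqrt (norm_nonneg ξ)

lemma finiteEnergyPair (hg : IsSobolevSymbol s c C g) (u : HsFn d s) :
    FiniteEnergyPair g u.ft u.toFun where
  memLp_ft := u.ft_memL2
  memLp := u.memL2
  isFT := u.isFT
  memLp_symbolMul := by
    have hmeas : AEStronglyMeasurable (symbolMul g u.ft) volume :=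
      hg.measurable_sqrt_norm.aestronglyMeasurable.mul u.ft_memL2.1
    refine (memLp_two_iff_integrable_sq_norm hmeas).2
      ((u.memHs.const_mul C).mono' (hmeas.norm.pow 2) (ae_of_all _ fun ξ => ?_))
    rw [Real.norm_of_nonneg (by positivity), hg.norm_symbolMul_sq, mul_left_comm]
    gcongr
    exact hg.upper _ (norm_nonneg ξ)

end IsSobolevSymbol

namespace FiniteEnergyPair

lemma sub (h : FiniteEnergyPair g U u) (h' : FiniteEnergyPair g V v) :
    FiniteEnergyPair g (U - V) (u - v) where
  toL2FourierPair := h.toL2FourierPair.sub h'.toL2FourierPair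
  memLp_symbolMul := symbolMul_sub g U V ▸ h.memLp_symbolMul.sub h'.memLp_symbolMul

lemma const_mul (h : FiniteEnergyPair g U u) (a : ℂ) :
    FiniteEnergyPair g (fun ξ => a * U ξ) (fun x => a * u x) where
  toL2FourierPair := h.toL2FourierPair.const_mul a
  memLp_symbolMul := symbolMul_const_mul g U a ▸ h.memLp_symbolMul.const_mul a

lemma translate (h : FiniteEnergyPair g U u) (t : Rd d) :
    FiniteEnergyPair g (modulate t U) (fun x => u (x + t)) where
  toL2FourierPair := h.toL2FourierPair.translate t
  memLp_symbolMul := symbolMul_modulate g U t ▸ memLp_modulate h.memLp_symbolMul t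

lemma energyNorm_sub_le (h : FiniteEnergyPair g U u) (h' : FiniteEnergyPair g V v) :
    energyNorm g (U - V) ≤ energyNorm g U + energyNorm g V := by
  rw [energyNorm, energyNorm, energyNorm, symbolMul_sub,
    ← ENNReal.toReal_add h.memLp_symbolMul.2.ne h'.memLp_symbolMul.2.ne]
  exact ENNReal.toReal_mono
    (ENNReal.add_ne_top.2 ⟨h.memLp_symbolMul.2.ne, h'.memLp_symbolMul.2.ne⟩)
    (eLpNorm_sub_le h.memLp_symbolMul.1 h'.memLp_symbolMul.1 one_le_two)

lemma sobolevNorm_le (h : FiniteEnergyPair g U u) (hg : IsSobolevSymbol s c C g) :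
    sobolevNorm s U ≤ ENNReal.ofReal ((√c)⁻¹ * energyNorm g U) := by
  rw [ENNReal.ofReal_mul (by positivity), energyNorm,
    ENNReal.ofReal_toReal h.memLp_symbolMul.2.ne]
  exact hg.sobolevNorm_le_eLpNorm_symbolMul U

/-- A function of finite energy as an element of `H^s`. -/
def toHsFn (h : FiniteEnergyPair g U u) (hg : IsSobolevSymbol s c C g) : HsFn d s where
  toFun := u
  ft := U
  memL2 := h.memLp
  ft_memL2 := h.memLp_ft
  isFT := h.isFT
  memHs := by
    have hweight : Measurable fun ξ : Rd d => (1 + ‖ξ‖ ^ 2) ^ s := by fun_prop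
    refine ((h.memLp_symbolMul.integrable_norm_pow two_ne_zero).const_mul c⁻¹).mono'
      ((h.memLp_ft.1.norm.pow 2).mul hweight.aestronglyMeasurable) (ae_of_all _ fun ξ => ?_)
    rw [Real.norm_of_nonneg (by positivity), hg.norm_symbolMul_sq, mul_left_comm]
    gcongr
    rw [inv_mul_eq_div, le_div_iff₀ hg.const_pos, mul_comm]
    exact hg.lower _ (norm_nonneg ξ)

end FiniteEnergyPair

lemma qeps_eq_energyNorm_sq (hg : IsSobolevSymbol s c C g) (u : HsFn d s) :
    qeps g u = energyNorm g u.ft ^ 2 := by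
  rw [energyNorm, toReal_eLpNorm_two_sq (hg.finiteEnergyPair u).memLp_symbolMul]
  simp only [hg.norm_symbolMul_sq, qeps]

-- The two weak limits are linked by the bounded multiplier `1 / √g(|ξ|)`.
lemma exists_subseq_tendstoWeaklyL2_symbolMul (hg : IsSobolevSymbol s c C g) (hs : 0 ≤ s)
    {V v : ℕ → Rd d → ℂ} {K : ℝ} (hV : ∀ n, FiniteEnergyPair g (V n) (v n))
    (hK : ∀ n, energyNorm g (V n) ≤ K) :
    ∃ (W w : Rd d → ℂ) (φ : ℕ → ℕ), FiniteEnergyPair g W w ∧ StrictMono φ ∧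
      TendstoWeaklyL2 (fun n => V (φ n)) W volume ∧
      TendstoWeaklyL2 (fun n => symbolMul g (V (φ n))) (symbolMul g W) volume := by
  obtain ⟨F, φ, hF, hφ, hweak⟩ :=
    exists_subseq_tendstoWeaklyL2 (fun n => (hV n).memLp_symbolMul) hK
  let m (ξ : Rd d) : ℂ := ((√(g ‖ξ‖) : ℝ) : ℂ)⁻¹
  have hm : Measurable m := hg.measurable_sqrt_norm.inv
  have hm_le (ξ : Rd d) : ‖m ξ‖ ≤ (√c)⁻¹ := by
    rw [norm_inv, Complex.norm_real, Real.norm_of_nonneg (Real.sqrt_nonneg _)]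
    exact inv_anti₀ (Real.sqrt_pos.2 hg.const_pos) (hg.sqrt_const_le_sqrt hs (norm_nonneg ξ))
  have hsqrt (ξ : Rd d) : ((√(g ‖ξ‖) : ℝ) : ℂ) ≠ 0 :=
    Complex.ofReal_ne_zero.2 (Real.sqrt_pos.2 (hg.pos (norm_nonneg ξ))).ne'
  have hmF : symbolMul g (fun ξ => m ξ * F ξ) = F :=
    funext fun ξ => mul_inv_cancel_left₀ (hsqrt ξ) (F ξ)
  have hmV (n : ℕ) (ξ : Rd d) : m ξ * symbolMul g (V n) ξ = V n ξ :=
    inv_mul_cancel_left₀ (hsqrt ξ) (V n ξ)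
  obtain ⟨w, hw, -⟩ := L2FourierPair.exists_of_memLp
    (hF.of_le_mul (hm.aestronglyMeasurable.mul hF.1) (ae_of_all _ fun ξ =>
      (norm_mul_le _ _).trans (mul_le_mul_of_nonneg_right (hm_le ξ) (norm_nonneg _))))
  refine ⟨fun ξ => m ξ * F ξ, w, φ, ⟨hw, hmF.symm ▸ hF⟩, hφ, ?_, hmF.symm ▸ hweak⟩
  simpa only [hmV] using hweak.mul_left_of_bounded hm.aestronglyMeasurable hm_le

end Energy

section SymmetricLimits

variable {d : ℕ} {s c C : ℝ} {g : ℝ → ℝ} {U w f : Rd d → ℂ} {V v : ℕ → Rd d → ℂ}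

lemma radial_fourierInv (hU : Radial U) : Radial (𝓕⁻ U) := by
  intro x y hxy
  let A : Rd d ≃ₗᵢ[ℝ] Rd d := (ℝ ∙ (x - y))ᗮ.reflection
  have hAx : A x = y := Submodule.reflection_sub hxy
  have hUA : U ∘ A = U := funext fun ξ => hU _ _ (A.norm_map ξ)
  rw [← hAx, ← Real.fourierInv_comp_linearIsometry, hUA]

lemma Radial.gSymmetric (hd : 0 < d) (hf : Radial f) : GSymmetric d f :=
  (gSymmetric_iff hd).2 fun x y hxy _ => hf x y hxy

lemma L2FourierPair.ae_eq_zero_iff {u : Rd d → ℂ} (h : L2FourierPair U u) :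
    (u =ᵐ[volume] fun _ => (0 : ℂ)) ↔ U =ᵐ[volume] fun _ => (0 : ℂ) := by
  have hzero (k : Rd d → ℂ) (hk : MemLp k 2) :
      eLpNorm k 2 volume = 0 ↔ k =ᵐ[volume] fun _ => (0 : ℂ) :=
    eLpNorm_eq_zero_iff hk.1 two_ne_zero
  rw [← hzero u h.memLp, ← hzero U h.memLp_ft, h.plancherel]

lemma integrable_norm_sq_mul_rpow_of_hasCompactSupport (hf : Continuous f)
    (hsupp : HasCompactSupport f) (s : ℝ) :
    Integrable (fun ξ => ‖f ξ‖ ^ 2 * (1 + ‖ξ‖ ^ 2) ^ s) volume := by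
  have hweight : Continuous fun ξ : Rd d => (1 + ‖ξ‖ ^ 2) ^ s :=
    Continuous.rpow_const (by fun_prop) fun ξ => Or.inl (by positivity)
  have hsupp_sq : HasCompactSupport fun ξ => ‖f ξ‖ ^ 2 :=
    hsupp.comp_left (g := fun z : ℂ => ‖z‖ ^ 2) (by simp)
  exact ((hf.norm.pow 2).mul hweight).integrable_of_hasCompactSupport hsupp_sq.mul_right

lemma exists_radial_hsFn_ne_zero (d : ℕ) (s : ℝ) :
    ∃ u : HsFn d s, Radial u.toFun ∧ ¬ u.toFun =ᵐ[volume] fun _ => (0 : ℂ) := by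
  let χ : SchwartzMap (Rd d) ℂ := cutoffSchwartz one_pos
  have hpair : L2FourierPair χ (𝓕⁻ (⇑χ)) :=
    .fourierInv_of_integrable χ.integrable (χ.memLp 2 volume)
  have hχ_radial : Radial (⇑χ) := fun ξ η h => by simp only [χ, cutoffSchwartz_apply, cutoff, h]
  have hχ_zero : χ 0 = 1 := by
    rw [cutoffSchwartz_apply, cutoff_eq_one one_pos (by simp), Complex.ofReal_one]
  have hχ_supp : HasCompactSupport (⇑χ) := hasCompactSupport_cutoff one_pos
  have hHs := integrable_norm_sq_mul_rpow_of_hasCompactSupport χ.continuous hχ_supp s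
  refine ⟨⟨𝓕⁻ (⇑χ), χ, hpair.memLp, hpair.memLp_ft, hpair.isFT, hHs⟩,
    radial_fourierInv hχ_radial, fun hzero => ?_⟩
  have hχ : ⇑χ = fun _ => 0 := (Continuous.ae_eq_iff_eq volume χ.continuous continuous_const).1
    (hpair.ae_eq_zero_iff.1 hzero)
  exact one_ne_zero (hχ_zero.symm.trans (congrFun hχ 0))

-- Pointwise limits of symmetric functions are symmetric everywhere, not just almost everywhere.
lemma GSymmetric.exists_ae_eq_of_tendsto_ae (hv : ∀ n, GSymmetric d (v n))
    (hvw : ∀ᵐ x, Tendsto (fun n => v n x) atTop (𝓝 (w x))) :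
    ∃ w', GSymmetric d w' ∧ w =ᵐ[volume] w' := by
  refine ⟨fun x => limUnder atTop fun n => v n x, fun x y hblock hlast => ?_,
    hvw.mono fun x hx => hx.limUnder_eq.symm⟩
  simp only [hv _ x y hblock hlast]

lemma exists_subseq_tendsto_ae_gSymmetric (hg : IsSobolevSymbol s c C g) (hs : 0 < s) {K : ℝ}
    (hV : ∀ n, FiniteEnergyPair g (V n) (v n)) (hv : ∀ n, GSymmetric d (v n))
    (hK : ∀ n, energyNorm g (V n) ≤ K) :
    ∃ (W w : Rd d → ℂ) (φ : ℕ → ℕ), FiniteEnergyPair g W w ∧ GSymmetric d w ∧ StrictMono φ ∧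
      TendstoWeaklyL2 (fun n => V (φ n)) W volume ∧
      TendstoWeaklyL2 (fun n => symbolMul g (V (φ n))) (symbolMul g W) volume ∧
      ∀ᵐ x, Tendsto (fun n => v (φ n) x) atTop (𝓝 (w x)) := by
  obtain ⟨W, w, φ, hW, hφ, hweak, hweak_symbol⟩ :=
    exists_subseq_tendstoWeaklyL2_symbolMul hg hs.le hV hK
  have hbound (n : ℕ) : sobolevNorm s (V (φ n) - W) ≤
      ENNReal.ofReal ((√c)⁻¹ * (K + energyNorm g W)) := by
    refine (((hV (φ n)).sub hW).sobolevNorm_le hg).trans (ENNReal.ofReal_le_ofReal ?_)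
    gcongr
    exact ((hV (φ n)).energyNorm_sub_le hW).trans (by gcongr; exact hK (φ n))
  obtain ⟨ψ, hψ, hae⟩ := hweak.exists_subseq_tendsto_ae hs ENNReal.ofReal_ne_top
    (fun n => (hV (φ n)).toL2FourierPair) hW.toL2FourierPair hbound
  obtain ⟨w', hw', hww'⟩ := GSymmetric.exists_ae_eq_of_tendsto_ae (fun n => hv (φ (ψ n))) hae
  refine ⟨W, w', φ ∘ ψ, ⟨hW.toL2FourierPair.congr_right hww', hW.memLp_symbolMul⟩, hw',
    hφ.comp hψ, hweak.comp_tendsto hψ.tendsto_atTop, hweak_symbol.comp_tendsto hψ.tendsto_atTop, ?_⟩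
  filter_upwards [hae, hww'] with x hx hxw
  exact hxw ▸ hx

end SymmetricLimits

section Rayleigh

variable {d : ℕ} {p s c C A : ℝ} {g : ℝ → ℝ} {U u W w : Rd d → ℂ} {P : (Rd d → ℂ) → Prop}

lemma mul_half_sub_one_div_lt (hd : 0 < d) (hp : 2 < p)
    (hps : s < (d : ℝ) / 2 → p < 2 * (d : ℝ) / ((d : ℝ) - 2 * s)) :
    d * (1 / 2 - 1 / p) < s := by
  have hp₀ : 0 < p := by linarith
  have hdp : 0 < (d : ℝ) / p := by positivity
  have hsplit : (d : ℝ) * (1 / 2 - 1 / p) = d / 2 - d / p := by ring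
  rcases lt_or_ge s ((d : ℝ) / 2) with hs | hs
  · have hcrit := hps hs
    rw [lt_div_iff₀ (by linarith)] at hcrit
    have : ((d : ℝ) - 2 * s) / 2 < d / p := by
      rw [lt_div_iff₀ hp₀]
      linarith
    linarith
  · linarith

lemma exists_sobolev_const_energyNorm (d : ℕ) (hp : 2 < p) (hs : d * (1 / 2 - 1 / p) < s)
    (hg : IsSobolevSymbol s c C g) :
    ∃ K > 0, ∀ U u : Rd d → ℂ, FiniteEnergyPair g U u →
      MemLp u (ENNReal.ofReal p) ∧ LpN p u ≤ K * energyNorm g U := by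
  obtain ⟨K, hK, hsobolev⟩ := exists_sobolev_const (d := d) hp hs
  refine ⟨K.toReal * (√c)⁻¹ + 1, by positivity, fun U u h => ?_⟩
  have hfin : sobolevNorm s U ≠ ⊤ := ((h.sobolevNorm_le hg).trans_lt ENNReal.ofReal_lt_top).ne
  have hle : eLpNorm u (ENNReal.ofReal p) volume ≤
      K * ENNReal.ofReal ((√c)⁻¹ * energyNorm g U) :=
    (hsobolev U u h.toL2FourierPair hfin).trans (by gcongr; exact h.sobolevNorm_le hg)
  have hne_top : K * ENNReal.ofReal ((√c)⁻¹ * energyNorm g U) ≠ ⊤ :=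
    ENNReal.mul_ne_top hK ENNReal.ofReal_ne_top
  have hnonneg := energyNorm_nonneg g U
  refine ⟨⟨h.memLp.1, hle.trans_lt hne_top.lt_top⟩, ?_⟩
  calc LpN p u ≤ K.toReal * ((√c)⁻¹ * energyNorm g U) := by
        refine (ENNReal.toReal_mono hne_top hle).trans_eq ?_
        rw [ENNReal.toReal_mul, ENNReal.toReal_ofReal (by positivity)]
    _ ≤ (K.toReal * (√c)⁻¹ + 1) * energyNorm g U := by linarith

namespace FiniteEnergyPair

lemma memLp_ofReal (h : FiniteEnergyPair g U u) (hp : 2 < p) (hs : d * (1 / 2 - 1 / p) < s)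
    (hg : IsSobolevSymbol s c C g) : MemLp u (ENNReal.ofReal p) := by
  obtain ⟨_, -, hsobolev⟩ := exists_sobolev_const_energyNorm d hp hs hg
  exact (hsobolev U u h).1

lemma LpN_pos (h : FiniteEnergyPair g U u) (hp : 2 < p) (hs : d * (1 / 2 - 1 / p) < s)
    (hg : IsSobolevSymbol s c C g) (hu : ¬ u =ᵐ[volume] fun _ => (0 : ℂ)) : 0 < LpN p u := by
  have hmem := h.memLp_ofReal hp hs hg
  refine ENNReal.toReal_pos (fun hzero => hu ?_) hmem.2.ne
  exact (eLpNorm_eq_zero_iff hmem.1 (ENNReal.ofReal_pos.2 (by linarith)).ne').1 hzero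

end FiniteEnergyPair

lemma mem_rayleighSet_iff (hp : 2 < p) (hs : d * (1 / 2 - 1 / p) < s)
    (hg : IsSobolevSymbol s c C g) {t : ℝ} :
    t ∈ RayleighSet d s p g P ↔ ∃ U u : Rd d → ℂ, FiniteEnergyPair g U u ∧ P u ∧
      (¬ u =ᵐ[volume] fun _ => (0 : ℂ)) ∧ t = (energyNorm g U / LpN p u) ^ 2 := by
  constructor
  · rintro ⟨u, hPu, hu, -, rfl⟩
    exact ⟨u.ft, u.toFun, hg.finiteEnergyPair u, hPu, hu, by rw [qeps_eq_energyNorm_sq hg, div_pow]⟩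
  · rintro ⟨U, u, h, hPu, hu, rfl⟩
    exact ⟨h.toHsFn hg, hPu, hu, h.memLp_ofReal hp hs hg,
      by rw [qeps_eq_energyNorm_sq hg, div_pow]; rfl⟩

lemma exists_pos_le_of_mem_rayleighSet (hp : 2 < p) (hs : d * (1 / 2 - 1 / p) < s)
    (hg : IsSobolevSymbol s c C g) (P : (Rd d → ℂ) → Prop) :
    ∃ κ > 0, ∀ t ∈ RayleighSet d s p g P, κ ≤ t := by
  obtain ⟨K, hK, hsobolev⟩ := exists_sobolev_const_energyNorm d hp hs hg
  refine ⟨K⁻¹ ^ 2, by positivity, fun t ht => ?_⟩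
  obtain ⟨U, u, h, -, hu, rfl⟩ := (mem_rayleighSet_iff hp hs hg).1 ht
  gcongr
  rw [le_div_iff₀ (h.LpN_pos hp hs hg hu), inv_mul_le_iff₀ hK]
  exact (hsobolev U u h).2

lemma rayleigh_pos (hp : 2 < p) (hs : d * (1 / 2 - 1 / p) < s) (hg : IsSobolevSymbol s c C g)
    (hne : (RayleighSet d s p g P).Nonempty) : 0 < Rayleigh d s p g P := by
  obtain ⟨κ, hκ, hle⟩ := exists_pos_le_of_mem_rayleighSet hp hs hg P
  exact hκ.trans_le (le_csInf hne hle)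

lemma rayleigh_le (hp : 2 < p) (hs : d * (1 / 2 - 1 / p) < s) (hg : IsSobolevSymbol s c C g)
    {t : ℝ} (ht : t ∈ RayleighSet d s p g P) : Rayleigh d s p g P ≤ t := by
  obtain ⟨κ, -, hle⟩ := exists_pos_le_of_mem_rayleighSet hp hs hg P
  exact csInf_le ⟨κ, hle⟩ ht

lemma rayleighSet_gSymmetric_nonempty (hd : 0 < d) (hp : 2 < p) (hs : d * (1 / 2 - 1 / p) < s)
    (hg : IsSobolevSymbol s c C g) : (RayleighSet d s p g (GSymmetric d)).Nonempty := by
  obtain ⟨u, hradial, hu⟩ := exists_radial_hsFn_ne_zero d s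
  exact ⟨_, u, hradial.gSymmetric hd, hu, (hg.finiteEnergyPair u).memLp_ofReal hp hs hg, rfl⟩

lemma FiniteEnergyPair.LpN_le_inv_sqrt_rayleigh_mul (h : FiniteEnergyPair g U u) (hp : 2 < p)
    (hs : d * (1 / 2 - 1 / p) < s) (hg : IsSobolevSymbol s c C g) (hPu : P u)
    (hpos : 0 < Rayleigh d s p g P) :
    LpN p u ≤ (√(Rayleigh d s p g P))⁻¹ * energyNorm g U := by
  have henergy := energyNorm_nonneg g U
  by_cases hu : u =ᵐ[volume] fun _ => (0 : ℂ)
  · have hzero : LpN p u = 0 := by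
      rw [LpN, eLpNorm_congr_ae hu]
      simp
    rw [hzero]
    positivity
  · have hLpN := h.LpN_pos hp hs hg hu
    rw [le_inv_mul_iff₀ (Real.sqrt_pos.2 hpos), ← le_div_iff₀ hLpN]
    exact Real.sqrt_le_iff.2 ⟨by positivity,
      rayleigh_le hp hs hg ((mem_rayleighSet_iff hp hs hg).2 ⟨U, u, h, hPu, hu, rfl⟩)⟩

lemma exists_normalized_of_mem_rayleighSet (hp : 2 < p) (hs : d * (1 / 2 - 1 / p) < s)
    (hg : IsSobolevSymbol s c C g) {t : ℝ} (ht : t ∈ RayleighSet d s p g (GSymmetric d)) :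
    ∃ U u : Rd d → ℂ, FiniteEnergyPair g U u ∧ GSymmetric d u ∧ energyNorm g U = 1 ∧
      LpN p u = (√t)⁻¹ := by
  obtain ⟨κ, hκ, hle⟩ := exists_pos_le_of_mem_rayleighSet hp hs hg (GSymmetric d)
  have ht₀ : 0 < t := hκ.trans_le (hle t ht)
  obtain ⟨U, u, h, hu, -, rfl⟩ := (mem_rayleighSet_iff hp hs hg).1 ht
  have henergy : 0 < energyNorm g U := (energyNorm_nonneg g U).lt_of_ne' fun hzero => by
    simp [hzero] at ht₀
  have hnorm : ‖(((energyNorm g U)⁻¹ : ℝ) : ℂ)‖ = (energyNorm g U)⁻¹ := by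
    rw [Complex.norm_real, Real.norm_of_nonneg (by positivity)]
  refine ⟨_, _, h.const_mul (((energyNorm g U)⁻¹ : ℝ) : ℂ), hu.const_mul _, ?_, ?_⟩
  · rw [energyNorm_const_mul, hnorm, inv_mul_cancel₀ henergy.ne']
  · rw [LpN_const_mul, hnorm, Real.sqrt_sq (div_nonneg henergy.le (LpN_nonneg p u)), inv_div,
      inv_mul_eq_div]

lemma exists_localized_minimizing_sequence (hd : 3 ≤ d) (hp : 2 < p)
    (hs : d * (1 / 2 - 1 / p) < s) (hg : IsSobolevSymbol s c C g) :
    ∃ (V v : ℕ → Rd d → ℂ) (y : ℕ → Rd d), (∀ n, FiniteEnergyPair g (V n) (v n)) ∧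
      (∀ n, GSymmetric d (v n)) ∧ (∀ n, energyNorm g (V n) = 1) ∧
      Tendsto (fun n => LpN p (v n)) atTop (𝓝 (√(Rayleigh d s p g (GSymmetric d)))⁻¹) ∧
      ∃ R > 0, ∃ b > 0, ∃ r₀, (∀ n, ‖y n‖ ≤ r₀) ∧ ∀ n, b ≤ ‖lowPass R (V n) (y n)‖ := by
  have hne := rayleighSet_gSymmetric_nonempty (by omega) hp hs hg
  have hpos := rayleigh_pos hp hs hg hne
  obtain ⟨t, -, htlim, ht⟩ :=
    exists_seq_tendsto_sInf hne ⟨_, fun _ ht => rayleigh_le hp hs hg ht⟩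
  have ht₀ (n : ℕ) : 0 < t n := hpos.trans_le (rayleigh_le hp hs hg (ht n))
  obtain ⟨T, hT⟩ := htlim.bddAbove_range
  have htT (n : ℕ) : t n ≤ T := hT ⟨n, rfl⟩
  have hT₀ : 0 < T := (ht₀ 0).trans_le (htT 0)
  obtain ⟨R, hR, b, hb, r₀, hconc⟩ := exists_concentration hd hp hs
    (M := ENNReal.ofReal (√c)⁻¹) ENNReal.ofReal_ne_top (a := ENNReal.ofReal (√T)⁻¹)
    (by simpa using hT₀) ENNReal.ofReal_ne_top
  have hseq (n : ℕ) : ∃ (V v : Rd d → ℂ) (y : Rd d), FiniteEnergyPair g V v ∧ GSymmetric d v ∧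
      energyNorm g V = 1 ∧ LpN p v = (√(t n))⁻¹ ∧ ‖y‖ ≤ r₀ ∧ b ≤ ‖lowPass R V y‖ := by
    obtain ⟨U, u, h, hu, henergy, hLpN⟩ := exists_normalized_of_mem_rayleighSet hp hs hg (ht n)
    have hlarge : ENNReal.ofReal (√T)⁻¹ ≤ eLpNorm u (ENNReal.ofReal p) volume := by
      refine (ENNReal.ofReal_le_iff_le_toReal (h.memLp_ofReal hp hs hg).2.ne).2 ?_
      exact (inv_anti₀ (Real.sqrt_pos.2 (ht₀ n)) (Real.sqrt_le_sqrt (htT n))).trans_eq hLpN.symm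
    obtain ⟨τ, y, hy, hby⟩ := hconc U u h.toL2FourierPair hu
      (by simpa [henergy] using h.sobolevNorm_le hg) hlarge
    exact ⟨_, _, y, h.translate _, hu.translate_lastIndex (by omega) τ,
      (energyNorm_modulate g U _).trans henergy, (LpN_translate p h.memLp.1 _).trans hLpN, hy, hby⟩
  choose V v y hV hv henergy hLpN hy hby using hseq
  refine ⟨V, v, y, hV, hv, henergy, ?_, R, hR, b, hb, r₀, hy, hby⟩
  simp only [hLpN]
  exact htlim.sqrt.inv₀ (Real.sqrt_pos.2 hpos).ne'

-- With `m` the energy of the limit, the remainder carries energy `1 - m` and hence at most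
-- `A^p (1 - m)^(p/2)` of the `L^p` mass `A^p`, which leaves at least `A^p m^(p/2)` to the limit.
lemma TendstoWeaklyL2.mul_energyNorm_le_LpN (hp : 2 ≤ p) (hA : 0 ≤ A) {V v : ℕ → Rd d → ℂ}
    (hVW : TendstoWeaklyL2 (fun n => symbolMul g (V n)) (symbolMul g W) volume)
    (hV : ∀ n, MemLp (symbolMul g (V n)) 2) (hW : MemLp (symbolMul g W) 2)
    (henergy : ∀ n, energyNorm g (V n) = 1)
    (hv : ∀ n, MemLp (v n) (ENNReal.ofReal p)) (hw : MemLp w (ENNReal.ofReal p))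
    (hae : ∀ᵐ x, Tendsto (fun n => v n x) atTop (𝓝 (w x)))
    (hlim : Tendsto (fun n => LpN p (v n)) atTop (𝓝 A))
    (hsub : ∀ n, LpN p (v n - w) ≤ A * energyNorm g (V n - W)) :
    A * energyNorm g W ≤ LpN p w := by
  have hp₀ : 0 < p := by linarith
  have hsplit : Tendsto (fun n => energyNorm g (V n - W) ^ 2) atTop
      (𝓝 (1 - energyNorm g W ^ 2)) := by
    simp only [energyNorm, symbolMul_sub]
    refine hVW.tendsto_sq_eLpNorm_sub hV hW (tendsto_const_nhds.congr fun n => ?_)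
    rw [← energyNorm, henergy, one_pow]
  have hW_le : energyNorm g W ^ 2 ≤ 1 := by
    linarith [ge_of_tendsto' hsplit fun n => sq_nonneg _]
  have hsub_lim : Tendsto (fun n => (A * energyNorm g (V n - W)) ^ p) atTop
      (𝓝 ((A * √(1 - energyNorm g W ^ 2)) ^ p)) := by
    refine ((hsplit.sqrt.const_mul A).rpow_const (Or.inr hp₀.le)).congr fun n => ?_
    rw [Real.sqrt_sq (energyNorm_nonneg g _)]
  have hBL := limit_integral_norm_rpow_le (by linarith) hv hw hae
    ((hlim.rpow_const (Or.inr hp₀.le)).congr fun n => toReal_eLpNorm_rpow hp₀ (hv n))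
    (fun n => (toReal_eLpNorm_rpow hp₀ ((hv n).sub hw)).symm.trans_le
      (Real.rpow_le_rpow (LpN_nonneg p _) (hsub n) hp₀.le)) hsub_lim
  rw [← toReal_eLpNorm_rpow hp₀ hw] at hBL
  have hfinal := mul_sqrt_le_of_rpow_le_add hp hA ⟨sq_nonneg _, hW_le⟩ (LpN_nonneg p w) hBL
  rwa [Real.sqrt_sq (energyNorm_nonneg g W)] at hfinal

lemma exists_optimal_finiteEnergyPair (hd : 3 ≤ d) (hp : 2 < p) (hs : d * (1 / 2 - 1 / p) < s)
    (hg : IsSobolevSymbol s c C g) :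
    ∃ W w : Rd d → ℂ, FiniteEnergyPair g W w ∧ GSymmetric d w ∧
      (¬ w =ᵐ[volume] fun _ => (0 : ℂ)) ∧
      (√(Rayleigh d s p g (GSymmetric d)))⁻¹ * energyNorm g W ≤ LpN p w := by
  have hs₀ : 0 < s := pos_of_mul_half_sub_one_div_lt hp hs
  have hpos := rayleigh_pos hp hs hg (rayleighSet_gSymmetric_nonempty (by omega) hp hs hg)
  obtain ⟨V, v, y, hV, hv, henergy, hlim, R, hR, b, hb, r₀, hy, hby⟩ :=
    exists_localized_minimizing_sequence hd hp hs hg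
  obtain ⟨W, w, φ, hW, hw, hφ, hweak, hweak_symbol, hae⟩ :=
    exists_subseq_tendsto_ae_gSymmetric hg hs₀ hV hv fun n => (henergy n).le
  have hsob (n : ℕ) : sobolevNorm s (V n) ≤ ENNReal.ofReal (√c)⁻¹ := by
    simpa [henergy] using (hV n).sobolevNorm_le hg
  have hL2 (n : ℕ) : (eLpNorm (V n) 2 volume).toReal ≤ (√c)⁻¹ :=
    ENNReal.toReal_le_of_le_ofReal (by positivity)
      ((eLpNorm_two_le_sobolevNorm hs₀.le _).trans (hsob n))
  have hW_ne := hweak.not_ae_eq_zero_of_le_norm_lowPass hR hb (fun n => (hV (φ n)).memLp_ft)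
    (fun n => hL2 (φ n)) (fun n => hy (φ n)) fun n => hby (φ n)
  refine ⟨W, w, hW, hw, hW.toL2FourierPair.ae_eq_zero_iff.not.2 hW_ne, ?_⟩
  exact hweak_symbol.mul_energyNorm_le_LpN hp.le (by positivity)
    (fun n => (hV (φ n)).memLp_symbolMul) hW.memLp_symbolMul (fun n => henergy (φ n))
    (fun n => (hV (φ n)).memLp_ofReal hp hs hg) (hW.memLp_ofReal hp hs hg) hae
    (hlim.comp hφ.tendsto_atTop)
    fun n => ((hV (φ n)).sub hW).LpN_le_inv_sqrt_rayleigh_mul hp hs hg ((hv (φ n)).sub hw) hpos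

end Rayleigh

theorem stmt15_general {d : ℕ} (hd : 3 ≤ d) {p s c C : ℝ} (hp : 2 < p)
    (hps : s < (d : ℝ) / 2 → p < 2 * (d : ℝ) / ((d : ℝ) - 2 * s)) {g : ℝ → ℝ}
    (hg : IsSobolevSymbol s c C g) : Attained d s p g (GSymmetric d) := by
  have hs := mul_half_sub_one_div_lt (by omega) hp hps
  have hpos := rayleigh_pos hp hs hg (rayleighSet_gSymmetric_nonempty (by omega) hp hs hg)
  obtain ⟨W, w, hW, hw, hw_ne, hopt⟩ := exists_optimal_finiteEnergyPair hd hp hs hg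
  have hLpN := hW.LpN_pos hp hs hg hw_ne
  have hquot : qeps g (hW.toHsFn hg) / LpN p w ^ 2 = (energyNorm g W / LpN p w) ^ 2 := by
    rw [qeps_eq_energyNorm_sq hg, div_pow]
    rfl
  refine ⟨hW.toHsFn hg, hw, hw_ne, hW.memLp_ofReal hp hs hg, hquot.trans (le_antisymm ?_ ?_)⟩
  · rw [inv_mul_le_iff₀ (Real.sqrt_pos.2 hpos), ← div_le_iff₀ hLpN] at hopt
    exact (Real.le_sqrt (div_nonneg (energyNorm_nonneg g W) hLpN.le) hpos.le).1 hopt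
  · exact rayleigh_le hp hs hg ((mem_rayleighSet_iff hp hs hg).2 ⟨W, w, hW, hw, hw_ne, rfl⟩)

/-- Theorem C.2: existence of a minimizer for the Rayleigh quotient
restricted to `H^s_G`, `G = O(d-1) × {1}`, for `d ≥ 3` and fixed `ε ∈ (0,1)`. -/
theorem stmt15 (d : ℕ) (hd : 3 ≤ d)
    (s γ p c C : ℝ)
    (hs : (d : ℝ) / ((d : ℝ) + 1) < s) (hγ : 1 < γ)
    (hp : 2 < p) (hps : s < (d : ℝ) / 2 → p < 2 * (d : ℝ) / ((d : ℝ) - 2 * s))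
    (hc : 0 < c) (hcC : c ≤ C)
    (g : ℝ → ℝ → ℝ) (hg : IsAdmissible s γ c C g)
    (ε : ℝ) (hε : ε ∈ Set.Ioo (0:ℝ) 1) :
    Attained d s p (g ε) (GSymmetric d) := by
  have hs₀ : 0 ≤ s := hs.le.trans' (by positivity)
  exact stmt15_general hd hp hps
    (hg.isSobolevSymbol hs₀ (by linarith) hc (hc.le.trans hcC) hε)
end
end

section
/- Assume d ≥ 2 and let (g_ε) be (s,γ)-admissible for some s > d/(d+1) and γ > 1. Then there exists a constant C' < ∞, independent of ε, such that for every ε ∈ (0,1) and every radial function v ∈ L²(ℝ^d) whose Fourier transform v̂ is supported in the spherical shell {ξ ∈ ℝ^d : 1/2 ≤ |ξ| ≤ 3/2} and with q_ε(v) < ∞, the function v has a continuous representative satisfying |v(x)| ≤ C' (1+|x|)^{(1−d)/2} ε^{(1/γ − 1)/2} q_ε(v)^{1/2} for all x ∈ ℝ^d. -/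
open MeasureTheory Real Filter
open scoped ENNReal FourierTransform RealInnerProductSpace Topology

noncomputable section

/-!
A radial function is its own average over spheres, so in Fourier inversion the plane wave
`exp (2πi ⟪x, ξ⟫)` may be replaced by `σ̂ (2π ‖x‖ ξ)`, with `σ` the uniform probability measure on
the unit sphere. Invariance of `σ` under reflections shows that `t ↦ σ̂ (t e)` solves the Bessel
equation `J'' + ((d - 1) / t) J' + J = 0`, and an energy estimate for `t ^ ((d - 1) / 2) J` gives
`|σ̂ (ξ)| ≲ (1 + |ξ|) ^ ((1 - d) / 2)`. Hence `|v (x)| ≲ (1 + |x|) ^ ((1 - d) / 2) ‖v̂‖₁`, and by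
Cauchy–Schwarz `‖v̂‖₁² ≤ q_ε(v) ∫ g_ε⁻¹` over the shell, where the last integral is at most a
multiple of `∫ (ε + |r - 1| ^ γ)⁻¹ dr`, a constant times `ε ^ (1 / γ - 1)`.
-/

section RotationInvariant

variable {E : Type*} [NormedAddCommGroup E] [InnerProductSpace ℝ E] [MeasurableSpace E]
  {μ : Measure E}

/-- A measure is rotation invariant if every linear isometry of the space preserves it. These are
the measures whose characteristic function is real and radial. -/
def IsRotationInvariant (μ : Measure E) : Prop :=
  ∀ R : E ≃ₗᵢ[ℝ] E, MeasurePreserving R μ μ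

namespace IsRotationInvariant

variable [BorelSpace E]

lemma integral_comp_inner_eq {F : Type*} [NormedAddCommGroup F] [NormedSpace ℝ F]
    (hμ : IsRotationInvariant μ) {a b : E} (hab : ‖a‖ = ‖b‖) (f : ℝ → F) :
    ∫ ω, f ⟪a, ω⟫ ∂μ = ∫ ω, f ⟪b, ω⟫ ∂μ := by
  let R := (ℝ ∙ (a - b))ᗮ.reflection
  have hRa : R a = b := Submodule.reflection_sub hab
  calc ∫ ω, f ⟪a, ω⟫ ∂μ = ∫ ω, f ⟪b, R ω⟫ ∂μ := by simp only [← hRa, R.inner_map_map]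
    _ = ∫ ω, f ⟪b, ω⟫ ∂μ :=
      (hμ R).integral_comp R.toHomeomorph.measurableEmbedding (fun ω ↦ f ⟪b, ω⟫)

-- Reflecting in the hyperplane `bᗮ` fixes `a` and changes the sign of the integrand.
lemma integral_comp_inner_mul_inner_eq_zero (hμ : IsRotationInvariant μ) {a b : E}
    (hab : ⟪b, a⟫ = 0) (f : ℝ → ℝ) : ∫ ω, f ⟪a, ω⟫ * ⟪b, ω⟫ ∂μ = 0 := by
  let R := (ℝ ∙ b)ᗮ.reflection
  have hRa : R a = a := Submodule.reflection_mem_subspace_eq_self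
    (Submodule.mem_orthogonal_singleton_iff_inner_right.2 hab)
  have hRb : R b = -b := Submodule.reflection_orthogonalComplement_singleton_eq_neg b
  have hodd : ∀ ω, f ⟪a, R ω⟫ * ⟪b, R ω⟫ = -(f ⟪a, ω⟫ * ⟪b, ω⟫) := fun ω ↦ by
    have h₁ := R.inner_map_map a ω
    have h₂ := R.inner_map_map b ω
    rw [hRa] at h₁
    rw [hRb, inner_neg_left] at h₂
    rw [h₁, ← h₂, mul_neg, neg_neg]
  have h := (hμ R).integral_comp R.toHomeomorph.measurableEmbedding (fun ω ↦ f ⟪a, ω⟫ * ⟪b, ω⟫)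
  simp only [hodd, integral_neg] at h
  linarith

lemma charFun_eq_integral_cos [IsFiniteMeasure μ] (hμ : IsRotationInvariant μ) (ξ : E) :
    charFun μ ξ = ((∫ ω, cos ⟪ξ, ω⟫ ∂μ : ℝ) : ℂ) := by
  have hsin : ∫ ω, sin ⟪ξ, ω⟫ ∂μ = 0 := by
    have h := hμ.integral_comp_inner_eq (norm_neg ξ).symm sin
    simp only [inner_neg_left, sin_neg, integral_neg] at h
    linarith
  have hcos_int : Integrable (fun ω ↦ cos ⟪ξ, ω⟫) μ :=
    .of_bound (by fun_prop) 1 (.of_forall fun ω ↦ abs_cos_le_one _)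
  have hsin_int : Integrable (fun ω ↦ sin ⟪ξ, ω⟫) μ :=
    .of_bound (by fun_prop) 1 (.of_forall fun ω ↦ abs_sin_le_one _)
  simp only [charFun_apply, real_inner_comm, Complex.exp_mul_I, ← Complex.ofReal_cos,
    ← Complex.ofReal_sin]
  rw [integral_add hcos_int.ofReal (hsin_int.ofReal.mul_const _), integral_mul_const,
    integral_complex_ofReal, integral_complex_ofReal, hsin]
  simp

end IsRotationInvariant

end RotationInvariant

section UniformSphere

variable (E : Type*) [NormedAddCommGroup E] [InnerProductSpace ℝ E] [FiniteDimensional ℝ E]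
  [MeasurableSpace E] [BorelSpace E]

/-- The uniform probability measure on the unit sphere, as a measure on the ambient space: the
law of `‖x‖⁻¹ • x` for `x` uniformly distributed in the unit ball. -/
def uniformSphere : Measure E :=
  (ProbabilityTheory.cond volume (Metric.ball (0 : E) 1)).map fun x ↦ ‖x‖⁻¹ • x

instance : IsProbabilityMeasure (uniformSphere E) := by
  have : IsProbabilityMeasure (ProbabilityTheory.cond volume (Metric.ball (0 : E) 1)) :=
    ProbabilityTheory.cond_isProbabilityMeasure_of_finite
      (Metric.measure_ball_pos volume 0 one_pos).ne' measure_ball_lt_top.ne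
  exact Measure.isProbabilityMeasure_map (by fun_prop)

lemma ae_uniformSphere_norm_eq_one [Nontrivial E] : ∀ᵐ ω ∂uniformSphere E, ‖ω‖ = 1 := by
  rw [uniformSphere, ae_map_iff (by fun_prop) (measurableSet_eq_fun (by fun_prop) (by fun_prop))]
  have hne : ∀ᵐ x : E, x ≠ 0 := by simp [ae_iff]
  filter_upwards [ProbabilityTheory.cond_absolutelyContinuous.ae_le hne] with x hx
  rw [norm_smul, norm_inv, norm_norm, inv_mul_cancel₀ (norm_ne_zero_iff.2 hx)]

lemma isRotationInvariant_uniformSphere : IsRotationInvariant (uniformSphere E) := by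
  intro R
  have hball : R ⁻¹' Metric.ball (0 : E) 1 = Metric.ball 0 1 := by ext x; simp
  have hcond : MeasurePreserving R (ProbabilityTheory.cond volume (Metric.ball (0 : E) 1))
      (ProbabilityTheory.cond volume (Metric.ball (0 : E) 1)) := by
    have h := R.measurePreserving.restrict_preimage (s := Metric.ball (0 : E) 1)
      measurableSet_ball
    rw [hball] at h
    exact h.smul_measure _
  have hcomm : (R ∘ fun x : E ↦ ‖x‖⁻¹ • x) = (fun x : E ↦ ‖x‖⁻¹ • x) ∘ R := by
    ext1 x; simp
  have hnormalize : Measurable fun x : E ↦ ‖x‖⁻¹ • x := by fun_prop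
  refine ⟨hcond.measurable, ?_⟩
  rw [uniformSphere, Measure.map_map hcond.measurable hnormalize, hcomm,
    ← Measure.map_map hnormalize hcond.measurable, hcond.map_eq]

end UniformSphere

section BesselEquation

variable {w w' : ℝ → ℝ} {κ : ℝ}

-- The energy `w² + w'²` has derivative `2 κ w w' / t²`, which is at most `|κ| / t²` times itself.
lemma antitoneOn_oscillator_energy_mul_exp (hw : ∀ t, 0 < t → HasDerivAt w (w' t) t)
    (hw' : ∀ t, 0 < t → HasDerivAt w' (-(1 - κ / t ^ 2) * w t) t) :
    AntitoneOn (fun t ↦ (w t ^ 2 + w' t ^ 2) * exp (|κ| / t)) (Set.Ioi 0) := by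
  have hderiv : ∀ t, 0 < t → HasDerivAt (fun t ↦ (w t ^ 2 + w' t ^ 2) * exp (|κ| / t))
      ((κ * (2 * w t * w' t) - |κ| * (w t ^ 2 + w' t ^ 2)) * (exp (|κ| / t) / t ^ 2)) t := by
    intro t ht
    have hexp : HasDerivAt (fun t ↦ exp (|κ| / t)) (exp (|κ| / t) * (|κ| * -(t ^ 2)⁻¹)) t := by
      simpa only [div_eq_mul_inv] using ((hasDerivAt_inv ht.ne').const_mul |κ|).exp
    convert! (((hw t ht).pow 2).add ((hw' t ht).pow 2)).mul hexp using 1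
    simp only [Pi.add_apply, Pi.pow_apply]
    field_simp
    ring
  refine antitoneOn_of_deriv_nonpos (convex_Ioi 0)
    (fun t ht ↦ (hderiv t ht).continuousAt.continuousWithinAt) ?_ ?_
  · intro t ht
    rw [interior_Ioi] at ht
    exact (hderiv t ht).differentiableAt.differentiableWithinAt
  · intro t ht
    rw [interior_Ioi] at ht
    rw [(hderiv t ht).deriv]
    refine mul_nonpos_of_nonpos_of_nonneg (sub_nonpos.2 ?_) (by positivity)
    calc κ * (2 * w t * w' t) ≤ |κ| * |2 * w t * w' t| := by
          rw [← abs_mul]; exact le_abs_self _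
      _ ≤ |κ| * (w t ^ 2 + w' t ^ 2) := by
          gcongr
          simpa only [abs_mul, abs_two, sq_abs] using two_mul_le_add_sq |w t| |w' t|

lemma exists_abs_le_of_perturbed_oscillator (hw : ∀ t, 0 < t → HasDerivAt w (w' t) t)
    (hw' : ∀ t, 0 < t → HasDerivAt w' (-(1 - κ / t ^ 2) * w t) t) :
    ∃ B, ∀ t, 1 ≤ t → |w t| ≤ B := by
  refine ⟨√((w 1 ^ 2 + w' 1 ^ 2) * exp (|κ| / 1)), fun t ht ↦ abs_le_sqrt ?_⟩
  have ht₀ : 0 < t := one_pos.trans_le ht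
  calc w t ^ 2 ≤ (w t ^ 2 + w' t ^ 2) * 1 := by linarith [sq_nonneg (w' t)]
    _ ≤ (w t ^ 2 + w' t ^ 2) * exp (|κ| / t) := by
      gcongr
      exact one_le_exp (by positivity)
    _ ≤ (w 1 ^ 2 + w' 1 ^ 2) * exp (|κ| / 1) :=
      antitoneOn_oscillator_energy_mul_exp hw hw' (Set.mem_Ioi.2 one_pos) ht₀ ht

variable {J J₁ J₂ : ℝ → ℝ} {ν : ℝ}

-- `w = t ^ (ν / 2) * J` turns `J'' + (ν / t) J' + J = 0` into `w'' = -(1 - κ / t²) w` with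
-- `κ = (ν / 2) (ν / 2 - 1)`, which has no first-order term.
lemma exists_abs_rpow_mul_le_of_bessel (hJ : ∀ t, 0 < t → HasDerivAt J (J₁ t) t)
    (hJ₁ : ∀ t, 0 < t → HasDerivAt J₁ (J₂ t) t)
    (hode : ∀ t, 0 < t → t * (J t + J₂ t) = -ν * J₁ t) :
    ∃ B, ∀ t, 1 ≤ t → |t ^ (ν / 2) * J t| ≤ B := by
  have hrpow : ∀ p t : ℝ, 0 < t → HasDerivAt (fun t ↦ t ^ p) (p * t ^ (p - 1)) t :=
    fun p t ht ↦ hasDerivAt_rpow_const (.inl ht.ne')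
  refine exists_abs_le_of_perturbed_oscillator (κ := ν / 2 * (ν / 2 - 1))
    (fun t ht ↦ (hrpow (ν / 2) t ht).mul (hJ t ht)) fun t ht ↦ ?_
  convert! (((hrpow (ν / 2 - 1) t ht).const_mul (ν / 2)).mul (hJ t ht)).add
    ((hrpow (ν / 2) t ht).mul (hJ₁ t ht)) using 1
  have hJ₂ : J₂ t = -ν * J₁ t / t - J t := by
    rw [eq_sub_iff_add_eq', eq_div_iff ht.ne', mul_comm, hode t ht]
  rw [hJ₂, rpow_sub_one ht.ne', rpow_sub_one ht.ne']
  field_simp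
  ring

lemma exists_abs_le_rpow_of_bessel (hν : 0 ≤ ν) (hJ : ∀ t, 0 < t → HasDerivAt J (J₁ t) t)
    (hJ₁ : ∀ t, 0 < t → HasDerivAt J₁ (J₂ t) t)
    (hode : ∀ t, 0 < t → t * (J t + J₂ t) = -ν * J₁ t) {M : ℝ}
    (hM : ∀ t ∈ Set.Icc (0 : ℝ) 1, |J t| ≤ M) :
    ∃ K, 0 < K ∧ ∀ t, 0 ≤ t → |J t| ≤ K * (1 + t) ^ (-ν / 2) := by
  obtain ⟨B, hB⟩ := exists_abs_rpow_mul_le_of_bessel hJ hJ₁ hode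
  refine ⟨2 ^ (ν / 2) * (max M B + 1), ?_, fun t ht ↦ ?_⟩
  · have hmax : 0 ≤ max M B := le_max_of_le_left ((abs_nonneg _).trans (hM 0 (by simp)))
    exact mul_pos (by positivity) (by linarith)
  have ht' : 0 < 1 + t := by positivity
  rw [neg_div, rpow_neg ht'.le, ← div_eq_mul_inv, le_div_iff₀ (by positivity)]
  rcases le_total t 1 with h | h
  · calc |J t| * (1 + t) ^ (ν / 2) ≤ M * 2 ^ (ν / 2) := by
          gcongr
          · exact (abs_nonneg _).trans (hM t ⟨ht, h⟩)
          · exact hM t ⟨ht, h⟩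
          · linarith
      _ ≤ 2 ^ (ν / 2) * (max M B + 1) := by
          rw [mul_comm]
          gcongr
          exact (le_max_left M B).trans (le_add_of_nonneg_right zero_le_one)
  · calc |J t| * (1 + t) ^ (ν / 2) ≤ |J t| * (2 * t) ^ (ν / 2) := by
          gcongr
          linarith
      _ = 2 ^ (ν / 2) * |t ^ (ν / 2) * J t| := by
          rw [mul_rpow zero_le_two ht, abs_mul, abs_of_nonneg (rpow_nonneg ht _)]
          ring
      _ ≤ 2 ^ (ν / 2) * (max M B + 1) := by
          gcongr
          exact (hB t h).trans ((le_max_right M B).trans (le_add_of_nonneg_right zero_le_one))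

end BesselEquation

section SphereDecay

variable {E : Type*} [NormedAddCommGroup E] [InnerProductSpace ℝ E] [FiniteDimensional ℝ E]
  [MeasurableSpace E] [BorelSpace E] {μ : Measure E} [IsFiniteMeasure μ]

lemma integrable_of_continuous_of_ae_norm_eq_one (hsphere : ∀ᵐ ω ∂μ, ‖ω‖ = 1) {h : E → ℝ}
    (hh : Continuous h) : Integrable h μ := by
  have hrestrict : μ.restrict (Metric.sphere 0 1) = μ :=
    Measure.restrict_eq_self_of_ae_mem (by simpa using hsphere)
  rw [← hrestrict]
  exact hh.continuousOn.integrableOn_compact (isCompact_sphere 0 1)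

lemma hasDerivAt_integral_comp_inner_mul (hsphere : ∀ᵐ ω ∂μ, ‖ω‖ = 1) {f f' : ℝ → ℝ} {C : ℝ}
    (hf : ∀ x, HasDerivAt f (f' x) x) (hf' : Continuous f') (hC : ∀ x, |f' x| ≤ C)
    {h : E → ℝ} (hh : Continuous h) (a b : E) (s : ℝ) :
    HasDerivAt (fun s ↦ ∫ ω, f ⟪a + s • b, ω⟫ * h ω ∂μ)
      (∫ ω, f' ⟪a + s • b, ω⟫ * ⟪b, ω⟫ * h ω ∂μ) s := by
  have hf_cont : Continuous f := continuous_iff_continuousAt.2 fun x ↦ (hf x).continuousAt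
  have hderiv : ∀ ω s, HasDerivAt (fun s ↦ f ⟪a + s • b, ω⟫ * h ω)
      (f' ⟪a + s • b, ω⟫ * ⟪b, ω⟫ * h ω) s := fun ω s ↦ by
    have hinner : HasDerivAt (fun s : ℝ ↦ ⟪a + s • b, ω⟫) ⟪b, ω⟫ s := by
      simp only [inner_add_left, real_inner_smul_left]
      simpa using ((hasDerivAt_id s).mul_const ⟪b, ω⟫).const_add ⟪a, ω⟫
    exact ((hf _).comp s hinner).mul_const (h ω)
  refine (hasDerivAt_integral_of_dominated_loc_of_deriv_le (s := Set.univ)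
    (bound := fun ω ↦ C * ‖b‖ * |h ω|) univ_mem
    (.of_forall fun s ↦ Continuous.aestronglyMeasurable (by fun_prop))
    (integrable_of_continuous_of_ae_norm_eq_one hsphere (by fun_prop))
    (Continuous.aestronglyMeasurable (by fun_prop)) ?_
    (integrable_of_continuous_of_ae_norm_eq_one hsphere (by fun_prop))
    (.of_forall fun ω s _ ↦ hderiv ω s)).2
  filter_upwards [hsphere] with ω hω s _
  have hC₀ : 0 ≤ C := (abs_nonneg _).trans (hC 0)
  have hb : |⟪b, ω⟫| ≤ ‖b‖ := by simpa [hω] using abs_real_inner_le_norm b ω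
  rw [norm_eq_abs, abs_mul, abs_mul]
  gcongr
  exact hC _

-- Differentiate at `s = 0` the identity `∫ sin ⟪a + s b, ω⟫ ⟪b - s a, ω⟫ dμ = 0`, which holds
-- because `b - s a` is orthogonal to `a + s b`.
lemma integral_cos_inner_mul_inner_sq (hμ : IsRotationInvariant μ)
    (hsphere : ∀ᵐ ω ∂μ, ‖ω‖ = 1) {a b : E} (hab : ⟪b, a⟫ = 0) (hnorm : ‖a‖ = ‖b‖) :
    ∫ ω, cos ⟪a, ω⟫ * ⟪b, ω⟫ ^ 2 ∂μ = ∫ ω, sin ⟪a, ω⟫ * ⟪a, ω⟫ ∂μ := by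
  have hsplit : ∀ s : ℝ, ∫ ω, sin ⟪a + s • b, ω⟫ * ⟪b, ω⟫ ∂μ
      = s * ∫ ω, sin ⟪a + s • b, ω⟫ * ⟪a, ω⟫ ∂μ := fun s ↦ by
    have horth : ⟪b - s • a, a + s • b⟫ = 0 := by
      simp [inner_sub_left, inner_add_right, real_inner_smul_left, real_inner_smul_right, hab,
        real_inner_comm b a, hnorm]
    have hzero := hμ.integral_comp_inner_mul_inner_eq_zero horth sin
    simp only [inner_sub_left, real_inner_smul_left, mul_sub, mul_left_comm _ s] at hzero
    rwa [integral_sub (integrable_of_continuous_of_ae_norm_eq_one hsphere (by fun_prop))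
      (integrable_of_continuous_of_ae_norm_eq_one hsphere (by fun_prop)), integral_const_mul,
      sub_eq_zero] at hzero
  have hderiv : ∀ c : E, HasDerivAt (fun s : ℝ ↦ ∫ ω, sin ⟪a + s • b, ω⟫ * ⟪c, ω⟫ ∂μ)
      (∫ ω, cos ⟪a + (0 : ℝ) • b, ω⟫ * ⟪b, ω⟫ * ⟪c, ω⟫ ∂μ) 0 := fun c ↦
    hasDerivAt_integral_comp_inner_mul hsphere hasDerivAt_sin continuous_cos abs_cos_le_one
      (by fun_prop) a b 0
  have hunique := (hderiv b).unique
    (((hasDerivAt_id 0).mul (hderiv a)).congr_of_eventuallyEq (.of_forall hsplit))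
  simpa [mul_assoc, ← sq] using hunique

lemma bessel_equation_integral_cos_inner (hμ : IsRotationInvariant μ)
    (hsphere : ∀ᵐ ω ∂μ, ‖ω‖ = 1) {ι : Type*} [Fintype ι] (b : OrthonormalBasis ι ℝ E) (i : ι)
    (t : ℝ) :
    t * (∫ ω, cos (t * ⟪b i, ω⟫) ∂μ - ∫ ω, cos (t * ⟪b i, ω⟫) * ⟪b i, ω⟫ ^ 2 ∂μ)
      = (Fintype.card ι - 1) * ∫ ω, sin (t * ⟪b i, ω⟫) * ⟪b i, ω⟫ ∂μ := by
  classical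
  rcases eq_or_ne t 0 with rfl | ht
  · simp
  have hoffdiag : ∀ j ∈ Finset.univ.erase i, t * ∫ ω, cos (t * ⟪b i, ω⟫) * ⟪b j, ω⟫ ^ 2 ∂μ
      = ∫ ω, sin (t * ⟪b i, ω⟫) * ⟪b i, ω⟫ ∂μ := fun j hj ↦ by
    have hij : ⟪b j, b i⟫ = 0 := b.orthonormal.2 (Finset.ne_of_mem_erase hj)
    have h := integral_cos_inner_mul_inner_sq hμ hsphere (a := t • b i) (b := t • b j)
      (by simp [real_inner_smul_left, real_inner_smul_right, hij]) (by simp [norm_smul])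
    simp only [real_inner_smul_left, mul_pow, mul_left_comm _ t, mul_left_comm _ (t ^ 2),
      integral_const_mul] at h
    exact mul_left_cancel₀ ht (by linarith)
  have hsum : ∫ ω, cos (t * ⟪b i, ω⟫) ∂μ = ∑ j, ∫ ω, cos (t * ⟪b i, ω⟫) * ⟪b j, ω⟫ ^ 2 ∂μ := by
    rw [← integral_finsetSum _ fun j _ ↦
      integrable_of_continuous_of_ae_norm_eq_one hsphere (by fun_prop)]
    refine integral_congr_ae ?_
    filter_upwards [hsphere] with ω hω
    rw [← Finset.mul_sum, b.sum_sq_inner_right, hω, one_pow, mul_one]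
  rw [hsum, ← Finset.sum_erase_eq_sub (Finset.mem_univ i), Finset.mul_sum,
    Finset.sum_congr rfl hoffdiag, Finset.sum_const, Finset.card_erase_of_mem (Finset.mem_univ i),
    Finset.card_univ, nsmul_eq_mul, Nat.cast_pred (Fintype.card_pos_iff.2 ⟨i⟩)]

lemma exists_abs_integral_cos_mul_inner_le (hμ : IsRotationInvariant μ)
    (hsphere : ∀ᵐ ω ∂μ, ‖ω‖ = 1) {ι : Type*} [Fintype ι] (b : OrthonormalBasis ι ℝ E) (i : ι) :
    ∃ K, 0 < K ∧ ∀ t, 0 ≤ t →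
      |∫ ω, cos (t * ⟪b i, ω⟫) ∂μ| ≤ K * (1 + t) ^ ((1 - Fintype.card ι : ℝ) / 2) := by
  have hcard : (1 : ℝ) ≤ Fintype.card ι := Nat.one_le_cast.2 (Fintype.card_pos_iff.2 ⟨i⟩)
  have hcos' : ∀ t, HasDerivAt (fun t ↦ ∫ ω, cos (t * ⟪b i, ω⟫) ∂μ)
      (-∫ ω, sin (t * ⟪b i, ω⟫) * ⟪b i, ω⟫ ∂μ) t := fun t ↦ by
    simpa [real_inner_smul_left, integral_neg] using
      hasDerivAt_integral_comp_inner_mul hsphere (C := 1) hasDerivAt_cos continuous_sin.neg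
        (by simpa using abs_sin_le_one) (continuous_const (y := 1)) 0 (b i) t
  have hsin' : ∀ t, HasDerivAt (fun t ↦ -∫ ω, sin (t * ⟪b i, ω⟫) * ⟪b i, ω⟫ ∂μ)
      (-∫ ω, cos (t * ⟪b i, ω⟫) * ⟪b i, ω⟫ ^ 2 ∂μ) t := fun t ↦ by
    simpa [real_inner_smul_left, mul_assoc, ← sq] using
      (hasDerivAt_integral_comp_inner_mul hsphere hasDerivAt_sin continuous_cos abs_cos_le_one
        (h := fun ω ↦ ⟪b i, ω⟫) (by fun_prop) 0 (b i) t).fun_neg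
  have hbound : ∀ t, |∫ ω, cos (t * ⟪b i, ω⟫) ∂μ| ≤ μ.real Set.univ := fun t ↦ by
    simpa using norm_integral_le_of_norm_le_const (μ := μ) (C := 1)
      (f := fun ω ↦ cos (t * ⟪b i, ω⟫)) (.of_forall fun ω ↦ abs_cos_le_one _)
  simpa only [neg_sub] using exists_abs_le_rpow_of_bessel (ν := Fintype.card ι - 1)
    (by linarith) (fun t _ ↦ hcos' t) (fun t _ ↦ hsin' t)
    (fun t _ ↦ by
      rw [← sub_eq_add_neg, bessel_equation_integral_cos_inner hμ hsphere b i t, neg_mul_neg])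
    (fun t _ ↦ hbound t)

theorem exists_norm_charFun_le [Nontrivial E] (hμ : IsRotationInvariant μ)
    (hsphere : ∀ᵐ ω ∂μ, ‖ω‖ = 1) :
    ∃ K, 0 < K ∧ ∀ ξ : E,
      ‖charFun μ ξ‖ ≤ K * (1 + ‖ξ‖) ^ ((1 - Module.finrank ℝ E : ℝ) / 2) := by
  let b := stdOrthonormalBasis ℝ E
  let i : Fin (Module.finrank ℝ E) := ⟨0, Module.finrank_pos⟩
  obtain ⟨K, hK, hdecay⟩ := exists_abs_integral_cos_mul_inner_le hμ hsphere b i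
  refine ⟨K, hK, fun ξ ↦ ?_⟩
  have hξ : ‖ξ‖ = ‖‖ξ‖ • b i‖ := by simp [norm_smul]
  rw [hμ.charFun_eq_integral_cos, Complex.norm_real, norm_eq_abs,
    hμ.integral_comp_inner_eq hξ cos]
  simpa [real_inner_smul_left] using hdecay ‖ξ‖ (norm_nonneg ξ)

end SphereDecay

section RadialFourier

variable {E F : Type*} [NormedAddCommGroup E] [InnerProductSpace ℝ E] [FiniteDimensional ℝ E]
  [MeasurableSpace E] [BorelSpace E] [NormedAddCommGroup F] [NormedSpace ℂ F]

lemma continuous_fourierInv_of_integrable_s17 {V : E → F} (hV : Integrable V) : Continuous (𝓕⁻ V) :=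
  VectorFourier.fourierIntegral_continuous continuous_fourierChar (L := -innerₗ E)
    (continuous_inner.neg : Continuous fun p : E × E ↦ -⟪p.1, p.2⟫) hV

lemma integral_fourierInv_mul {V φ : E → ℂ} (hV : Integrable V) (hφ : Integrable φ) :
    ∫ x, 𝓕⁻ V x * φ x = ∫ ξ, V ξ * 𝓕⁻ φ ξ := by
  have h := VectorFourier.integral_fourierIntegral_smul_eq_flip (L := -innerₗ E)
    (μ := volume) (ν := volume) continuous_fourierChar
    (continuous_inner.neg : Continuous fun p : E × E ↦ -⟪p.1, p.2⟫) hV hφ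
  have hflip : (-innerₗ E).flip = -innerₗ E := by ext x y; simp [real_inner_comm]
  rw [hflip] at h
  exact h

lemma IsFT.ae_eq_fourierInv {d : ℕ} {v V : Rd d → ℂ} (hFT : IsFT V v)
    (hv : LocallyIntegrable v) (hV : Integrable V) : v =ᵐ[volume] 𝓕⁻ V := by
  refine ae_eq_of_integral_contDiff_smul_eq hv
    (continuous_fourierInv_of_integrable_s17 hV).locallyIntegrable fun g g_smooth g_cpt ↦ ?_
  let φ : SchwartzMap (Rd d) ℂ :=
    HasCompactSupport.toSchwartzMap (f := Complex.ofRealCLM ∘ g) (g_cpt.comp_left rfl)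
      (by fun_prop)
  have hφ : ∀ f : Rd d → ℂ, ∫ x, g x • f x = ∫ x, f x * φ x := fun f ↦ by
    congr with x
    rw [Complex.real_smul, mul_comm]
    rfl
  have hpair := hFT (𝓕⁻ φ)
  rw [← SchwartzMap.fourier_coe, FourierTransform.fourier_fourierInv_eq,
    SchwartzMap.fourierInv_coe] at hpair
  rw [hφ, hφ, ← hpair, integral_fourierInv_mul hV φ.integrable]

lemma factorsThrough_norm_of_ae_eq {X : Type*} [TopologicalSpace X] [T2Space X] {v w : E → X}
    (hv : v.FactorsThrough norm) (hw : Continuous w) (hvw : v =ᵐ[volume] w) :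
    w.FactorsThrough norm := by
  intro x y hxy
  let R := (ℝ ∙ (x - y))ᗮ.reflection
  have hRx : R x = y := Submodule.reflection_sub hxy
  have hvR : v ∘ R = v := funext fun z ↦ hv (R.norm_map z)
  have hvwR := R.measurePreserving.quasiMeasurePreserving.ae_eq_comp hvw
  rw [hvR] at hvwR
  have hwR : w ∘ R =ᵐ[volume] w := hvwR.symm.trans hvw
  have h := congrFun ((Continuous.ae_eq_iff_eq volume (hw.comp R.continuous) hw).1 hwR) x
  rw [← hRx]
  exact h.symm

lemma integral_fourierInv_smul_eq_integral_charFun [CompleteSpace F] (μ : Measure E)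
    [IsFiniteMeasure μ] {V : E → F} (hV : Integrable V) (r : ℝ) :
    ∫ ω, 𝓕⁻ V (r • ω) ∂μ = ∫ ξ, charFun μ ((2 * π * r) • ξ) • V ξ := by
  simp only [fourierInv_eq']
  rw [integral_integral_swap]
  · congr with ξ
    rw [integral_smul_const, charFun_apply]
    congr with ω
    rw [real_inner_smul_right, real_inner_smul_right, real_inner_comm, mul_assoc (2 * π)]
  · exact (hV.comp_snd μ).bdd_smul
      (φ := fun p : E × E ↦ Complex.exp ((2 * π * ⟪p.2, r • p.1⟫ : ℝ) * Complex.I)) 1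
      (Continuous.aestronglyMeasurable (by fun_prop))
      (.of_forall fun p ↦ (Complex.norm_exp_ofReal_mul_I _).le)

lemma fourierInv_eq_integral_charFun_uniformSphere [Nontrivial E] [CompleteSpace F] {V : E → F}
    (hV : Integrable V) (hradial : (𝓕⁻ V).FactorsThrough norm) (x : E) :
    𝓕⁻ V x = ∫ ξ, charFun (uniformSphere E) ((2 * π * ‖x‖) • ξ) • V ξ := by
  rw [← integral_fourierInv_smul_eq_integral_charFun _ hV]
  have hconst : ∀ᵐ ω ∂uniformSphere E, 𝓕⁻ V (‖x‖ • ω) = 𝓕⁻ V x := by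
    filter_upwards [ae_uniformSphere_norm_eq_one E] with ω hω
    exact hradial (by simp [norm_smul, hω])
  simp [integral_congr_ae hconst]

lemma one_add_mul_rpow_le {ρ p t : ℝ} (hρ : 0 < ρ) (hp : p ≤ 0) (ht : 0 ≤ t) :
    (1 + ρ * t) ^ p ≤ min 1 ρ ^ p * (1 + t) ^ p := by
  rw [← mul_rpow (by positivity) (by positivity)]
  refine rpow_le_rpow_of_nonpos (by positivity) ?_ hp
  nlinarith [min_le_left 1 ρ, mul_le_mul_of_nonneg_right (min_le_right 1 ρ) ht]

variable (E F) in
theorem exists_norm_fourierInv_le_of_radial [Nontrivial E] [CompleteSpace F] {ρ : ℝ}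
    (hρ : 0 < ρ) :
    ∃ K, 0 < K ∧ ∀ V : E → F, Integrable V → (𝓕⁻ V).FactorsThrough norm →
      (∀ᵐ ξ, ‖ξ‖ < ρ → V ξ = 0) →
      ∀ x, ‖𝓕⁻ V x‖ ≤ K * (1 + ‖x‖) ^ ((1 - Module.finrank ℝ E : ℝ) / 2) * ∫ ξ, ‖V ξ‖ := by
  obtain ⟨K, hK, hdecay⟩ := exists_norm_charFun_le (isRotationInvariant_uniformSphere E)
    (ae_uniformSphere_norm_eq_one E)
  set p : ℝ := (1 - Module.finrank ℝ E : ℝ) / 2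
  have hp : p ≤ 0 := by
    have hdim : (1 : ℝ) ≤ Module.finrank ℝ E := Nat.one_le_cast.2 Module.finrank_pos
    exact div_nonpos_of_nonpos_of_nonneg (by linarith) zero_le_two
  refine ⟨K * min 1 (2 * π * ρ) ^ p, by positivity, fun V hV hradial hsupp x ↦ ?_⟩
  rw [fourierInv_eq_integral_charFun_uniformSphere hV hradial, ← integral_const_mul]
  refine norm_integral_le_of_norm_le (hV.norm.const_mul _) ?_
  filter_upwards [hsupp] with ξ hξ
  rcases lt_or_ge ‖ξ‖ ρ with hlt | hge
  · simp [hξ hlt]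
  rw [norm_smul]
  gcongr
  calc ‖charFun (uniformSphere E) ((2 * π * ‖x‖) • ξ)‖
      ≤ K * (1 + ‖(2 * π * ‖x‖) • ξ‖) ^ p := hdecay _
    _ ≤ K * (1 + 2 * π * ρ * ‖x‖) ^ p := by
      gcongr K * ?_
      refine rpow_le_rpow_of_nonpos (by positivity) ?_ hp
      rw [norm_smul, norm_of_nonneg (by positivity), mul_right_comm _ ρ]
      gcongr
    _ ≤ K * (min 1 (2 * π * ρ) ^ p * (1 + ‖x‖) ^ p) := by
      gcongr K * ?_
      exact one_add_mul_rpow_le (by positivity) hp (norm_nonneg x)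
    _ = K * min 1 (2 * π * ρ) ^ p * (1 + ‖x‖) ^ p := by ring

end RadialFourier

section SingularWeight

variable {γ ε : ℝ}

lemma integrable_inv_one_add_abs_rpow (hγ : 1 < γ) : Integrable fun x : ℝ ↦ (1 + |x| ^ γ)⁻¹ := by
  have hdom : Integrable fun x : ℝ ↦ 2 ^ (γ - 1) * (1 + ‖x‖) ^ (-γ) :=
    (integrable_one_add_norm (by simpa using hγ)).const_mul _
  refine hdom.mono' (Measurable.aestronglyMeasurable (by fun_prop)) (.of_forall fun x ↦ ?_)
  rw [norm_of_nonneg (by positivity), rpow_neg (by positivity), ← div_eq_mul_inv,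
    inv_le_comm₀ (by positivity) (by positivity), inv_div, div_le_iff₀' (by positivity)]
  simpa using NNReal.coe_le_coe.2 (NNReal.rpow_add_le_mul_rpow_add_rpow 1 ‖x‖₊ hγ.le)

lemma inv_add_abs_rpow_eq (hγ : γ ≠ 0) (hε : 0 < ε) (x : ℝ) :
    (ε + |x| ^ γ)⁻¹ = ε⁻¹ * (1 + |x / ε ^ (1 / γ)| ^ γ)⁻¹ := by
  rw [abs_div, abs_of_pos (rpow_pos_of_pos hε _), div_rpow (abs_nonneg x) (by positivity),
    ← rpow_mul hε.le, one_div_mul_cancel hγ, rpow_one, ← mul_inv, mul_add, mul_one,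
    mul_div_cancel₀ _ hε.ne']

lemma integrable_inv_add_abs_sub_rpow (hγ : 1 < γ) (hε : 0 < ε) (a : ℝ) :
    Integrable fun r : ℝ ↦ (ε + |r - a| ^ γ)⁻¹ := by
  simp only [inv_add_abs_rpow_eq (one_pos.trans hγ).ne' hε]
  exact (((integrable_inv_one_add_abs_rpow hγ).comp_div (rpow_pos_of_pos hε _).ne').comp_sub_right
    a).const_mul _

lemma integral_inv_add_abs_sub_rpow (hγ : γ ≠ 0) (hε : 0 < ε) (a : ℝ) :
    ∫ r : ℝ, (ε + |r - a| ^ γ)⁻¹ = ε ^ (1 / γ - 1) * ∫ x : ℝ, (1 + |x| ^ γ)⁻¹ := by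
  rw [integral_sub_right_eq_self (fun r ↦ (ε + |r| ^ γ)⁻¹)]
  simp only [inv_add_abs_rpow_eq hγ hε]
  rw [integral_const_mul, Measure.integral_comp_div (fun x ↦ (1 + |x| ^ γ)⁻¹),
    abs_of_pos (rpow_pos_of_pos hε _), smul_eq_mul, ← mul_assoc, rpow_sub_one hε.ne',
    div_eq_inv_mul (ε ^ (1 / γ))]

end SingularWeight

section WeightedCauchySchwarz

variable {α F : Type*} [MeasurableSpace α] {μ : Measure α} [NormedAddCommGroup F]

lemma integrable_and_integral_norm_le_of_weight {V : α → F} {w : α → ℝ}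
    (hV : AEStronglyMeasurable V μ) (hw₀ : ∀ᵐ x ∂μ, 0 < w x)
    (hVw : Integrable (fun x ↦ ‖V x‖ ^ 2 * w x) μ) (hw : Integrable (fun x ↦ (w x)⁻¹) μ) :
    Integrable V μ ∧ ∫ x, ‖V x‖ ∂μ
      ≤ (∫ x, ‖V x‖ ^ 2 * w x ∂μ) ^ (1 / 2 : ℝ) * (∫ x, (w x)⁻¹ ∂μ) ^ (1 / 2 : ℝ) := by
  have hw_meas : AEMeasurable w μ := by
    simpa only [inv_inv] using hw.aestronglyMeasurable.aemeasurable.fun_inv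
  have hf_sq : (fun x ↦ (‖V x‖ * √(w x)) ^ 2) =ᵐ[μ] fun x ↦ ‖V x‖ ^ 2 * w x := by
    filter_upwards [hw₀] with x hx
    rw [mul_pow, sq_sqrt hx.le]
  have hg_sq : (fun x ↦ (√(w x))⁻¹ ^ 2) =ᵐ[μ] fun x ↦ (w x)⁻¹ := by
    filter_upwards [hw₀] with x hx
    rw [inv_pow, sq_sqrt hx.le]
  have hfg : (fun x ↦ ‖V x‖ * √(w x) * (√(w x))⁻¹) =ᵐ[μ] fun x ↦ ‖V x‖ := by
    filter_upwards [hw₀] with x hx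
    rw [mul_inv_cancel_right₀ (sqrt_ne_zero'.2 hx)]
  have hf : MemLp (fun x ↦ ‖V x‖ * √(w x)) 2 μ :=
    (memLp_two_iff_integrable_sq (hV.norm.mul hw_meas.sqrt.aestronglyMeasurable)).2
      (hVw.congr hf_sq.symm)
  have hg : MemLp (fun x ↦ (√(w x))⁻¹) 2 μ :=
    (memLp_two_iff_integrable_sq hw_meas.sqrt.inv.aestronglyMeasurable).2 (hw.congr hg_sq.symm)
  refine ⟨(integrable_norm_iff hV).1 ((hf.integrable_mul hg).congr hfg), ?_⟩
  have hholder := integral_mul_le_Lp_mul_Lq_of_nonneg Real.HolderConjugate.two_two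
    (.of_forall fun x ↦ mul_nonneg (norm_nonneg (V x)) (sqrt_nonneg (w x)))
    (.of_forall fun x ↦ inv_nonneg.2 (sqrt_nonneg (w x)))
    (by simpa using hf) (by simpa using hg)
  simpa only [rpow_two, integral_congr_ae hfg, integral_congr_ae hf_sq,
    integral_congr_ae hg_sq] using hholder

end WeightedCauchySchwarz

section ShellEstimate

lemma norm_pow_smul_indicator_Iic_le {f : ℝ → ℝ} (hf₀ : 0 ≤ f) (n : ℕ) {R r : ℝ} (hR : 0 ≤ R)
    (hr : 0 < r) : ‖r ^ n • (Set.Iic R).indicator f r‖ ≤ R ^ n * f r := by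
  have hfr : 0 ≤ f r := hf₀ r
  rw [norm_smul, norm_pow, norm_of_nonneg hr.le]
  by_cases hrR : r ∈ Set.Iic R
  · rw [Set.indicator_of_mem hrR, norm_of_nonneg hfr]
    gcongr
    exact hrR
  · rw [Set.indicator_of_notMem hrR, norm_zero, mul_zero]
    positivity

lemma integrableOn_pow_smul_indicator_Iic {f : ℝ → ℝ} (hf : Integrable f) (hf₀ : 0 ≤ f) (n : ℕ)
    {R : ℝ} (hR : 0 ≤ R) :
    IntegrableOn (fun r ↦ r ^ n • (Set.Iic R).indicator f r) (Set.Ioi 0) := by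
  refine (hf.const_mul (R ^ n)).integrableOn.mono' ?_ ?_
  · exact ((continuous_pow n).aestronglyMeasurable.smul
      (hf.aestronglyMeasurable.indicator measurableSet_Iic)).restrict
  · exact (ae_restrict_iff' measurableSet_Ioi).2
      (.of_forall fun r hr ↦ norm_pow_smul_indicator_Iic_le hf₀ n hR hr)

lemma indicator_closedBall_fun_norm {E : Type*} [SeminormedAddCommGroup E] (f : ℝ → ℝ)
    (R : ℝ) :
    ((Metric.closedBall (0 : E) R).indicator fun ξ ↦ f ‖ξ‖)
      = fun ξ ↦ (Set.Iic R).indicator f ‖ξ‖ := by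
  ext ξ
  simp [Set.indicator]

variable {E : Type*} [NormedAddCommGroup E] [InnerProductSpace ℝ E] [FiniteDimensional ℝ E]
  [MeasurableSpace E] [BorelSpace E] [Nontrivial E]

lemma integrableOn_closedBall_fun_norm {f : ℝ → ℝ} (hf : Integrable f) (hf₀ : 0 ≤ f) {R : ℝ}
    (hR : 0 ≤ R) : IntegrableOn (fun ξ : E ↦ f ‖ξ‖) (Metric.closedBall 0 R) := by
  rw [← integrable_indicator_iff Metric.isClosed_closedBall.measurableSet,
    indicator_closedBall_fun_norm, integrable_fun_norm_addHaar]
  exact integrableOn_pow_smul_indicator_Iic hf hf₀ _ hR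

lemma setIntegral_closedBall_fun_norm_le {f : ℝ → ℝ} (hf : Integrable f) (hf₀ : 0 ≤ f) {R : ℝ}
    (hR : 0 ≤ R) :
    ∫ ξ in Metric.closedBall (0 : E) R, f ‖ξ‖ ≤ Module.finrank ℝ E
      * (volume.real (Metric.ball (0 : E) 1) * (R ^ (Module.finrank ℝ E - 1) * ∫ r, f r)) := by
  set n := Module.finrank ℝ E - 1
  rw [← integral_indicator Metric.isClosed_closedBall.measurableSet, indicator_closedBall_fun_norm,
    integral_fun_norm_addHaar, nsmul_eq_mul, smul_eq_mul]
  gcongr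
  calc ∫ r in Set.Ioi 0, r ^ n • (Set.Iic R).indicator f r ≤ ∫ r in Set.Ioi 0, R ^ n * f r :=
        setIntegral_mono_on (integrableOn_pow_smul_indicator_Iic hf hf₀ n hR)
          (hf.const_mul _).integrableOn measurableSet_Ioi
          fun r hr ↦ (le_abs_self _).trans (norm_pow_smul_indicator_Iic_le hf₀ n hR hr)
    _ ≤ ∫ r, R ^ n * f r :=
        setIntegral_le_integral (hf.const_mul _)
          (.of_forall fun r ↦ mul_nonneg (by positivity) (hf₀ r))
    _ = R ^ n * ∫ r, f r := integral_const_mul _ _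

variable (E) {γ c a ρ : ℝ}

lemma exists_setIntegral_shell_inv_le (hγ : 1 < γ) (haρ : 0 ≤ a + ρ) :
    ∃ A, 0 < A ∧ ∀ ε, 0 < ε →
      IntegrableOn (fun ξ : E ↦ (ε + |‖ξ‖ - a| ^ γ)⁻¹) {ξ | |‖ξ‖ - a| ≤ ρ} ∧
      ∫ ξ : E in {ξ | |‖ξ‖ - a| ≤ ρ}, (ε + |‖ξ‖ - a| ^ γ)⁻¹ ≤ A * ε ^ (1 / γ - 1) := by
  set A := Module.finrank ℝ E * (volume.real (Metric.ball (0 : E) 1)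
    * ((a + ρ) ^ (Module.finrank ℝ E - 1) * ∫ x : ℝ, (1 + |x| ^ γ)⁻¹))
  have hA : 0 ≤ A := by positivity
  refine ⟨A + 1, add_pos_of_nonneg_of_pos hA one_pos, fun ε hε ↦ ?_⟩
  set f : ℝ → ℝ := fun r ↦ (ε + |r - a| ^ γ)⁻¹
  set S : Set E := {ξ | |‖ξ‖ - a| ≤ ρ}
  have hSball : S ⊆ Metric.closedBall 0 (a + ρ) := fun ξ (hξ : |‖ξ‖ - a| ≤ ρ) ↦ by
    simpa using sub_le_iff_le_add'.1 (abs_le.1 hξ).2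
  have hf : Integrable f := integrable_inv_add_abs_sub_rpow hγ hε a
  have hf₀ : 0 ≤ f := fun r ↦ by positivity
  have hf_ball : IntegrableOn (fun ξ : E ↦ f ‖ξ‖) (Metric.closedBall 0 (a + ρ)) :=
    integrableOn_closedBall_fun_norm hf hf₀ haρ
  refine ⟨hf_ball.mono_set hSball, ?_⟩
  calc ∫ ξ in S, f ‖ξ‖ ≤ ∫ ξ in Metric.closedBall (0 : E) (a + ρ), f ‖ξ‖ :=
        setIntegral_mono_set hf_ball (.of_forall fun ξ ↦ hf₀ _) hSball.eventuallyLE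
    _ ≤ A * ε ^ (1 / γ - 1) := by
        refine (setIntegral_closedBall_fun_norm_le hf hf₀ haρ).trans_eq ?_
        rw [integral_inv_add_abs_sub_rpow (one_pos.trans hγ).ne' hε a]
        ring
    _ ≤ (A + 1) * ε ^ (1 / γ - 1) := by
        gcongr
        exact le_add_of_nonneg_right zero_le_one

lemma exists_setIntegral_shell_inv_weight_le (hγ : 1 < γ) (hc : 0 < c) (haρ : 0 ≤ a + ρ) :
    ∃ A, 0 < A ∧ ∀ ε, 0 < ε → ∀ w : ℝ → ℝ, Measurable w →
      (∀ r, |r - a| ≤ ρ → c * (ε + |r - a| ^ γ) ≤ w r) →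
      IntegrableOn (fun ξ : E ↦ (w ‖ξ‖)⁻¹) {ξ | |‖ξ‖ - a| ≤ ρ} ∧
      ∫ ξ : E in {ξ | |‖ξ‖ - a| ≤ ρ}, (w ‖ξ‖)⁻¹ ≤ A * ε ^ (1 / γ - 1) := by
  obtain ⟨A, hA, hshell⟩ := exists_setIntegral_shell_inv_le E hγ haρ
  refine ⟨c⁻¹ * A, by positivity, fun ε hε w hw_meas hw ↦ ?_⟩
  obtain ⟨hint, hle⟩ := hshell ε hε
  set S : Set E := {ξ | |‖ξ‖ - a| ≤ ρ}
  have hS : MeasurableSet S := measurableSet_le (by fun_prop) (by fun_prop)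
  have hw_inv : ∀ ξ ∈ S, ‖(w ‖ξ‖)⁻¹‖ ≤ c⁻¹ * (ε + |‖ξ‖ - a| ^ γ)⁻¹ := fun ξ hξ ↦ by
    have hpos : 0 < c * (ε + |‖ξ‖ - a| ^ γ) := by positivity
    rw [norm_of_nonneg (inv_nonneg.2 (hpos.le.trans (hw _ hξ))), ← mul_inv]
    exact inv_anti₀ hpos (hw _ hξ)
  have hw_int : IntegrableOn (fun ξ : E ↦ (w ‖ξ‖)⁻¹) S :=
    (hint.const_mul c⁻¹).mono' (Measurable.aestronglyMeasurable (by fun_prop))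
      (ae_restrict_of_forall_mem hS hw_inv)
  refine ⟨hw_int, ?_⟩
  calc ∫ ξ in S, (w ‖ξ‖)⁻¹ ≤ ∫ ξ in S, c⁻¹ * (ε + |‖ξ‖ - a| ^ γ)⁻¹ :=
        setIntegral_mono_on hw_int (hint.const_mul c⁻¹) hS
          fun ξ hξ ↦ (le_norm_self _).trans (hw_inv ξ hξ)
    _ = c⁻¹ * ∫ ξ in S, (ε + |‖ξ‖ - a| ^ γ)⁻¹ := integral_const_mul _ _
    _ ≤ c⁻¹ * A * ε ^ (1 / γ - 1) := by
        rw [mul_assoc]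
        gcongr

lemma exists_integral_norm_le_of_shell (F : Type*) [NormedAddCommGroup F] (hγ : 1 < γ)
    (hc : 0 < c) (haρ : 0 ≤ a + ρ) :
    ∃ A, 0 < A ∧ ∀ ε, 0 < ε → ∀ w : ℝ → ℝ, Measurable w →
      (∀ r, |r - a| ≤ ρ → c * (ε + |r - a| ^ γ) ≤ w r) →
      ∀ V : E → F, AEStronglyMeasurable V → (∀ᵐ ξ, ρ < |‖ξ‖ - a| → V ξ = 0) →
      Integrable (fun ξ ↦ ‖V ξ‖ ^ 2 * w ‖ξ‖) →
      Integrable V ∧ ∫ ξ, ‖V ξ‖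
        ≤ A * ε ^ ((1 / γ - 1) / 2) * (∫ ξ, ‖V ξ‖ ^ 2 * w ‖ξ‖) ^ (1 / 2 : ℝ) := by
  obtain ⟨A, hA, hweight⟩ := exists_setIntegral_shell_inv_weight_le E hγ hc haρ
  refine ⟨A ^ (1 / 2 : ℝ), by positivity, fun ε hε w hw_meas hw V hV hsupp hVw ↦ ?_⟩
  obtain ⟨hw_int, hw_le⟩ := hweight ε hε w hw_meas hw
  set S : Set E := {ξ | |‖ξ‖ - a| ≤ ρ}
  have hS : MeasurableSet S := measurableSet_le (by fun_prop) (by fun_prop)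
  have hw₀ : ∀ ξ ∈ S, 0 < w ‖ξ‖ := fun ξ hξ ↦ lt_of_lt_of_le (by positivity) (hw _ hξ)
  have hsupp' : ∀ᵐ ξ, ξ ∉ S → V ξ = 0 := by simpa [S] using hsupp
  have hnorm : ∫ ξ in S, ‖V ξ‖ = ∫ ξ, ‖V ξ‖ :=
    setIntegral_eq_integral_of_ae_compl_eq_zero (hsupp'.mono fun ξ h hξ ↦ by simp [h hξ])
  have hform : ∫ ξ in S, ‖V ξ‖ ^ 2 * w ‖ξ‖ = ∫ ξ, ‖V ξ‖ ^ 2 * w ‖ξ‖ :=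
    setIntegral_eq_integral_of_ae_compl_eq_zero (hsupp'.mono fun ξ h hξ ↦ by simp [h hξ])
  have hform₀ : 0 ≤ ∫ ξ, ‖V ξ‖ ^ 2 * w ‖ξ‖ := hform ▸ setIntegral_nonneg hS fun ξ hξ ↦
    mul_nonneg (sq_nonneg _) (hw₀ ξ hξ).le
  have hw_inv₀ : 0 ≤ ∫ ξ in S, (w ‖ξ‖)⁻¹ :=
    setIntegral_nonneg hS fun ξ hξ ↦ (inv_pos.2 (hw₀ ξ hξ)).le
  obtain ⟨hV_int, hV_le⟩ := integrable_and_integral_norm_le_of_weight hV.restrict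
    (ae_restrict_of_forall_mem hS hw₀) hVw.integrableOn hw_int
  rw [hnorm, hform] at hV_le
  refine ⟨IntegrableOn.integrable_of_ae_notMem_eq_zero hV_int hsupp', hV_le.trans ?_⟩
  calc (∫ ξ, ‖V ξ‖ ^ 2 * w ‖ξ‖) ^ (1 / 2 : ℝ) * (∫ ξ in S, (w ‖ξ‖)⁻¹) ^ (1 / 2 : ℝ)
      ≤ (∫ ξ, ‖V ξ‖ ^ 2 * w ‖ξ‖) ^ (1 / 2 : ℝ) * (A * ε ^ (1 / γ - 1)) ^ (1 / 2 : ℝ) := by gcongr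
    _ = A ^ (1 / 2 : ℝ) * ε ^ ((1 / γ - 1) / 2) * (∫ ξ, ‖V ξ‖ ^ 2 * w ‖ξ‖) ^ (1 / 2 : ℝ) := by
        rw [mul_rpow hA.le (by positivity), ← rpow_mul hε.le, mul_one_div, mul_comm]

end ShellEstimate

theorem stmt17_general (d : ℕ) (hd : 0 < d) (γ c : ℝ) (hγ : 1 < γ) (hc : 0 < c) :
    ∃ C' : ℝ, 0 < C' ∧
      ∀ ε, 0 < ε → ∀ w : ℝ → ℝ, Measurable w →
        (∀ r, |r - 1| ≤ 1 / 2 → c * (ε + |r - 1| ^ γ) ≤ w r) →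
        ∀ v V : Rd d → ℂ,
          LocallyIntegrable v → AEStronglyMeasurable V → IsFT V v → Radial v →
          (∀ᵐ ξ : Rd d, ¬ (1 / 2 ≤ ‖ξ‖ ∧ ‖ξ‖ ≤ 3 / 2) → V ξ = 0) →
          Integrable (fun ξ : Rd d ↦ ‖V ξ‖ ^ 2 * w ‖ξ‖) →
          ∃ vc : Rd d → ℂ, Continuous vc ∧ v =ᵐ[volume] vc ∧
            ∀ x : Rd d, ‖vc x‖ ≤ C' * (1 + ‖x‖) ^ ((1 - (d : ℝ)) / 2)
              * ε ^ ((1 / γ - 1) / 2) * (∫ ξ : Rd d, ‖V ξ‖ ^ 2 * w ‖ξ‖) ^ (1 / 2 : ℝ) := by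
  have : Nonempty (Fin d) := ⟨⟨0, hd⟩⟩
  obtain ⟨K, hK, hdecay⟩ := exists_norm_fourierInv_le_of_radial (Rd d) ℂ (ρ := 1 / 2) (by norm_num)
  obtain ⟨A, hA, hL1⟩ := exists_integral_norm_le_of_shell (Rd d) ℂ hγ hc (a := 1) (ρ := 1 / 2)
    (by norm_num)
  simp only [finrank_euclideanSpace_fin] at hdecay
  refine ⟨K * A, by positivity, fun ε hε w hw_meas hw v V hv hV hFT hradial hsupp hVw ↦ ?_⟩
  obtain ⟨hV_int, hV_le⟩ := hL1 ε hε w hw_meas hw V hV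
    (hsupp.mono fun ξ h hξ ↦ h fun ⟨h₁, h₂⟩ ↦ hξ.not_ge (abs_le.2 ⟨by linarith, by linarith⟩)) hVw
  have hcont : Continuous (𝓕⁻ V) := continuous_fourierInv_of_integrable_s17 hV_int
  have hae : v =ᵐ[volume] 𝓕⁻ V := hFT.ae_eq_fourierInv hv hV_int
  have hradial' : (𝓕⁻ V).FactorsThrough norm :=
    factorsThrough_norm_of_ae_eq (fun x y h ↦ hradial x y h) hcont hae
  refine ⟨𝓕⁻ V, hcont, hae, fun x ↦ ?_⟩
  calc ‖𝓕⁻ V x‖ ≤ K * (1 + ‖x‖) ^ ((1 - (d : ℝ)) / 2) * ∫ ξ, ‖V ξ‖ :=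
        hdecay V hV_int hradial' (hsupp.mono fun ξ h hξ ↦ h fun h' ↦ hξ.not_ge h'.1) x
    _ ≤ K * (1 + ‖x‖) ^ ((1 - (d : ℝ)) / 2)
          * (A * ε ^ ((1 / γ - 1) / 2) * (∫ ξ, ‖V ξ‖ ^ 2 * w ‖ξ‖) ^ (1 / 2 : ℝ)) := by gcongr
    _ = _ := by ring

/-- radial pointwise decay estimate from §2.1: a radial `L²` function
whose Fourier transform is supported in the shell `1/2 ≤ |ξ| ≤ 3/2` has a continuous
representative with `|v(x)| ≲ (1+|x|)^{(1-d)/2} ε^{(1/γ-1)/2} q_ε(v)^{1/2}`. -/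
theorem stmt17 (d : ℕ) (hd : 2 ≤ d)
    (s γ c C : ℝ)
    (hs : (d : ℝ) / ((d : ℝ) + 1) < s) (hγ : 1 < γ)
    (hc : 0 < c) (hcC : c ≤ C) :
    ∃ C' : ℝ, 0 < C' ∧
      ∀ g : ℝ → ℝ → ℝ, IsAdmissible s γ c C g →
        ∀ ε ∈ Set.Ioo (0:ℝ) 1,
          ∀ v V : Rd d → ℂ,
            MemLp v 2 volume → MemLp V 2 volume → IsFT V v → Radial v →
            (∀ᵐ ξ : Rd d, ¬ (1/2 ≤ ‖ξ‖ ∧ ‖ξ‖ ≤ 3/2) → V ξ = 0) →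
            Integrable (fun ξ : Rd d => ‖V ξ‖ ^ 2 * g ε ‖ξ‖) volume →
            ∃ vc : Rd d → ℂ, Continuous vc ∧ v =ᵐ[volume] vc ∧
              ∀ x : Rd d, ‖vc x‖ ≤ C' * (1 + ‖x‖) ^ ((1 - (d : ℝ)) / 2)
                  * ε ^ ((1/γ - 1) / 2)
                  * (∫ ξ : Rd d, ‖V ξ‖ ^ 2 * g ε ‖ξ‖) ^ ((1 : ℝ)/2) := by
  obtain ⟨C', hC', hbound⟩ := stmt17_general d (by lia) γ c hγ hc
  exact ⟨C', hC', fun g hg ε hε v V hv hV ↦ hbound ε hε.1 (g ε) (hg.1 ε hε)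
    (fun r hr ↦ (hg.2.2.2 ε hε r hr).1) v V (hv.locallyIntegrable one_le_two) hV.1⟩
end
end
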